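/- arXiv:2005.10920 — 7 statements merged into one kernel-verified Lean document; each statement's English description precedes it below -/
import Mathlib

section
/- Let k be a field, let G be a finite subgroup of PGL_2(k), and let a, b ∈ ℙ¹(k) be two points which do not lie in the same orbit under the action of G on ℙ¹(k). Let h ∈ k(x) be the rational function h(x) = ∏_{σ∈G} (x−σ(a))/(x−σ(b)), with the convention that the factor x−c equals the constant 1 whenever c = ∞. Then the field extension k(x)/k(h) is a Galois extension of degree #G whose Galois group is isomorphic to G. -/
open Polynomial OnePoint

/-- The projective general linear group `PGL₂(k)`, acting on `ℙ¹(k) = k ∪ {∞}`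
by homographies. -/
abbrev PGL2 (k : Type*) [Field k] : Type _ :=
  Matrix.GeneralLinearGroup (Fin 2) k ⧸ Subgroup.center (Matrix.GeneralLinearGroup (Fin 2) k)

open Classical in
/-- Möbius transformation of `ℙ¹(k) = k ∪ {∞}` associated to a 2×2 matrix
`M = !![a, b; c, d]`, sending `z` to `(a * z + b) / (c * z + d)`. -/
noncomputable def Matrix.mobius {k : Type*} [Field k] (M : Matrix (Fin 2) (Fin 2) k) :
    OnePoint k → OnePoint k := fun z =>
  Option.elim z
    (if M 1 0 = 0 then ∞ else ((M 0 0 / M 1 0 : k) : OnePoint k))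
    (fun w => if M 1 0 * w + M 1 1 = 0 then ∞
      else (((M 0 0 * w + M 0 1) / (M 1 0 * w + M 1 1) : k) : OnePoint k))

/-- The action of an element of `PGL₂(k)` on `ℙ¹(k)`, via a representative matrix
(the Möbius transformation does not depend on the chosen representative). -/
noncomputable def PGL2.act {k : Type*} [Field k] (g : PGL2 k) : OnePoint k → OnePoint k :=
  Matrix.mobius ((Quotient.out g : Matrix.GeneralLinearGroup (Fin 2) k) : Matrix (Fin 2) (Fin 2) k)

/-- `a` and `b` lie in the same orbit under the subgroup `G` of `PGL₂(k)`. -/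
def PGL2.SameOrbit {k : Type*} [Field k] (G : Subgroup (PGL2 k)) (a b : OnePoint k) : Prop :=
  ∃ σ ∈ G, PGL2.act σ a = b

/-- The factor `x - c` in `k(x)`, with the convention that it is the constant `1`
when `c = ∞`. -/
noncomputable def OnePoint.ratFactor {k : Type*} [Field k] (c : OnePoint k) : RatFunc k :=
  Option.elim c 1 (fun c₀ => RatFunc.X - RatFunc.C c₀)

namespace PGLaux

open RatFunc

variable {k : Type*} [Field k]

local notation "GL2" => Matrix.GeneralLinearGroup (Fin 2)

theorem lin_eq_zero {p q : k} (h : RatFunc.C p * RatFunc.X + RatFunc.C q = (0 : RatFunc k)) :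
    p = 0 ∧ q = 0 := by
  have h1 : algebraMap k[X] (RatFunc k) (Polynomial.C p * Polynomial.X + Polynomial.C q) =
      algebraMap k[X] (RatFunc k) 0 := by
    simpa using h
  have h2 := RatFunc.algebraMap_injective k h1
  constructor
  · simpa using congrArg (fun r => Polynomial.coeff r 1) h2
  · simpa using congrArg (fun r => Polynomial.coeff r 0) h2

theorem quad_eq_zero {o p q : k}
    (h : RatFunc.C o * RatFunc.X ^ 2 + RatFunc.C p * RatFunc.X + RatFunc.C q = (0 : RatFunc k)) :
    o = 0 ∧ p = 0 ∧ q = 0 := by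
  have h1 : algebraMap k[X] (RatFunc k) (Polynomial.C o * Polynomial.X ^ 2 +
      Polynomial.C p * Polynomial.X + Polynomial.C q) =
      algebraMap k[X] (RatFunc k) 0 := by
    simpa using h
  have h2 := RatFunc.algebraMap_injective k h1
  refine ⟨?_, ?_, ?_⟩
  · simpa [Polynomial.coeff_X, Polynomial.coeff_C] using
      congrArg (fun r => Polynomial.coeff r 2) h2
  · simpa [Polynomial.coeff_X_pow, Polynomial.coeff_C] using
      congrArg (fun r => Polynomial.coeff r 1) h2
  · simpa [Polynomial.coeff_X_pow] using congrArg (fun r => Polynomial.coeff r 0) h2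

theorem det_ne (g : GL2 k) : g 0 0 * g 1 1 - g 0 1 * g 1 0 ≠ 0 := by
  have := g.det_ne_zero
  rwa [Matrix.det_fin_two] at this

/-- denominator of the inverse homography -/
noncomputable def den (g : GL2 k) : RatFunc k := RatFunc.C (g 0 0) - RatFunc.C (g 1 0) * RatFunc.X
/-- numerator of the inverse homography -/
noncomputable def nm (g : GL2 k) : RatFunc k := RatFunc.C (g 1 1) * RatFunc.X - RatFunc.C (g 0 1)

theorem den_ne (g : GL2 k) : den g ≠ 0 := by
  intro h
  obtain ⟨h1, h2⟩ := lin_eq_zero (k := k) (p := - g 1 0) (q := g 0 0) (by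
    rw [← h, den]; simp; ring)
  apply det_ne g
  rw [h2, neg_eq_zero.mp h1]; ring

theorem y_ne_C (g : GL2 k) : ¬ ∃ c, nm g / den g = RatFunc.C c := by
  rintro ⟨e, he⟩
  rw [div_eq_iff (den_ne g), nm, den] at he
  obtain ⟨h1, h2⟩ := lin_eq_zero (k := k) (p := g 1 1 + e * g 1 0) (q := - g 0 1 - e * g 0 0) (by
    simp only [map_add, map_mul, map_sub, map_neg]
    linear_combination he)
  apply det_ne g
  linear_combination g 0 0 * h1 + g 1 0 * h2

/-- The substitution homomorphism. -/
noncomputable def sub (g : GL2 k) : RatFunc k →ₐ[k] RatFunc k :=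
  (IntermediateField.val _).comp
    (RatFunc.algEquivOfTranscendental (nm g / den g)
      (RatFunc.transcendental_of_ne_C _ (y_ne_C g))).toAlgHom

theorem sub_X (g : GL2 k) : sub g RatFunc.X = nm g / den g := by
  simp [sub]

theorem sub_C (g : GL2 k) (c : k) : sub g (RatFunc.C c) = RatFunc.C c :=
  (sub g).commutes c

theorem hom_ext {φ ψ : RatFunc k →ₐ[k] RatFunc k} (h : φ RatFunc.X = ψ RatFunc.X) : φ = ψ := by
  apply IsLocalization.algHom_ext (nonZeroDivisors k[X])
  apply Polynomial.algHom_ext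
  change φ (algebraMap k[X] (RatFunc k) Polynomial.X) = ψ (algebraMap k[X] (RatFunc k) Polynomial.X)
  rw [RatFunc.algebraMap_X]
  exact h

theorem sub_nm (g h : GL2 k) : sub g (nm h) = nm (g * h) / den g := by
  have := den_ne g
  simp only [nm, map_sub, map_mul, sub_C, sub_X]
  field_simp
  simp only [nm, den, Units.val_mul, Matrix.mul_apply, Fin.sum_univ_two, map_add, map_mul]
  ring

theorem sub_den (g h : GL2 k) : sub g (den h) = den (g * h) / den g := by
  have := den_ne g
  simp only [den, map_sub, map_mul, sub_C, sub_X]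
  rw [← den]
  field_simp
  simp only [nm, den, Units.val_mul, Matrix.mul_apply, Fin.sum_univ_two, map_add, map_mul]
  ring

/-- The substitution action as a monoid hom. -/
noncomputable def subHom : GL2 k →* (RatFunc k →ₐ[k] RatFunc k) where
  toFun := sub
  map_one' := hom_ext (by rw [sub_X]; simp [nm, den])
  map_mul' g h := hom_ext (by
    have := den_ne g
    have := den_ne (g * h)
    rw [AlgHom.mul_apply, sub_X, sub_X, map_div₀, sub_nm, sub_den]
    field_simp)

/-- The action of `GL₂` by automorphisms. -/
noncomputable def rho0 : GL2 k →* (RatFunc k ≃ₐ[k] RatFunc k) :=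
  (AlgEquiv.algHomUnitsEquiv k (RatFunc k)).toMonoidHom.comp (MonoidHom.toHomUnits subHom)

theorem rho0_apply (g : GL2 k) (f : RatFunc k) : rho0 g f = sub g f := rfl

theorem mem_center_iff (g : GL2 k) : g ∈ Subgroup.center (GL2 k) ↔
    g 0 1 = 0 ∧ g 1 0 = 0 ∧ g 0 0 = g 1 1 := by
  rw [Matrix.GeneralLinearGroup.mem_center_iff_val_mem_range_scalar]
  constructor
  · rintro ⟨a, ha⟩
    rw [← ha]; simp
  · rintro ⟨h1, h2, h3⟩
    refine ⟨g 0 0, ?_⟩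
    ext i j
    fin_cases i <;> fin_cases j <;> simp [h1, h2, h3]

theorem rho0_eq_one_iff (g : GL2 k) : rho0 g = 1 ↔ g ∈ Subgroup.center (GL2 k) := by
  have hd := den_ne g
  rw [mem_center_iff]
  constructor
  · intro h
    have h1 : sub g RatFunc.X = RatFunc.X := by
      rw [← rho0_apply, h]; rfl
    rw [sub_X, div_eq_iff hd, nm, den] at h1
    obtain ⟨h2, h3, h4⟩ := quad_eq_zero (k := k) (o := g 1 0) (p := g 1 1 - g 0 0)
      (q := - g 0 1) (by
        simp only [map_sub, map_neg]
        linear_combination h1)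
    exact ⟨by simpa using h4, h2, (sub_eq_zero.mp h3).symm⟩
  · rintro ⟨h1, h2, h3⟩
    have : sub g = AlgHom.id k _ := hom_ext (by
      rw [sub_X, div_eq_iff hd, nm, den, h1, h2, h3]
      simp [mul_comm])
    ext f
    rw [rho0_apply, this]; rfl

/-- The action of `PGL₂` by automorphisms. -/
noncomputable def rho : PGL2 k →* (RatFunc k ≃ₐ[k] RatFunc k) :=
  QuotientGroup.lift _ rho0 (fun g hg => (rho0_eq_one_iff g).mpr hg)

theorem rho_mk (g : GL2 k) : rho (QuotientGroup.mk g : PGL2 k) = rho0 g := rfl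

theorem rho_injective : Function.Injective (rho : PGL2 k →* _) := by
  rw [injective_iff_map_eq_one]
  intro s
  induction s using QuotientGroup.induction_on with
  | H g =>
    intro h
    rw [rho_mk, rho0_eq_one_iff] at h
    exact (QuotientGroup.eq_one_iff g).mpr h

open Classical in
theorem mobius_eq (g : GL2 k) (z : OnePoint k) : Matrix.mobius (g : Matrix _ _ k) z = g • z := by
  cases z with
  | infty => rw [OnePoint.smul_infty_eq_ite]; rfl
  | coe w => rw [OnePoint.smul_some_eq_ite]; rfl

open Classical in
theorem center_smul (g : GL2 k) (hg : g ∈ Subgroup.center (GL2 k)) (z : OnePoint k) :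
    g • z = z := by
  have hd := det_ne g
  obtain ⟨h1, h2, h3⟩ := (mem_center_iff g).mp hg
  have h4 : g 1 1 ≠ 0 := by
    intro h; apply hd; rw [h, h1]; ring
  cases z with
  | infty => rw [OnePoint.smul_infty_eq_ite]; simp [h2]
  | coe w =>
    rw [OnePoint.smul_some_eq_ite]
    simp only [h1, h2, h3, zero_mul, zero_add, add_zero, h4, if_false]
    rw [mul_div_cancel_left₀ _ h4]

open Classical in
theorem act_mk (g : GL2 k) (z : OnePoint k) : PGL2.act (QuotientGroup.mk g : PGL2 k) z = g • z := by
  obtain ⟨c, hc⟩ := QuotientGroup.mk_out_eq_mul (Subgroup.center (GL2 k)) g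
  unfold PGL2.act
  rw [mobius_eq]
  have : (Quotient.out (QuotientGroup.mk g : PGL2 k) : GL2 k) = g * c := hc
  rw [this, mul_smul, center_smul _ c.2]

theorem act_mul (s t : PGL2 k) (z : OnePoint k) : PGL2.act (s * t) z = PGL2.act s (PGL2.act t z) := by
  classical
  induction s using QuotientGroup.induction_on with
  | H g =>
  induction t using QuotientGroup.induction_on with
  | H h =>
    rw [← QuotientGroup.mk_mul, act_mk, act_mk, act_mk, mul_smul]

theorem act_one (z : OnePoint k) : PGL2.act (1 : PGL2 k) z = z := by
  classical
  rw [← QuotientGroup.mk_one, act_mk, one_smul]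

/-- polynomial version of `ratFactor` -/
noncomputable def polFactor (c : OnePoint k) : k[X] :=
  Option.elim c 1 (fun c₀ => Polynomial.X - Polynomial.C c₀)

theorem polFactor_infty : polFactor (∞ : OnePoint k) = 1 := rfl
theorem polFactor_coe (c : k) : polFactor (c : OnePoint k) = Polynomial.X - Polynomial.C c := rfl
theorem ratFactor_infty : OnePoint.ratFactor (∞ : OnePoint k) = 1 := rfl
theorem ratFactor_coe (c : k) :
    OnePoint.ratFactor (c : OnePoint k) = RatFunc.X - RatFunc.C c := rfl

theorem map_polFactor (c : OnePoint k) :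
    algebraMap k[X] (RatFunc k) (polFactor c) = OnePoint.ratFactor c := by
  cases c with
  | infty => simp [polFactor_infty, ratFactor_infty]
  | coe c => simp [polFactor_coe, ratFactor_coe]

theorem monic_polFactor (c : OnePoint k) : (polFactor c).Monic := by
  cases c with
  | infty => simp [polFactor_infty]
  | coe c => exact Polynomial.monic_X_sub_C c

theorem natDegree_polFactor_le (c : OnePoint k) : (polFactor c).natDegree ≤ 1 := by
  cases c with
  | infty => simp [polFactor_infty]
  | coe c => simp [polFactor_coe]

theorem natDegree_polFactor {c : OnePoint k} (hc : c ≠ ∞) : (polFactor c).natDegree = 1 := by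
  cases c with
  | infty => exact absurd rfl hc
  | coe c => simp [polFactor_coe]

theorem coprime_polFactor {c d : OnePoint k} (h : c ≠ d) :
    IsCoprime (polFactor c) (polFactor d) := by
  cases c with
  | infty => exact isCoprime_one_left
  | coe c =>
    cases d with
    | infty => exact isCoprime_one_right
    | coe d =>
      rw [polFactor_coe, polFactor_coe]
      exact Polynomial.isCoprime_X_sub_C_of_isUnit_sub
        (isUnit_iff_ne_zero.mpr (sub_ne_zero.mpr (fun e => h (by rw [e]))))

theorem ratFactor_ne (c : OnePoint k) : OnePoint.ratFactor c ≠ 0 := by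
  rw [← map_polFactor]
  exact RatFunc.algebraMap_ne_zero (monic_polFactor c).ne_zero

theorem den_eq (g : GL2 k) : ∃ u : k, u ≠ 0 ∧
    den g = RatFunc.C u * OnePoint.ratFactor (PGL2.act (QuotientGroup.mk g : PGL2 k) ∞) := by
  classical
  have hd := det_ne g
  rw [act_mk, OnePoint.smul_infty_eq_ite]
  split_ifs with h
  · refine ⟨g 0 0, ?_, ?_⟩
    · intro h'; apply hd; rw [h, h']; ring
    · rw [ratFactor_infty, den, h]; simp
  · refine ⟨- g 1 0, neg_ne_zero.mpr h, ?_⟩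
    have h' : RatFunc.C (g 1 0) ≠ 0 := by simpa using h
    rw [ratFactor_coe, den, map_neg, map_div₀]
    field_simp
    ring

theorem sub_factor (g : GL2 k) (c : OnePoint k) : ∃ u : k, u ≠ 0 ∧
    sub g (OnePoint.ratFactor c) * den g = RatFunc.C u *
      OnePoint.ratFactor (PGL2.act (QuotientGroup.mk g : PGL2 k) c) := by
  classical
  cases c with
  | infty =>
    rw [ratFactor_infty, map_one, one_mul]
    exact den_eq g
  | coe c =>
    have hd := det_ne g
    rw [act_mk, OnePoint.smul_some_eq_ite, ratFactor_coe, map_sub, sub_C, sub_X, sub_mul,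
      div_mul_cancel₀ _ (den_ne g)]
    split_ifs with h
    · refine ⟨- (g 0 1 + c * g 0 0), ?_, ?_⟩
      · intro h'
        by_cases h0 : g 1 0 = 0
        · apply hd
          have : g 1 1 = 0 := by simpa [h0] using h
          rw [this, h0]; ring
        · apply hd
          have e : g 1 1 = - (g 1 0 * c) := by linear_combination h
          rw [e]
          linear_combination g 1 0 * h'
      · have h2 : RatFunc.C (g 1 0) * RatFunc.C c + RatFunc.C (g 1 1) = 0 := by
          rw [← map_mul, ← map_add, h, map_zero]
        rw [ratFactor_infty, nm, den]
        simp only [map_neg, map_add, map_mul]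
        linear_combination RatFunc.X * h2
    · refine ⟨g 1 0 * c + g 1 1, h, ?_⟩
      rw [ratFactor_coe, mul_sub, ← map_mul, mul_div_cancel₀ _ h, nm, den]
      simp only [map_add, map_mul]
      ring

theorem rho_quot (s : PGL2 k) (a b : OnePoint k) : ∃ u : k, u ≠ 0 ∧
    rho s (OnePoint.ratFactor a / OnePoint.ratFactor b) = RatFunc.C u *
      (OnePoint.ratFactor (PGL2.act s a) / OnePoint.ratFactor (PGL2.act s b)) := by
  induction s using QuotientGroup.induction_on with
  | H g =>
    obtain ⟨u, hu, hu'⟩ := sub_factor g a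
    obtain ⟨v, hv, hv'⟩ := sub_factor g b
    refine ⟨u / v, div_ne_zero hu hv, ?_⟩
    have h1 := den_ne g
    have h2 := ratFactor_ne (PGL2.act (QuotientGroup.mk g : PGL2 k) b)
    have h3 : RatFunc.C v ≠ 0 := by simpa using hv
    rw [rho_mk, map_div₀, rho0_apply, rho0_apply, eq_div_of_mul_eq h1 hu', eq_div_of_mul_eq h1 hv',
      map_div₀]
    field_simp

end PGLaux

open PGLaux in
/-- **Galois covers of `ℙ¹` from finite subgroups of `PGL₂`.**
Let `G` be a finite subgroup of `PGL₂(k)` and let `a, b ∈ ℙ¹(k)` be points not lying in the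
same `G`-orbit.  Let `h = ∏_{σ ∈ G} (x - σ(a)) / (x - σ(b))` (with the convention that a
factor `x - c` is `1` when `c = ∞`).  Then `k(x)/k(h)` is a Galois extension of degree `#G`
whose Galois group is isomorphic to `G`. -/
theorem galois_cover_of_PGL2_subgroup
    (k : Type*) [Field k] (G : Subgroup (PGL2 k)) [Fintype G] (a b : OnePoint k)
    (hab : ¬ PGL2.SameOrbit G a b)
    (h : RatFunc k)
    (hdef : h = ∏ σ : G, (OnePoint.ratFactor (PGL2.act (σ : PGL2 k) a) /
      OnePoint.ratFactor (PGL2.act (σ : PGL2 k) b)))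
    (F : IntermediateField k (RatFunc k)) (hF : F = IntermediateField.adjoin k {h}) :
    IsGalois F (RatFunc k) ∧ Module.finrank F (RatFunc k) = Nat.card G ∧
      Nonempty ((RatFunc k ≃ₐ[F] RatFunc k) ≃* G) := by
  classical
  have hne : ∀ s t : G, PGL2.act (s : PGL2 k) a ≠ PGL2.act (t : PGL2 k) b := by
    intro s t e
    apply hab
    refine ⟨(t⁻¹ * s : G), (t⁻¹ * s : G).2, ?_⟩
    rw [Subgroup.coe_mul, act_mul, e, ← act_mul, ← Subgroup.coe_mul, inv_mul_cancel,
      Subgroup.coe_one, act_one]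
  -- invariance
  have hinv : ∀ s : G, rho (s : PGL2 k) h = h := by
    choose u hu hu' using fun s : G => rho_quot (s : PGL2 k) a b
    set f := OnePoint.ratFactor a / OnePoint.ratFactor b
    have hN : ∏ s : G, rho (s : PGL2 k) f = RatFunc.C (∏ s, u s) * h := by
      rw [hdef, map_prod, ← Finset.prod_mul_distrib]
      exact Finset.prod_congr rfl fun s _ => hu' s
    intro s
    have hNi : rho (s : PGL2 k) (∏ t : G, rho (t : PGL2 k) f) = ∏ t : G, rho (t : PGL2 k) f := by
      rw [map_prod]
      refine Fintype.prod_equiv (Equiv.mulLeft s) _ _ fun t => ?_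
      simp [map_mul, AlgEquiv.mul_apply]
    rw [hN, map_mul] at hNi
    have hc : rho (s : PGL2 k) (RatFunc.C (∏ s, u s)) = RatFunc.C (∏ s, u s) :=
      (rho (s : PGL2 k)).commutes _
    rw [hc] at hNi
    refine mul_left_cancel₀ ?_ hNi
    rw [Ne, map_eq_zero]
    exact Finset.prod_ne_zero_iff.mpr fun s _ => hu s
  -- degree
  have hdeg : Module.finrank F (RatFunc k) = Nat.card G := by
    subst hF
    rw [RatFunc.finrank_eq_max_natDegree]
    set N : k[X] := ∏ s : G, polFactor (PGL2.act (s : PGL2 k) a) with hNdef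
    set D : k[X] := ∏ s : G, polFactor (PGL2.act (s : PGL2 k) b) with hDdef
    have hNm : N.Monic := Polynomial.monic_prod_of_monic _ _ fun s _ => monic_polFactor _
    have hDm : D.Monic := Polynomial.monic_prod_of_monic _ _ fun s _ => monic_polFactor _
    have hcop : IsCoprime N D :=
      IsCoprime.prod_left fun s _ => IsCoprime.prod_right fun t _ => coprime_polFactor (hne s t)
    have hh : h = algebraMap _ _ N / algebraMap _ _ D := by
      rw [hdef, hNdef, hDdef, map_prod, map_prod, ← Finset.prod_div_distrib]
      simp only [map_polFactor]
    have hcross := (RatFunc.num_mul_eq_mul_denom_iff hDm.ne_zero).mpr hh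
    have hcop' := h.isCoprime_num_denom
    have hD : Associated h.denom D := by
      apply associated_of_dvd_dvd
      · exact hcop'.symm.dvd_of_dvd_mul_left (hcross ▸ Dvd.intro_left _ rfl)
      · exact hcop.symm.dvd_of_dvd_mul_left (hcross ▸ Dvd.intro_left _ rfl)
    have hN : Associated h.num N := by
      apply associated_of_dvd_dvd
      · exact hcop'.dvd_of_dvd_mul_right (hcross ▸ Dvd.intro _ rfl)
      · exact hcop.dvd_of_dvd_mul_right (hcross ▸ Dvd.intro _ rfl)
    rw [Polynomial.natDegree_eq_of_degree_eq (Polynomial.degree_eq_degree_of_associated hN),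
      Polynomial.natDegree_eq_of_degree_eq (Polynomial.degree_eq_degree_of_associated hD)]
    have hNd : N.natDegree = ∑ s : G, (polFactor (PGL2.act (s : PGL2 k) a)).natDegree :=
      Polynomial.natDegree_prod_of_monic _ _ fun s _ => monic_polFactor _
    have hDd : D.natDegree = ∑ s : G, (polFactor (PGL2.act (s : PGL2 k) b)).natDegree :=
      Polynomial.natDegree_prod_of_monic _ _ fun s _ => monic_polFactor _
    have hle : ∀ c : OnePoint k, ∑ s : G, (polFactor (PGL2.act (s : PGL2 k) c)).natDegree
        ≤ Nat.card G := by
      intro c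
      refine (Finset.sum_le_sum fun s _ => natDegree_polFactor_le _).trans ?_
      simp
    have heq : ∀ c : OnePoint k, (∀ s : G, PGL2.act (s : PGL2 k) c ≠ ∞) →
        ∑ s : G, (polFactor (PGL2.act (s : PGL2 k) c)).natDegree = Nat.card G := by
      intro c hc
      rw [Finset.sum_congr rfl fun s _ => natDegree_polFactor (hc s)]
      simp
    rw [hNd, hDd]
    by_cases hA : ∀ s : G, PGL2.act (s : PGL2 k) a ≠ ∞
    · rw [heq a hA]
      exact max_eq_left (hle b)
    · push Not at hA
      obtain ⟨s, hs⟩ := hA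
      rw [heq b fun t ht => hne s t (hs.trans ht.symm)]
      exact max_eq_right (hle a)
  have hpos : 0 < Module.finrank F (RatFunc k) := by rw [hdeg]; exact Nat.card_pos
  have hfd : FiniteDimensional F (RatFunc k) := Module.finite_of_finrank_pos hpos
  -- the group hom
  have hfix : ∀ s : G, rho (s : PGL2 k) ∈ F.fixingSubgroup := by
    intro s
    have hle : F ≤ IntermediateField.fixedField (Subgroup.zpowers (rho (s : PGL2 k))) := by
      rw [hF, IntermediateField.adjoin_simple_le_iff, IntermediateField.mem_fixedField_iff]
      intro t ht
      have : Subgroup.zpowers (rho (s : PGL2 k)) ≤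
          MulAction.stabilizer (RatFunc k ≃ₐ[k] RatFunc k) h := by
        rw [Subgroup.zpowers_le]
        exact hinv s
      exact this ht
    exact (IntermediateField.le_iff_le _ _).mp hle (Subgroup.mem_zpowers _)
  let Φ : G →* F.fixingSubgroup := (rho.comp G.subtype).codRestrict _ hfix
  have hΦ : Function.Injective Φ := by
    intro s t e
    exact Subtype.ext (rho_injective (congrArg Subtype.val e))
  let Ψ : G →* (RatFunc k ≃ₐ[F] RatFunc k) :=
    (IntermediateField.fixingSubgroupEquiv F).toMonoidHom.comp Φ
  have hΨ : Function.Injective Ψ :=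
    (IntermediateField.fixingSubgroupEquiv F).injective.comp hΦ
  have hcard1 : Nat.card (RatFunc k ≃ₐ[F] RatFunc k) ≤ Nat.card G := by
    rw [← hdeg, Nat.card_eq_fintype_card]
    exact AlgEquiv.card_le
  have hcard2 : Nat.card G ≤ Nat.card (RatFunc k ≃ₐ[F] RatFunc k) :=
    Nat.card_le_card_of_injective Ψ hΨ
  have hcard := le_antisymm hcard2 hcard1
  refine ⟨IsGalois.of_card_aut_eq_finrank F (RatFunc k) (by rw [hdeg, hcard]), hdeg, ?_⟩
  have hbij : Function.Bijective Ψ :=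
    (Nat.bijective_iff_injective_and_card Ψ).mpr ⟨hΨ, hcard⟩
  exact ⟨(MulEquiv.ofBijective Ψ hbij).symm⟩
end

section
/- Let k be a field, let G be a finite subgroup of PGL_2(k), and let a, b ∈ ℙ¹(k) be two points which do not lie in the same G-orbit. Let h ∈ k(x) be the rational function h(x) = ∏_{σ∈G} (x−σ(a))/(x−σ(b)), with the convention that the factor x−c equals the constant 1 whenever c = ∞. Then h is invariant under G: for every τ ∈ G, the rational function h∘τ (obtained by substituting τ(x) for x) equals h. -/
open Polynomial OnePoint

/-- The rational function `τ(x) = (a * x + b) / (c * x + d) ∈ k(x)` attached to an element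
`τ` of `PGL₂(k)` with representative matrix `!![a, b; c, d]`. -/
noncomputable def PGL2.toRatFunc {k : Type*} [Field k] (g : PGL2 k) : RatFunc k :=
  letI M := ((Quotient.out g : Matrix.GeneralLinearGroup (Fin 2) k) : Matrix (Fin 2) (Fin 2) k)
  (RatFunc.C (M 0 0) * RatFunc.X + RatFunc.C (M 0 1)) /
    (RatFunc.C (M 1 0) * RatFunc.X + RatFunc.C (M 1 1))

/-- Composition `h ∘ g` of a rational function `h ∈ k(x)` with a rational function
`g ∈ k(x)`, given by substituting `g` for the variable `x` in `h`. -/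
noncomputable def RatFunc.comp {k : Type*} [Field k] (h g : RatFunc k) : RatFunc k :=
  RatFunc.eval (RatFunc.C : k →+* RatFunc k) g h

/-- The linear form `w X - u` attached to a vector `(u, w)`. -/
noncomputable def linForm {k : Type*} [Field k] (v : Fin 2 → k) : RatFunc k :=
  RatFunc.C (v 1) * RatFunc.X - RatFunc.C (v 0)

/-- Homogeneous coordinates of a point. -/
noncomputable def liftPt {k : Type*} [Field k] (c : OnePoint k) : Fin 2 → k :=
  Option.elim c ![1, 0] (fun w => ![w, 1])

lemma lin_eq_zero {k : Type*} [Field k] {u w : k}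
    (h : RatFunc.C u * RatFunc.X + RatFunc.C w = 0) : u = 0 ∧ w = 0 := by
  have h2 : algebraMap k[X] (RatFunc k) (C u * X + C w) = 0 := by
    simpa using h
  rw [map_eq_zero_iff _ (RatFunc.algebraMap_injective k)] at h2
  constructor
  · simpa using congrArg (fun p => p.coeff 1) h2
  · simpa using congrArg (fun p => p.coeff 0) h2

open Classical in
lemma ratFactor_mobius {k : Type*} [Field k] (M : Matrix (Fin 2) (Fin 2) k) (hM : M.det ≠ 0)
    (c : OnePoint k) : ∃ μ : k, μ ≠ 0 ∧
      OnePoint.ratFactor (M.mobius c) = RatFunc.C μ * linForm (M.mulVec (liftPt c)) := by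
  rw [Matrix.det_fin_two] at hM
  have key : ∀ u w : k, (u ≠ 0 ∨ w ≠ 0) → ∀ z : OnePoint k,
      (w = 0 → z = ∞) → (w ≠ 0 → z = ((u / w : k) : OnePoint k)) →
      ∃ μ : k, μ ≠ 0 ∧ OnePoint.ratFactor z =
        RatFunc.C μ * (RatFunc.C w * RatFunc.X - RatFunc.C u) := by
    intro u w huw z h0 h1
    by_cases hw : w = 0
    · have hu : u ≠ 0 := by tauto
      refine ⟨-u⁻¹, by simpa using hu, ?_⟩
      rw [h0 hw, hw]
      have h2 : RatFunc.C u⁻¹ * RatFunc.C u = (1 : RatFunc k) := by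
        rw [← map_mul, inv_mul_cancel₀ hu, map_one]
      have h3 : OnePoint.ratFactor (∞ : OnePoint k) = 1 := rfl
      rw [h3, map_neg, map_zero]
      linear_combination -h2
    · refine ⟨w⁻¹, inv_ne_zero hw, ?_⟩
      rw [h1 hw]
      have h3 : OnePoint.ratFactor ((u / w : k) : OnePoint k)
        = RatFunc.X - RatFunc.C (u / w) := rfl
      have h2 : RatFunc.C w⁻¹ * RatFunc.C w = (1 : RatFunc k) := by
        rw [← map_mul, inv_mul_cancel₀ hw, map_one]
      rw [h3, div_eq_mul_inv, map_mul]
      linear_combination -RatFunc.X * h2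
  induction c using OnePoint.rec with
  | infty =>
    have hv : M.mulVec (liftPt ∞) = ![M 0 0, M 1 0] := by
      have : liftPt (∞ : OnePoint k) = ![1, 0] := rfl
      rw [this]
      ext i; fin_cases i <;> simp [Matrix.mulVec, dotProduct]
    have hm : M.mobius ∞ = if M 1 0 = 0 then ∞ else ((M 0 0 / M 1 0 : k) : OnePoint k) := by
      rfl
    rw [hv]
    refine key (M 0 0) (M 1 0) ?_ _ (fun h => by rw [hm, if_pos h]) (fun h => by rw [hm, if_neg h])
    by_contra! hh
    apply hM
    rw [hh.1, hh.2]; ring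
  | coe x =>
    have hv : M.mulVec (liftPt (x : OnePoint k)) = ![M 0 0 * x + M 0 1, M 1 0 * x + M 1 1] := by
      have : liftPt (x : OnePoint k) = ![x, 1] := rfl
      rw [this]
      ext i; fin_cases i <;> simp [Matrix.mulVec, dotProduct]
    have hm : M.mobius (x : OnePoint k) = if M 1 0 * x + M 1 1 = 0 then ∞
        else (((M 0 0 * x + M 0 1) / (M 1 0 * x + M 1 1) : k) : OnePoint k) := by
      rfl
    rw [hv]
    refine key (M 0 0 * x + M 0 1) (M 1 0 * x + M 1 1) ?_ _
      (fun h => by rw [hm, if_pos h]) (fun h => by rw [hm, if_neg h])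
    by_contra! hh
    have e0 : M 0 0 * M 1 1 - M 0 1 * M 1 0 = 0 := by
      linear_combination M 0 0 * hh.2 - M 1 0 * hh.1
    exact hM e0

lemma exists_compHom {k : Type*} [Field k] (M : Matrix (Fin 2) (Fin 2) k) (hM : M.det ≠ 0) :
    ∃ φ : RatFunc k →+* RatFunc k,
      (∀ h, φ h = RatFunc.comp h ((RatFunc.C (M 0 0) * RatFunc.X + RatFunc.C (M 0 1)) /
        (RatFunc.C (M 1 0) * RatFunc.X + RatFunc.C (M 1 1)))) ∧
      (∀ c, φ (RatFunc.C c) = RatFunc.C c) ∧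
      ∃ d : RatFunc k, d ≠ 0 ∧ ∀ v, φ (linForm (M.mulVec v)) = d * linForm v := by
  rw [Matrix.det_fin_two] at hM
  have hden : RatFunc.C (M 1 0) * RatFunc.X + RatFunc.C (M 1 1) ≠ (0 : RatFunc k) := by
    intro h
    obtain ⟨h1, h2⟩ := lin_eq_zero h
    apply hM
    rw [h1, h2]; ring
  set D := RatFunc.C (M 1 0) * RatFunc.X + RatFunc.C (M 1 1) with hD
  set g := (RatFunc.C (M 0 0) * RatFunc.X + RatFunc.C (M 0 1)) / D with hg
  have hgD : g * D = RatFunc.C (M 0 0) * RatFunc.X + RatFunc.C (M 0 1) :=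
    div_mul_cancel₀ _ hden
  have htr : Transcendental k g := by
    apply RatFunc.transcendental_of_ne_C
    rintro ⟨c, hc⟩
    rw [hc] at hgD
    have h0 : RatFunc.C (M 0 0 - c * M 1 0) * RatFunc.X + RatFunc.C (M 0 1 - c * M 1 1)
        = (0 : RatFunc k) := by
      simp only [map_sub, map_mul]
      rw [hD] at hgD
      linear_combination -hgD
    obtain ⟨h1, h2⟩ := lin_eq_zero h0
    apply hM
    linear_combination M 1 1 * h1 - M 1 0 * h2
  have hle : nonZeroDivisors k[X] ≤ (nonZeroDivisors (RatFunc k)).comap (Polynomial.eval₂RingHom RatFunc.C g) := by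
    intro p hp
    rw [Submonoid.mem_comap, mem_nonZeroDivisors_iff_ne_zero]
    intro h
    apply nonZeroDivisors.ne_zero hp
    exact (transcendental_iff.mp htr) p h
  have hX : RatFunc.liftRingHom (Polynomial.eval₂RingHom RatFunc.C g) hle RatFunc.X = g := by
    rw [← RatFunc.algebraMap_X, RatFunc.liftRingHom_algebraMap]
    simp
  have hC : ∀ c, RatFunc.liftRingHom (Polynomial.eval₂RingHom RatFunc.C g) hle (RatFunc.C c)
      = RatFunc.C c := by
    intro c
    rw [← RatFunc.algebraMap_C, RatFunc.liftRingHom_algebraMap]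
    simp
  refine ⟨RatFunc.liftRingHom (Polynomial.eval₂RingHom RatFunc.C g) hle, ?_, hC,
    RatFunc.C (M 0 0 * M 1 1 - M 0 1 * M 1 0) / D, ?_, ?_⟩
  · intro h
    rw [RatFunc.liftRingHom_apply]
    rfl
  · apply div_ne_zero _ hden
    rwa [Ne, map_eq_zero]
  · intro v
    simp only [linForm, map_sub, map_mul, hX, hC]
    rw [div_mul_eq_mul_div, eq_div_iff hden]
    simp only [Matrix.mulVec, dotProduct, Fin.sum_univ_two, map_add, map_mul]
    rw [sub_mul, mul_assoc, hgD, hD]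
    ring

lemma linForm_smul {k : Type*} [Field k] (c : k) (v : Fin 2 → k) :
    linForm (c • v) = RatFunc.C c * linForm v := by
  simp only [linForm, Pi.smul_apply, smul_eq_mul, map_mul]
  ring

lemma out_mul_rel {k : Type*} [Field k] (τ ρ : PGL2 k) : ∃ z : k, z ≠ 0 ∧ ∀ v : Fin 2 → k,
    ((Quotient.out (τ * ρ) : Matrix.GeneralLinearGroup (Fin 2) k) :
        Matrix (Fin 2) (Fin 2) k).mulVec v =
      ((Quotient.out τ : Matrix.GeneralLinearGroup (Fin 2) k) :
        Matrix (Fin 2) (Fin 2) k).mulVec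
      (z • ((Quotient.out ρ : Matrix.GeneralLinearGroup (Fin 2) k) :
        Matrix (Fin 2) (Fin 2) k).mulVec v) := by
  set A : Matrix.GeneralLinearGroup (Fin 2) k := Quotient.out τ with hA
  set B : Matrix.GeneralLinearGroup (Fin 2) k := Quotient.out ρ with hB
  have h1 : (QuotientGroup.mk (A * B) : PGL2 k) = τ * ρ := by
    rw [QuotientGroup.mk_mul, hA, hB, QuotientGroup.out_eq', QuotientGroup.out_eq']
  obtain ⟨z, hz⟩ := QuotientGroup.mk_out_eq_mul
    (Subgroup.center (Matrix.GeneralLinearGroup (Fin 2) k)) (A * B)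
  rw [h1] at hz
  obtain ⟨c, hc⟩ := Matrix.GeneralLinearGroup.mem_center_iff_val_mem_range_scalar.mp z.2
  refine ⟨c, ?_, ?_⟩
  · rintro rfl
    have := (z : Matrix.GeneralLinearGroup (Fin 2) k).ne_zero
    exact this (by rw [← hc, map_zero])
  · intro v
    rw [hz]
    simp only [Units.val_mul, ← hc]
    rw [← Matrix.mulVec_mulVec, ← Matrix.mulVec_mulVec]
    have : (Matrix.scalar (Fin 2) c).mulVec v = c • v := by
      ext i; simp [Matrix.scalar_apply, Matrix.mulVec_diagonal]
    rw [this, Matrix.mulVec_smul]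

/-- **`G`-invariance of the cover.**
Let `G` be a finite subgroup of `PGL₂(k)` and let `a, b ∈ ℙ¹(k)` be points not lying in the
same `G`-orbit.  Let `h = ∏_{σ ∈ G} (x - σ(a)) / (x - σ(b))` (with the convention that a
factor `x - c` is `1` when `c = ∞`).  Then `h` is invariant under `G`: for every `τ ∈ G`,
the rational function `h ∘ τ`, obtained by substituting `τ(x)` for `x`, equals `h`. -/
theorem cover_function_is_G_invariant
    (k : Type*) [Field k] (G : Subgroup (PGL2 k)) [Fintype G] (a b : OnePoint k)
    (hab : ¬ PGL2.SameOrbit G a b)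
    (h : RatFunc k)
    (hdef : h = ∏ σ : G, (OnePoint.ratFactor (PGL2.act (σ : PGL2 k) a) /
      OnePoint.ratFactor (PGL2.act (σ : PGL2 k) b))) :
    ∀ τ ∈ G, RatFunc.comp h (PGL2.toRatFunc τ) = h := by
  intro τ hτ
  have hdet : ∀ σ : PGL2 k, ((Quotient.out σ : Matrix.GeneralLinearGroup (Fin 2) k) :
      Matrix (Fin 2) (Fin 2) k).det ≠ 0 := fun σ =>
    ((Matrix.isUnit_iff_isUnit_det _).mp (Units.isUnit _)).ne_zero
  obtain ⟨φ, hφ, hφC, d, hd, hφN⟩ := exists_compHom _ (hdet τ)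
  have hcomp : RatFunc.comp h (PGL2.toRatFunc τ) = φ h := (hφ h).symm
  rw [hcomp]
  choose μ hμ0 hμ using fun (σ : G) (c : OnePoint k) => ratFactor_mobius _ (hdet σ) c
  let N : G → OnePoint k → RatFunc k := fun σ c =>
    linForm (((Quotient.out (σ : PGL2 k) : Matrix.GeneralLinearGroup (Fin 2) k) :
      Matrix (Fin 2) (Fin 2) k).mulVec (liftPt c))
  have hH : h = (∏ σ : G, RatFunc.C (μ σ a / μ σ b)) * ∏ σ : G, (N σ a / N σ b) := by
    rw [hdef, ← Finset.prod_mul_distrib]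
    refine Finset.prod_congr rfl fun σ _ => ?_
    have ha := hμ σ a
    have hb := hμ σ b
    change OnePoint.ratFactor (PGL2.act (σ : PGL2 k) a) = RatFunc.C (μ σ a) * N σ a at ha
    change OnePoint.ratFactor (PGL2.act (σ : PGL2 k) b) = RatFunc.C (μ σ b) * N σ b at hb
    rw [ha, hb, map_div₀, mul_div_mul_comm]
  have hstep : ∀ ρ : G, φ (N (⟨τ, hτ⟩ * ρ) a / N (⟨τ, hτ⟩ * ρ) b) = N ρ a / N ρ b := by
    intro ρ
    obtain ⟨z, hz0, hz⟩ := out_mul_rel τ (ρ : PGL2 k)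
    have hN : ∀ c, φ (N (⟨τ, hτ⟩ * ρ) c) = (d * RatFunc.C z) * N ρ c := by
      intro c
      change φ (linForm (((Quotient.out (τ * (ρ : PGL2 k)) :
        Matrix.GeneralLinearGroup (Fin 2) k) :
        Matrix (Fin 2) (Fin 2) k).mulVec (liftPt c))) = _
      rw [hz, hφN, linForm_smul, mul_assoc]
    rw [map_div₀, hN, hN, mul_div_mul_left]
    exact mul_ne_zero hd (by rwa [Ne, map_eq_zero])
  rw [hH, map_mul, map_prod, map_prod]
  congr 1
  · exact Finset.prod_congr rfl fun σ _ => hφC _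
  · rw [← Equiv.prod_comp (Equiv.mulLeft (⟨τ, hτ⟩ : G))]
    exact Finset.prod_congr rfl fun ρ _ => hstep ρ
end

section
/- Let k be a number field, let G be a finite subgroup of PGL_2(k), and let a, b ∈ ℙ¹(k) be two points which do not lie in the same G-orbit. Consider the polynomial R_t = ∏_{σ∈G}(x−σ(a)) − t·∏_{σ∈G}(x−σ(b)) in k(t)[x], with the convention that the factor x−c equals the constant 1 whenever c = ∞. Then there exists a thin subset T of k such that for every m ∈ k with m ∉ T, the specialized polynomial R_m ∈ k[x] is irreducible over k, and its splitting field is a Galois extension of k whose Galois group is isomorphic to G. -/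
open Polynomial OnePoint

/-- The polynomial factor `x - c` in `k[x]`, with the convention that it is the constant `1`
when `c = ∞`. -/
noncomputable def OnePoint.polyFactor {k : Type*} [Field k] (c : OnePoint k) : Polynomial k :=
  Option.elim c 1 (fun c₀ => Polynomial.X - Polynomial.C c₀)

/-- A thin subset of `k`, in the sense of Serre: a set contained in the union of a finite
set and finitely many value sets `{m ∈ k | P(m, x) has a root x ∈ k}`, where each
`P(t, x) ∈ k[t][x]` is irreducible over `k(t)` of degree at least `2` in `x`. -/
def IsThin {k : Type*} [Field k] (T : Set k) : Prop :=
  ∃ (s : Finset (Polynomial (Polynomial k))) (F : Set k), F.Finite ∧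
    (∀ P ∈ s, Irreducible (P.map (algebraMap (Polynomial k) (RatFunc k))) ∧ 2 ≤ P.natDegree) ∧
    T ⊆ F ∪ ⋃ P ∈ s, {m : k | ∃ x : k, ((P.map (Polynomial.evalRingHom m)).eval x = 0)}


namespace HS

variable {k : Type*} [Field k]

/-- Chosen representative matrix. -/
noncomputable def rep (σ : PGL2 k) : Matrix (Fin 2) (Fin 2) k :=
  ((Quotient.out σ : Matrix.GeneralLinearGroup (Fin 2) k) : Matrix (Fin 2) (Fin 2) k)

lemma rep_det (σ : PGL2 k) : (rep σ).det ≠ 0 := by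
  have := (Quotient.out σ : Matrix.GeneralLinearGroup (Fin 2) k).isUnit
  exact ((Matrix.isUnit_iff_isUnit_det _).mp this).ne_zero

lemma rep_det' (σ : PGL2 k) : rep σ 0 0 * rep σ 1 1 - rep σ 0 1 * rep σ 1 0 ≠ 0 := by
  rw [← Matrix.det_fin_two]; exact rep_det σ

lemma rep_eq_of_eq {g h : Matrix.GeneralLinearGroup (Fin 2) k}
    (H : (g : PGL2 k) = (h : PGL2 k)) :
    ∃ c : k, c ≠ 0 ∧ ∀ i j, (h : Matrix (Fin 2) (Fin 2) k) i j = c * (g : Matrix (Fin 2) (Fin 2) k) i j := by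
  have h1 := QuotientGroup.eq.mp H
  rw [Matrix.GeneralLinearGroup.mem_center_iff_val_mem_range_scalar] at h1
  obtain ⟨c, hc⟩ := h1
  have h2 : h = g * (g⁻¹ * h) := by group
  have h3 : (h : Matrix (Fin 2) (Fin 2) k) = (g : Matrix (Fin 2) (Fin 2) k) * Matrix.scalar (Fin 2) c := by
    rw [hc]; exact congrArg Units.val h2
  refine ⟨c, ?_, ?_⟩
  · rintro rfl
    have : (h : Matrix (Fin 2) (Fin 2) k) = 0 := by rw [h3]; simp
    exact h.ne_zero this
  · intro i j
    rw [h3]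
    simp [Matrix.scalar_apply, Matrix.mul_diagonal, mul_comm]

lemma mk_out (σ : PGL2 k) :
    ((Quotient.out σ : Matrix.GeneralLinearGroup (Fin 2) k) : PGL2 k) = σ :=
  QuotientGroup.out_eq' σ

lemma rep_mul (σ τ : PGL2 k) : ∃ c : k, c ≠ 0 ∧ ∀ i j, rep (σ * τ) i j =
    c * (rep σ i 0 * rep τ 0 j + rep σ i 1 * rep τ 1 j) := by
  have : (((Quotient.out σ * Quotient.out τ : Matrix.GeneralLinearGroup (Fin 2) k)) : PGL2 k) =
      ((Quotient.out (σ * τ) : Matrix.GeneralLinearGroup (Fin 2) k) : PGL2 k) := by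
    rw [QuotientGroup.mk_mul, mk_out, mk_out, mk_out]
  obtain ⟨c, hc, h⟩ := rep_eq_of_eq this
  refine ⟨c, hc, fun i j => ?_⟩
  have := h i j
  rw [Units.val_mul, Matrix.mul_apply, Fin.sum_univ_two] at this
  exact this

lemma rep_one : ∃ c : k, c ≠ 0 ∧ rep (1 : PGL2 k) 0 0 = c ∧ rep (1 : PGL2 k) 0 1 = 0 ∧
    rep (1 : PGL2 k) 1 0 = 0 ∧ rep (1 : PGL2 k) 1 1 = c := by
  have : ((1 : Matrix.GeneralLinearGroup (Fin 2) k) : PGL2 k) =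
      ((Quotient.out (1 : PGL2 k) : Matrix.GeneralLinearGroup (Fin 2) k) : PGL2 k) := by
    rw [mk_out]; rfl
  obtain ⟨c, hc, h⟩ := rep_eq_of_eq this
  refine ⟨c, hc, ?_, ?_, ?_, ?_⟩ <;> refine (h _ _).trans ?_ <;> simp

lemma rep_inj {σ τ : PGL2 k}
    (h1 : rep σ 0 0 * rep τ 1 0 = rep τ 0 0 * rep σ 1 0)
    (h2 : rep σ 0 1 * rep τ 1 1 = rep τ 0 1 * rep σ 1 1)
    (h3 : rep σ 0 0 * rep τ 1 1 + rep σ 0 1 * rep τ 1 0 =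
      rep τ 0 0 * rep σ 1 1 + rep τ 0 1 * rep σ 1 0) : σ = τ := by
  rw [← mk_out σ, ← mk_out τ, eq_comm, QuotientGroup.eq,
    Matrix.GeneralLinearGroup.mem_center_iff_val_mem_range_scalar]
  have hd := rep_det' τ
  set d := rep τ 0 0 * rep τ 1 1 - rep τ 0 1 * rep τ 1 0 with hdd
  refine ⟨(rep τ 1 1 * rep σ 0 0 - rep τ 0 1 * rep σ 1 0) / d, ?_⟩
  rw [Units.val_mul, eq_comm]
  have key : (Quotient.out σ : Matrix.GeneralLinearGroup (Fin 2) k).val =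
      (Quotient.out τ : Matrix.GeneralLinearGroup (Fin 2) k).val * 
      Matrix.scalar (Fin 2) ((rep τ 1 1 * rep σ 0 0 - rep τ 0 1 * rep σ 1 0) / d) := by
    change rep σ = rep τ * _
    ext i j
    simp only [Matrix.scalar_apply, Matrix.mul_diagonal]
    rw [mul_div_assoc', eq_div_iff hd, hdd]
    fin_cases i <;> fin_cases j <;> simp <;> grind
  rw [key, ← mul_assoc, ← Units.val_mul, inv_mul_cancel]
  simp

/-- coordinates -/
noncomputable def crd (p : OnePoint k) : k × k := Option.elim p (-1, 0) (fun c => (c, 1))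

lemma polyFactor_eq (p : OnePoint k) :
    OnePoint.polyFactor p = C (crd p).2 * X - C (crd p).1 := by
  cases p using OnePoint.rec
  · change (1 : k[X]) = C 0 * X - C (-1); simp
  · rename_i c; change X - C c = C 1 * X - C c; simp

lemma crd_ne (p : OnePoint k) : (crd p).1 ≠ 0 ∨ (crd p).2 ≠ 0 := by
  cases p using OnePoint.rec
  · left; change (-1 : k) ≠ 0; simp
  · right; change (1 : k) ≠ 0; simp

/-- proportional coordinates give equal points -/
lemma crd_inj {p q : OnePoint k} (h : (crd p).1 * (crd q).2 = (crd q).1 * (crd p).2) : p = q := by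
  cases p using OnePoint.rec <;> cases q using OnePoint.rec
  · rfl
  · rename_i c; change (-1 : k) * 1 = c * 0 at h; simp at h
  · rename_i c; change c * 0 = (-1 : k) * 1 at h; simp at h
  · rename_i c d; change c * 1 = d * 1 at h; simp at h; rw [h]

lemma act_crd (σ : PGL2 k) (p : OnePoint k) : ∃ μ : k, μ ≠ 0 ∧
    rep σ 0 0 * (crd p).1 + rep σ 0 1 * (crd p).2 = μ * (crd (PGL2.act σ p)).1 ∧
    rep σ 1 0 * (crd p).1 + rep σ 1 1 * (crd p).2 = μ * (crd (PGL2.act σ p)).2 := by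
  classical
  have hd := rep_det' σ
  cases p using OnePoint.rec
  · have : PGL2.act σ ∞ = if rep σ 1 0 = 0 then ∞ else ((rep σ 0 0 / rep σ 1 0 : k) : OnePoint k) := rfl
    have hc : crd (∞ : OnePoint k) = (-1, 0) := rfl
    rw [this]
    split_ifs with h
    · refine ⟨rep σ 0 0, ?_, ?_⟩
      · grind
      · rw [hc]; simp [h]
    · have hc' : crd ((rep σ 0 0 / rep σ 1 0 : k) : OnePoint k) = (rep σ 0 0 / rep σ 1 0, 1) := rfl
      refine ⟨- rep σ 1 0, by simpa using h, ?_⟩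
      rw [hc, hc']
      constructor
      · field_simp; simp
      · simp
  · rename_i c
    have : PGL2.act σ (c : OnePoint k) = if rep σ 1 0 * c + rep σ 1 1 = 0 then ∞ else
      (((rep σ 0 0 * c + rep σ 0 1) / (rep σ 1 0 * c + rep σ 1 1) : k) : OnePoint k) := rfl
    have hc : crd (c : OnePoint k) = (c, 1) := rfl
    have hc2 : crd (∞ : OnePoint k) = (-1, 0) := rfl
    rw [this]
    split_ifs with h
    · refine ⟨-(rep σ 0 0 * c + rep σ 0 1), ?_, ?_⟩
      · grind
      · rw [hc, hc2]; simp [h]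
    · refine ⟨rep σ 1 0 * c + rep σ 1 1, h, ?_⟩
      have hc' : ∀ z : k, crd (z : OnePoint k) = (z, 1) := fun _ => rfl
      rw [hc, hc']
      refine ⟨?_, by simp⟩
      rw [mul_div_cancel₀ _ h, mul_one]

lemma act_one (p : OnePoint k) : PGL2.act (1 : PGL2 k) p = p := by
  obtain ⟨c, hc, h00, h01, h10, h11⟩ := rep_one (k := k)
  obtain ⟨μ, hμ, h1, h2⟩ := act_crd 1 p
  rw [h00, h01] at h1
  rw [h10, h11] at h2
  apply crd_inj
  apply mul_left_cancel₀ hμ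
  apply mul_left_cancel₀ hc
  grind

lemma act_mul (σ τ : PGL2 k) (p : OnePoint k) :
    PGL2.act (σ * τ) p = PGL2.act σ (PGL2.act τ p) := by
  obtain ⟨c, hc, h⟩ := rep_mul σ τ
  obtain ⟨μ, hμ, h1, h2⟩ := act_crd (σ * τ) p
  obtain ⟨ν, hν, h3, h4⟩ := act_crd τ p
  obtain ⟨ξ, hξ, h5, h6⟩ := act_crd σ (PGL2.act τ p)
  simp only [h] at h1 h2
  apply crd_inj
  apply mul_left_cancel₀ hμ
  apply mul_left_cancel₀ hξ
  have h7 : c * ν * (ξ * (crd (PGL2.act σ (PGL2.act τ p))).1) = μ * (crd (PGL2.act (σ * τ) p)).1 := by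
    rw [← h5, ← h1]
    linear_combination (-c * rep σ 0 0) * h3 - c * rep σ 0 1 * h4
  have h8 : c * ν * (ξ * (crd (PGL2.act σ (PGL2.act τ p))).2) = μ * (crd (PGL2.act (σ * τ) p)).2 := by
    rw [← h6, ← h2]
    linear_combination (-c * rep σ 1 0) * h3 - c * rep σ 1 1 * h4
  linear_combination (ξ * (crd (PGL2.act σ (PGL2.act τ p))).2) * (-h7) + (ξ * (crd (PGL2.act σ (PGL2.act τ p))).1) * h8

section ext
variable {L : Type*} [Field L] [Algebra k L]

/-- numerator -/
noncomputable def num (σ : PGL2 k) (θ : L) : L :=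
  algebraMap k L (rep σ 0 0) * θ + algebraMap k L (rep σ 0 1)
/-- denominator -/
noncomputable def den (σ : PGL2 k) (θ : L) : L :=
  algebraMap k L (rep σ 1 0) * θ + algebraMap k L (rep σ 1 1)
/-- Moebius -/
noncomputable def mob (σ : PGL2 k) (θ : L) : L := num σ θ / den σ θ

lemma mob_mul (σ τ : PGL2 k) (θ : L) (h1 : den τ θ ≠ 0) (h2 : den (σ * τ) θ ≠ 0) :
    den σ (mob τ θ) ≠ 0 ∧ mob σ (mob τ θ) = mob (σ * τ) θ := by
  obtain ⟨c, hc, h⟩ := rep_mul σ τ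
  have hc' : algebraMap k L c ≠ 0 := by simpa using hc
  have hm : mob τ θ * den τ θ = num τ θ := div_mul_cancel₀ _ h1
  have e1 : den (σ * τ) θ = algebraMap k L c * (den τ θ * den σ (mob τ θ)) := by
    rw [den.eq_def (σ * τ), h, h, den.eq_def σ]
    unfold den num at hm
    unfold den
    simp only [map_mul, map_add]
    linear_combination (-algebraMap k L c * algebraMap k L (rep σ 1 0)) * hm
  have e2 : num (σ * τ) θ = algebraMap k L c * (den τ θ * num σ (mob τ θ)) := by
    rw [num.eq_def (σ * τ), h, h, num.eq_def σ]
    unfold den num at hm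
    unfold den
    simp only [map_mul, map_add]
    linear_combination (-algebraMap k L c * algebraMap k L (rep σ 0 0)) * hm
  have h3 : den σ (mob τ θ) ≠ 0 := by
    intro h0; apply h2; rw [e1, h0]; simp
  refine ⟨h3, ?_⟩
  rw [mob, mob.eq_def (σ * τ), e1, e2]
  field_simp

lemma mob_one (θ : L) : den (1 : PGL2 k) θ ≠ 0 ∧ mob (1 : PGL2 k) θ = θ := by
  obtain ⟨c, hc, h00, h01, h10, h11⟩ := rep_one (k := k)
  have hc' : algebraMap k L c ≠ 0 := by simpa using hc
  rw [mob, num, den, h00, h01, h10, h11]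
  simp [hc]

lemma mob_map {L' : Type*} [Field L'] [Algebra k L'] (g : L →ₐ[k] L') (σ : PGL2 k) (θ : L) :
    g (mob σ θ) = mob σ (g θ) := by
  simp [mob, num, den]

end ext

section orbit
variable {Γ : Type*} [Group Γ] [Fintype Γ] (j : Γ →* PGL2 k)

/-- orbit polynomial -/
noncomputable def orb (a : OnePoint k) : k[X] := ∏ τ : Γ, OnePoint.polyFactor (PGL2.act (j τ) a)

lemma orb_natDegree (a : OnePoint k) : (orb j a).natDegree ≤ Fintype.card Γ := by
  unfold orb
  refine (natDegree_prod_le _ _).trans ?_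
  have : ∀ τ ∈ (Finset.univ : Finset Γ), (OnePoint.polyFactor (PGL2.act (j τ) a)).natDegree ≤ 1 := by
    intro τ _
    rw [polyFactor_eq, sub_eq_add_neg, ← C_neg]
    exact natDegree_linear_le
  refine (Finset.sum_le_sum this).trans ?_
  simp

lemma orb_coprime {a b : OnePoint k} (h : ∀ τ, PGL2.act (j τ) a ≠ b) :
    IsCoprime (orb j a) (orb j b) := by
  unfold orb
  refine IsCoprime.prod_left fun σ _ => IsCoprime.prod_right fun τ _ => ?_
  have hne : PGL2.act (j σ) a ≠ PGL2.act (j τ) b := by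
    intro h'
    apply h (τ⁻¹ * σ)
    rw [map_mul, act_mul, h', ← act_mul, ← map_mul, inv_mul_cancel, map_one, act_one]
  rw [polyFactor_eq, polyFactor_eq]
  set p := PGL2.act (j σ) a
  set q := PGL2.act (j τ) b
  have hd : (crd p).1 * (crd q).2 - (crd q).1 * (crd p).2 ≠ 0 := by
    intro h0; exact hne (crd_inj (sub_eq_zero.mp h0))
  set d := (crd p).1 * (crd q).2 - (crd q).1 * (crd p).2 with hdd
  refine ⟨C (-(crd q).2 / d), C ((crd p).2 / d), ?_⟩
  have : C d⁻¹ * C d = (1 : k[X]) := by rw [← C_mul, inv_mul_cancel₀ hd, C_1]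
  rw [← this]
  simp only [div_eq_mul_inv, C_mul, C_neg, hdd, C_sub]
  ring

/-- not both constant -/
lemma orb_nonconst {a b : OnePoint k} (h : ∀ τ, PGL2.act (j τ) a ≠ b) :
    (orb j a).natDegree ≠ 0 ∨ (orb j b).natDegree ≠ 0 := by
  by_contra! h0
  have aux : ∀ c : OnePoint k, (orb j c).natDegree = 0 → c = ∞ := by
    intro c hc
    unfold orb at hc
    have hfac : ∀ p : OnePoint k, (OnePoint.polyFactor p) ≠ 0 := by
      intro p
      cases p using OnePoint.rec
      · exact one_ne_zero
      · exact X_sub_C_ne_zero _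
    rw [natDegree_prod _ _ (fun i _ => hfac _)] at hc
    have := (Finset.sum_eq_zero_iff.mp hc) 1 (Finset.mem_univ _)
    rw [map_one, act_one] at this
    cases c using OnePoint.rec
    · rfl
    · rename_i c
      have h1 : OnePoint.polyFactor (c : OnePoint k) = X - C c := rfl
      rw [h1, natDegree_X_sub_C] at this
      simp at this
  apply h 1
  rw [map_one, act_one, aux a h0.1, aux b h0.2]

variable {L : Type*} [Field L] [Algebra k L]

/-- invariance -/
lemma orb_inv (ρ : Γ) (θ : L) (hθ : den (j ρ) θ ≠ 0) :
    ∃ κ : L, κ ≠ 0 ∧ ∀ a, aeval (mob (j ρ) θ) (orb j a) = κ * aeval θ (orb j a) := by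
  classical
  choose lam hlam hmul using fun τ : Γ => rep_mul (j ρ) (j τ)
  have hdet : algebraMap k L (rep (j ρ) 0 0 * rep (j ρ) 1 1 - rep (j ρ) 0 1 * rep (j ρ) 1 0) ≠ 0 := by
    exact (_root_.map_ne_zero _).mpr (rep_det' (j ρ))
  set D := algebraMap k L (rep (j ρ) 0 0 * rep (j ρ) 1 1 - rep (j ρ) 0 1 * rep (j ρ) 1 0) with hD
  refine ⟨∏ τ : Γ, (algebraMap k L (lam τ) * D / den (j ρ) θ), ?_, ?_⟩
  · refine Finset.prod_ne_zero_iff.mpr fun τ _ => ?_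
    exact div_ne_zero (mul_ne_zero (by simpa using hlam τ) hdet) hθ
  intro a
  choose mu hmu h1 h2 using fun τ : Γ => act_crd (j τ) a
  have hP : ∏ τ : Γ, algebraMap k L (mu τ) ≠ 0 :=
    Finset.prod_ne_zero_iff.mpr fun τ _ => by simpa using hmu τ
  -- un-normalised factor
  let w : Γ → L → L := fun τ z =>
    z * algebraMap k L (rep (j τ) 1 0 * (crd a).1 + rep (j τ) 1 1 * (crd a).2) -
      algebraMap k L (rep (j τ) 0 0 * (crd a).1 + rep (j τ) 0 1 * (crd a).2)
  have hw : ∀ z, (∏ τ : Γ, algebraMap k L (mu τ)) * aeval z (orb j a) = ∏ τ, w τ z := by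
    intro z
    unfold orb
    rw [map_prod, ← Finset.prod_mul_distrib]
    refine Finset.prod_congr rfl fun τ _ => ?_
    rw [polyFactor_eq]
    simp only [w, h1, h2, map_sub, map_mul, aeval_C, aeval_X]
    ring
  have hw2 : ∀ τ, w (ρ * τ) (mob (j ρ) θ) = (algebraMap k L (lam τ) * D / den (j ρ) θ) * w τ θ := by
    intro τ
    simp only [w, map_mul j, hmul, hD, mob]
    field_simp
    simp only [num, den, map_mul, map_add, map_sub]
    ring
  apply mul_left_cancel₀ hP
  rw [hw, ← Equiv.prod_comp (Equiv.mulLeft ρ), mul_left_comm, hw, ← Finset.prod_mul_distrib]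
  exact Finset.prod_congr rfl fun τ _ => hw2 τ

end orbit

section bad
variable {Γ : Type*} [Group Γ] [Fintype Γ] (j : Γ →* PGL2 k)

/-- numerator polynomial -/
noncomputable def numP (σ : PGL2 k) : k[X] := C (rep σ 0 0) * X + C (rep σ 0 1)
/-- denominator polynomial -/
noncomputable def denP (σ : PGL2 k) : k[X] := C (rep σ 1 0) * X + C (rep σ 1 1)

open Classical in
/-- Polynomial vanishing at bad points. -/
noncomputable def bad : k[X] := (∏ σ : Γ, denP (j σ)) *
  ∏ σ : Γ, ∏ τ : Γ, if σ = τ then 1 else numP (j σ) * denP (j τ) - numP (j τ) * denP (j σ)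

lemma denP_ne (σ : PGL2 k) : denP σ ≠ 0 := by
  intro h
  have h0 := congrArg (fun p => coeff p 0) h
  have h1 := congrArg (fun p => coeff p 1) h
  simp [denP] at h0 h1
  exact rep_det' σ (by rw [h0, h1]; ring)

lemma cross_ne {σ τ : PGL2 k} (hne : σ ≠ τ) : numP σ * denP τ - numP τ * denP σ ≠ 0 := by
  intro h
  have e : numP σ * denP τ - numP τ * denP σ =
      C (rep σ 0 0 * rep τ 1 0 - rep τ 0 0 * rep σ 1 0) * X ^ 2 +
      C (rep σ 0 0 * rep τ 1 1 + rep σ 0 1 * rep τ 1 0 -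
        (rep τ 0 0 * rep σ 1 1 + rep τ 0 1 * rep σ 1 0)) * X +
      C (rep σ 0 1 * rep τ 1 1 - rep τ 0 1 * rep σ 1 1) := by
    simp only [numP, denP, C_sub, C_add, C_mul]; ring
  rw [e] at h
  have h0 := congrArg (fun p => coeff p 0) h
  have h1 := congrArg (fun p => coeff p 1) h
  have h2 := congrArg (fun p => coeff p 2) h
  rw [coeff_add, coeff_add, coeff_C_mul_X_pow, coeff_C_mul_X, coeff_C] at h0 h1 h2
  simp at h0 h1 h2
  exact hne (rep_inj (sub_eq_zero.mp h2) (sub_eq_zero.mp h0) (sub_eq_zero.mp h1))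

lemma bad_ne (hj : Function.Injective j) : bad j ≠ 0 := by
  classical
  unfold bad
  refine mul_ne_zero (Finset.prod_ne_zero_iff.mpr fun σ _ => denP_ne _) ?_
  refine Finset.prod_ne_zero_iff.mpr fun σ _ => Finset.prod_ne_zero_iff.mpr fun τ _ => ?_
  split_ifs with h
  · exact one_ne_zero
  · exact cross_ne fun h' => h (hj h')

variable {L : Type*} [Field L] [Algebra k L]

lemma good_of_bad_ne {θ : L} (h : aeval θ (bad j) ≠ 0) :
    (∀ σ, den (j σ) θ ≠ 0) ∧ Function.Injective fun σ => mob (j σ) θ := by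
  classical
  unfold bad at h
  rw [map_mul, map_prod, map_prod] at h
  have h1 := left_ne_zero_of_mul h
  have h2 := right_ne_zero_of_mul h
  rw [Finset.prod_ne_zero_iff] at h1 h2
  have hden : ∀ σ : PGL2 k, aeval θ (denP σ) = den σ θ := fun σ => by simp [denP, den]
  have hnum : ∀ σ : PGL2 k, aeval θ (numP σ) = num σ θ := fun σ => by simp [numP, num]
  have hd : ∀ σ, den (j σ) θ ≠ 0 := fun σ => by rw [← hden]; exact h1 σ (Finset.mem_univ _)
  refine ⟨hd, fun σ τ hst => ?_⟩
  by_contra hne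
  have h3 := h2 σ (Finset.mem_univ _)
  rw [map_prod, Finset.prod_ne_zero_iff] at h3
  have h4 := h3 τ (Finset.mem_univ _)
  rw [if_neg hne, map_sub, map_mul, map_mul, hden, hden, hnum, hnum] at h4
  apply h4
  simp only [mob] at hst
  rw [div_eq_div_iff (hd _) (hd _)] at hst
  rw [hst, sub_self]

end bad

section coprime
variable {L : Type*} [Field L] [Algebra k L]

lemma aeval_ne_of_coprime {A B : k[X]} (h : IsCoprime A B) (θ : L) (hA : aeval θ A = 0) :
    aeval θ B ≠ 0 := by
  intro hB
  obtain ⟨u, v, huv⟩ := h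
  have := congrArg (aeval θ) huv
  simp [hA, hB] at this

lemma pencil_ne {A B : k[X]} (h : IsCoprime A B) (hn : A.natDegree ≠ 0 ∨ B.natDegree ≠ 0) (c : L) :
    A.map (algebraMap k L) - C c * B.map (algebraMap k L) ≠ 0 := by
  intro h0
  have h' : IsCoprime (A.map (algebraMap k L)) (B.map (algebraMap k L)) :=
    h.map (mapRingHom (algebraMap k L))
  rw [sub_eq_zero] at h0
  have hu : IsUnit (B.map (algebraMap k L)) := h'.isUnit_of_dvd' (h0 ▸ Dvd.intro_left _ rfl) dvd_rfl
  have hB := natDegree_eq_zero_of_isUnit hu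
  have hA : (A.map (algebraMap k L)).natDegree = 0 := by
    rw [h0]
    have := natDegree_C_mul_le c (B.map (algebraMap k L))
    omega
  rw [natDegree_map] at hA hB
  omega

lemma finite_const {A B : k[X]} (hn : A.natDegree ≠ 0 ∨ B.natDegree ≠ 0) :
    {m : k | (A - C m * B).natDegree = 0}.Finite := by
  apply Set.Subsingleton.finite
  intro m hm m' hm'
  by_contra hne
  simp only [Set.mem_ofPred_eq] at hm hm'
  obtain ⟨c, hc⟩ := natDegree_eq_zero.mp hm
  obtain ⟨c', hc'⟩ := natDegree_eq_zero.mp hm'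
  have hmm : m - m' ≠ 0 := sub_ne_zero.mpr hne
  have h1 : C (m - m')⁻¹ * C (m - m') = (1 : k[X]) := by rw [← C_mul, inv_mul_cancel₀ hmm, C_1]
  have hB : B = C ((m - m')⁻¹ * (c' - c)) := by
    rw [C_mul, C_sub, hc, hc']
    rw [C_sub] at h1
    linear_combination (-B) * h1
  have hA : A = C (c + m * ((m - m')⁻¹ * (c' - c))) := by
    rw [C_add, C_mul (a := m), ← hB, hc]; ring
  rw [hA, hB, natDegree_C, natDegree_C] at hn
  simp at hn

lemma finite_noncoprime {A B E : k[X]} (h : IsCoprime A B) (hE : E ≠ 0) :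
    {m : k | ¬ IsCoprime E (A - C m * B)}.Finite := by
  classical
  let K := AlgebraicClosure k
  have key : ∀ m : k, ¬ IsCoprime E (A - C m * B) →
      ∃ z ∈ E.aroots K, algebraMap k K m = aeval z A / aeval z B := by
    intro m hm
    have : ∃ z : K, aeval z E = 0 ∧ aeval z (A - C m * B) = 0 := by
      by_contra! hz
      exact hm ((isCoprime_iff_aeval_ne_zero_of_isAlgClosed k K _ _).mpr fun z => by
        by_contra! h0; exact hz z h0.1 h0.2)
    obtain ⟨z, h1, h2⟩ := this
    refine ⟨z, by rw [mem_aroots]; exact ⟨hE, h1⟩, ?_⟩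
    simp only [map_sub, map_mul, aeval_C] at h2
    have hB : aeval z B ≠ 0 := by
      intro hB
      rw [hB, mul_zero, sub_zero] at h2
      exact aeval_ne_of_coprime h z h2 hB
    rw [eq_div_iff hB]
    exact (sub_eq_zero.mp h2).symm
  refine Set.Finite.of_finite_image (f := algebraMap k K) ?_ (algebraMap k K).injective.injOn
  refine ((E.aroots K).toFinset.image (fun z => aeval z A / aeval z B)).finite_toSet.subset ?_
  rintro _ ⟨m, hm, rfl⟩
  obtain ⟨z, hz, h1⟩ := key m hm
  simp only [Finset.coe_image, Set.mem_image, Finset.mem_coe, Multiset.mem_toFinset]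
  exact ⟨z, hz, h1.symm⟩

end coprime

section spec

lemma loc_unit {B B' : k[X]} {L : Type*} [Field L] [Algebra k L] (θ : L) (h1 : aeval θ B ≠ 0)
    (h2 : aeval θ B' ≠ 0) : IsUnit ((aeval θ : k[X] →ₐ[k] L).toRingHom (B * B')) := by
  refine IsUnit.mk0 _ ?_
  change aeval θ (B * B') ≠ 0
  rw [map_mul]; exact mul_ne_zero h1 h2

/-- evaluation on the localization -/
noncomputable def locEval {B B' : k[X]} {L : Type*} [Field L] [Algebra k L] (θ : L)
    (h1 : aeval θ B ≠ 0) (h2 : aeval θ B' ≠ 0) : Localization.Away (B * B') →+* L :=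
  IsLocalization.Away.lift (B * B') (loc_unit θ h1 h2)

lemma locEval_algebraMap {B B' : k[X]} {L : Type*} [Field L] [Algebra k L] (θ : L)
    (h1 : aeval θ B ≠ 0) (h2 : aeval θ B' ≠ 0) (p : k[X]) :
    locEval θ h1 h2 (algebraMap k[X] _ p) = aeval θ p :=
  IsLocalization.Away.lift_eq _ _ _

lemma locEval_inv {B B' : k[X]} {L : Type*} [Field L] [Algebra k L] (θ : L)
    (h1 : aeval θ B ≠ 0) (h2 : aeval θ B' ≠ 0) :
    locEval θ h1 h2 (IsLocalization.Away.invSelf (B * B')) = (aeval θ B * aeval θ B')⁻¹ := by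
  have := congrArg (locEval θ h1 h2)
    (IsLocalization.Away.mul_invSelf (S := Localization.Away (B * B')) (B * B'))
  rw [map_mul, locEval_algebraMap, map_mul, map_one] at this
  exact eq_inv_of_mul_eq_one_right this

/-- The universal value. -/
noncomputable def univVal (A B A' B' : k[X]) (P : k[X][X]) : Localization.Away (B * B') :=
  eval₂ (eval₂RingHom ((algebraMap k[X] (Localization.Away (B * B'))).comp C)
    (algebraMap k[X] _ (A * B') * IsLocalization.Away.invSelf (B * B')))
    (algebraMap k[X] _ (A' * B) * IsLocalization.Away.invSelf (B * B')) P

lemma locEval_univVal {A B A' B' : k[X]} (P : k[X][X]) {L : Type*} [Field L] [Algebra k L] (θ : L)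
    (h1 : aeval θ B ≠ 0) (h2 : aeval θ B' ≠ 0) :
    locEval θ h1 h2 (univVal A B A' B' P) =
    eval₂ (eval₂RingHom (algebraMap k L) (aeval θ A / aeval θ B))
        (aeval θ A' / aeval θ B') P := by
  have e1 : locEval θ h1 h2 (algebraMap k[X] _ (A * B') * IsLocalization.Away.invSelf (B * B')) =
      aeval θ A / aeval θ B := by
    rw [map_mul, locEval_algebraMap, locEval_inv, map_mul]; field_simp
  have e2 : locEval θ h1 h2 (algebraMap k[X] _ (A' * B) * IsLocalization.Away.invSelf (B * B')) =
      aeval θ A' / aeval θ B' := by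
    rw [map_mul, locEval_algebraMap, locEval_inv, map_mul]; field_simp
  unfold univVal
  rw [hom_eval₂, e2]
  congr 1
  ext x
  · simp only [RingHom.comp_apply, coe_eval₂RingHom, eval₂_C, locEval_algebraMap, aeval_C]
  · simp only [RingHom.comp_apply, coe_eval₂RingHom, eval₂_X, e1]

/-- Specialisation of a relation between rational functions. -/
lemma spec {A B A' B' : k[X]} (P : k[X][X]) {K : Type*} [Field K] [Algebra k K] (x : K)
    (hx : Transcendental k x) (h3 : aeval x B ≠ 0) (h4 : aeval x B' ≠ 0)
    (hP : eval₂ (eval₂RingHom (algebraMap k K) (aeval x A / aeval x B))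
        (aeval x A' / aeval x B') P = 0)
    {L : Type*} [Field L] [Algebra k L] (θ : L) (h1 : aeval θ B ≠ 0) (h2 : aeval θ B' ≠ 0) :
    eval₂ (eval₂RingHom (algebraMap k L) (aeval θ A / aeval θ B))
        (aeval θ A' / aeval θ B') P = 0 := by
  rw [← locEval_univVal P x h3 h4] at hP
  have hinj : Function.Injective (locEval x h3 h4) := by
    refine (IsLocalization.lift_injective_iff _).mpr fun p q => ?_
    have hx' := transcendental_iff_injective.mp hx
    constructor
    · intro h
      have := congrArg (locEval x h3 h4) h
      rwa [locEval_algebraMap, locEval_algebraMap] at this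
    · intro h
      exact congrArg _ (hx' h)
  rw [map_eq_zero_iff _ hinj] at hP
  rw [← locEval_univVal P θ h1 h2, hP, map_zero]

end spec

section thin
variable {Γ Δ : Type*} [Group Γ] [Fintype Γ] [Group Δ] [Fintype Δ] (j : Γ →* PGL2 k)

lemma orb_ne (a : OnePoint k) : orb j a ≠ 0 := by
  unfold orb
  refine Finset.prod_ne_zero_iff.mpr fun τ _ => ?_
  generalize PGL2.act (j τ) a = p
  cases p using OnePoint.rec
  · exact one_ne_zero
  · exact X_sub_C_ne_zero _

lemma orb_dvd (i : Δ →* Γ) (hi : Function.Injective i) (a : OnePoint k) :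
    orb (j.comp i) a ∣ orb j a := by
  have : orb (j.comp i) a = ∏ τ ∈ Finset.univ.map ⟨i, hi⟩, OnePoint.polyFactor (PGL2.act (j τ) a) := by
    rw [Finset.prod_map]; rfl
  rw [this]
  exact Finset.prod_dvd_prod_of_subset _ _ _ (Finset.subset_univ _)

lemma orb_sub_ne (i : Δ →* Γ) (hi : Function.Injective i) (a : OnePoint k) {L : Type*} [Field L]
    [Algebra k L] {θ : L} (h : aeval θ (orb j a) ≠ 0) : aeval θ (orb (j.comp i) a) ≠ 0 := by
  intro h0
  apply h
  obtain ⟨q, hq⟩ := orb_dvd j i hi a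
  rw [hq, map_mul, h0, zero_mul]

/-- The invariant function. -/
noncomputable def fn (a b : OnePoint k) {L : Type*} [Field L] [Algebra k L] (θ : L) : L :=
  aeval θ (orb j a) / aeval θ (orb j b)

lemma fn_inv (a b : OnePoint k) {L : Type*} [Field L] [Algebra k L] (θ : L) (ρ : Γ)
    (h : den (j ρ) θ ≠ 0) : fn j a b (mob (j ρ) θ) = fn j a b θ := by
  obtain ⟨κ, hκ, H⟩ := orb_inv j ρ θ h
  unfold fn
  rw [H, H, mul_div_mul_left _ _ hκ]

lemma pencil_natDegree (a b : OnePoint k) {L : Type*} [Field L] [Algebra k L] (c : L) :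
    ((orb j a).map (algebraMap k L) - C c * (orb j b).map (algebraMap k L)).natDegree ≤
      Fintype.card Γ := by
  refine (natDegree_sub_le _ _).trans (max_le ?_ ?_)
  · rw [natDegree_map]; exact orb_natDegree j a
  · refine (natDegree_C_mul_le _ _).trans ?_
    rw [natDegree_map]; exact orb_natDegree j b

lemma transc_X : Transcendental k (RatFunc.X : RatFunc k) := by
  rw [transcendental_iff_injective]
  have : ∀ p : k[X], aeval (RatFunc.X : RatFunc k) p = algebraMap k[X] (RatFunc k) p := fun p => by
    rw [RatFunc.aeval_X_left_eq_algebraMap]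
  intro p q h
  rw [this, this] at h
  exact IsFractionRing.injective _ _ h

open scoped IntermediateField in
lemma exists_thin (hj : Function.Injective j) (i : Δ →* Γ) (hi : Function.Injective i)
    (hcard : Fintype.card Δ < Fintype.card Γ) {a b : OnePoint k}
    (h : ∀ τ, PGL2.act (j τ) a ≠ b) :
    ∃ P : k[X][X], Irreducible (P.map (algebraMap k[X] (RatFunc k))) ∧ 2 ≤ P.natDegree ∧
      ∀ {L : Type*} [Field L] [Algebra k L] (θ : L), aeval θ (orb j b) ≠ 0 →
        eval₂ (eval₂RingHom (algebraMap k L) (fn j a b θ)) (fn (j.comp i) a b θ) P = 0 := by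
  classical
  set x : RatFunc k := RatFunc.X with hx
  have htx : Transcendental k x := transc_X
  have hne : ∀ p : k[X], p ≠ 0 → aeval x p ≠ 0 := fun p hp =>
    fun h0 => hp ((transcendental_iff.mp htx) p h0)
  have hBx := hne _ (orb_ne j b)
  have hB'x := orb_sub_ne j i hi b hBx
  set f : RatFunc k := fn j a b x with hf
  set f' : RatFunc k := fn (j.comp i) a b x with hf'
  have hcop := orb_coprime j h
  have hnc := orb_nonconst j h
  have h' : ∀ τ, PGL2.act ((j.comp i) τ) a ≠ b := fun τ => h (i τ)
  have hcop' := orb_coprime (j.comp i) h'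
  have hnc' := orb_nonconst (j.comp i) h'
  have hfC : ¬ ∃ c, f = RatFunc.C c := by
    rintro ⟨c, hc⟩
    rw [hf, fn, div_eq_iff hBx] at hc
    have h1 : orb j a = C c * orb j b := by
      apply transcendental_iff_injective.mp htx
      rw [hc, map_mul, aeval_C]; rfl
    apply pencil_ne hcop hnc c
    simp [h1]
  have htf := f.transcendental_of_ne_C hfC
  have hfne : ∀ p : k[X], p ≠ 0 → aeval f p ≠ 0 := fun p hp =>
    fun h0 => hp ((transcendental_iff.mp htf) p h0)
  have halg := f.isAlgebraic_adjoin_simple_X' hfC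
  let e := RatFunc.algEquivOfTranscendental f htf
  have hnot : ¬ f' ∈ (algebraMap k⟮f⟯ (RatFunc k)).range := by
    rintro ⟨v, hv⟩
    obtain ⟨u, rfl⟩ := e.surjective v
    have h1 : f' = aeval f u.num / aeval f u.denom := by
      rw [← hv]; exact RatFunc.algEquivOfTranscendental_apply f htf u
    have hd := hfne _ u.denom_ne_zero
    rw [eq_div_iff hd] at h1
    let P0 : k[X][X] := C u.denom * X - C u.num
    have hP0 : ∀ {L : Type _} [Field L] [Algebra k L] (y y' : L),
        eval₂ (eval₂RingHom (algebraMap k L) y) y' P0 = aeval y u.denom * y' - aeval y u.num := by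
      intro L _ _ y y'
      simp [P0, aeval_def]
    obtain ⟨hg1, hg2⟩ := good_of_bad_ne j (hne _ (bad_ne j hj))
    have hroot : ∀ σ, fn (j.comp i) a b (mob (j σ) x) = f' := by
      intro σ
      have hBσ : aeval (mob (j σ) x) (orb j b) ≠ 0 := by
        obtain ⟨κ, hκ, H⟩ := orb_inv j σ x (hg1 σ)
        rw [H]; exact mul_ne_zero hκ hBx
      have hB'σ := orb_sub_ne j i hi b hBσ
      have := spec (A := orb j a) (B := orb j b) (A' := orb (j.comp i) a) (B' := orb (j.comp i) b)
        P0 x htx hBx hB'x (by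
          rw [hP0]
          change aeval f _ * f' - aeval f _ = 0
          rw [← h1]; ring) (mob (j σ) x) hBσ hB'σ
      rw [hP0] at this
      change aeval (fn j a b (mob (j σ) x)) _ * fn (j.comp i) a b (mob (j σ) x) -
        aeval (fn j a b (mob (j σ) x)) _ = 0 at this
      rw [fn_inv j a b x σ (hg1 σ), ← hf, ← h1] at this
      apply mul_left_cancel₀ hd
      linear_combination this
    apply pencil_ne hcop' hnc' f'
    refine eq_zero_of_natDegree_lt_card_of_eval_eq_zero _ hg2 (fun σ => ?_)
      ((pencil_natDegree _ _ _ _).trans_lt hcard)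
    have hBσ : aeval (mob (j σ) x) (orb j b) ≠ 0 := by
      obtain ⟨κ, hκ, H⟩ := orb_inv j σ x (hg1 σ)
      rw [H]; exact mul_ne_zero hκ hBx
    have hB'σ := orb_sub_ne j i hi b hBσ
    rw [eval_sub, eval_mul, eval_C, eval_map_algebraMap, eval_map_algebraMap, ← hroot σ, fn,
      div_mul_cancel₀ _ hB'σ, sub_self]
  have hIntegral : IsIntegral k⟮f⟯ f' := (halg.isAlgebraic f').isIntegral
  let p := minpoly k⟮f⟯ f'
  have hp2 : 2 ≤ p.natDegree := (minpoly.two_le_natDegree_iff hIntegral).mpr hnot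
  have hpi : Irreducible p := minpoly.irreducible hIntegral
  let p0 : (RatFunc k)[X] := p.map (e.symm.toRingEquiv.toRingHom)
  have hp0i : Irreducible p0 :=
    (MulEquiv.irreducible_iff (mapEquiv e.symm.toRingEquiv)).mpr hpi
  have hp02 : 2 ≤ p0.natDegree := by
    rw [natDegree_map]; exact hp2
  let g : RatFunc k →+* RatFunc k := (algebraMap k⟮f⟯ (RatFunc k)).comp e.toRingEquiv.toRingHom
  have hp0z : eval₂ g f' p0 = 0 := by
    have h1 := minpoly.aeval k⟮f⟯ f'
    rw [aeval_def] at h1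
    have hcomp : g.comp (e.symm.toRingEquiv.toRingHom) = algebraMap k⟮f⟯ (RatFunc k) := by
      refine RingHom.ext fun v => ?_
      change ((e (e.symm v) : k⟮f⟯) : RatFunc k) = v
      rw [AlgEquiv.apply_symm_apply]
    rw [eval₂_map]
    exact (congrArg (fun φ => eval₂ φ f' p) hcomp).trans h1
  let P := IsLocalization.integerNormalization (nonZeroDivisors k[X]) p0
  obtain ⟨c, hc, hPc⟩ := IsLocalization.integerNormalization_spec (nonZeroDivisors k[X]) p0
  have hc0 : algebraMap k[X] (RatFunc k) c ≠ 0 :=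
    IsFractionRing.to_map_ne_zero_of_mem_nonZeroDivisors hc
  have hPmap : P.map (algebraMap k[X] (RatFunc k)) = C (algebraMap k[X] (RatFunc k) c) * p0 := by
    refine hPc.trans ?_
    rw [← IsScalarTower.algebraMap_smul (RatFunc k) c p0, smul_eq_C_mul]
  have hPz : eval₂ (g.comp (algebraMap k[X] (RatFunc k))) f' P = 0 :=
    IsLocalization.integerNormalization_eval₂_eq_zero _ g p0 hp0z
  refine ⟨P, ?_, ?_, ?_⟩
  · rw [hPmap]
    exact (irreducible_isUnit_mul (isUnit_C.mpr hc0.isUnit)).mpr hp0i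
  · have := natDegree_map_eq_of_injective (IsFractionRing.injective k[X] (RatFunc k)) P
    rw [← this, hPmap, natDegree_C_mul hc0]
    exact hp02
  · intro L _ _ θ hθ
    refine spec (A := orb j a) (B := orb j b) (A' := orb (j.comp i) a) (B' := orb (j.comp i) b)
        P x htx hBx hB'x ?_ θ hθ (orb_sub_ne j i hi b hθ)
    have hgg : g.comp (algebraMap k[X] (RatFunc k)) = eval₂RingHom (algebraMap k (RatFunc k)) f := by
      refine RingHom.ext fun q => ?_
      change ((e (algebraMap k[X] (RatFunc k) q) : k⟮f⟯) : RatFunc k) = aeval f q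
      have := RatFunc.algEquivOfTranscendental_algebraMap f htf q
      exact (congrArg (fun z : k⟮f⟯ => (z : RatFunc k)) this).trans (by simp)
    rw [hgg] at hPz
    exact hPz

end thin

section core
variable {Γ : Type*} [Group Γ] [Fintype Γ] (j : Γ →* PGL2 k)

lemma fn_map (a b : OnePoint k) {L L' : Type*} [Field L] [Algebra k L] [Field L'] [Algebra k L']
    (g : L →ₐ[k] L') (θ : L) : g (fn j a b θ) = fn j a b (g θ) := by
  unfold fn
  rw [map_div₀, aeval_algHom_apply, aeval_algHom_apply]

lemma core [∀ H : Subgroup Γ, Fintype H] {a b : OnePoint k}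
    (h : ∀ τ, PGL2.act (j τ) a ≠ b) (m : k) (p : k[X]) (hp : p = orb j a - C m * orb j b)
    (hdeg : p.natDegree ≠ 0) (hbad : IsCoprime (bad j) p)
    (hH : ∀ H : Subgroup Γ, H ≠ ⊤ → ∀ θ : p.SplittingField, aeval θ (orb j b) ≠ 0 →
      fn j a b θ = algebraMap k _ m →
      fn (j.comp H.subtype) a b θ ∉ Set.range (algebraMap k p.SplittingField)) :
    Irreducible p ∧ IsGalois k p.SplittingField ∧
      Nonempty ((p.SplittingField ≃ₐ[k] p.SplittingField) ≃* Γ) := by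
  classical
  have hp0 : p ≠ 0 := by rintro rfl; simp at hdeg
  have hae : ∀ z : p.SplittingField, aeval z p =
      aeval z (orb j a) - algebraMap k _ m * aeval z (orb j b) := by
    intro z
    have := congrArg (aeval z) hp
    simpa using this
  obtain ⟨θ, hθ⟩ : ∃ θ : p.SplittingField, aeval θ p = 0 := by
    obtain ⟨θ, hθ⟩ := (SplittingField.splits p).exists_eval_eq_zero (by
      rw [degree_map]; intro h0; exact hdeg (natDegree_eq_zero_iff_degree_le_zero.mpr h0.le))
    exact ⟨θ, by rwa [eval_map_algebraMap] at hθ⟩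
  have hbθ : aeval θ (bad j) ≠ 0 := aeval_ne_of_coprime hbad.symm θ hθ
  obtain ⟨hg1, hg2⟩ := good_of_bad_ne j hbθ
  have hcop := orb_coprime j h
  have hBθ : aeval θ (orb j b) ≠ 0 := by
    intro h0
    have h1 := hae θ
    rw [hθ, h0, mul_zero, sub_zero] at h1
    exact aeval_ne_of_coprime hcop θ h1.symm h0
  have hfθ : fn j a b θ = algebraMap k _ m := by
    rw [fn, div_eq_iff hBθ]
    have h1 := hae θ
    rw [hθ] at h1
    exact (sub_eq_zero.mp h1.symm)
  have hroots : ∀ σ, aeval (mob (j σ) θ) p = 0 := by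
    intro σ
    obtain ⟨κ, hκ, H⟩ := orb_inv j σ θ (hg1 σ)
    have h1 := hae θ
    rw [hθ] at h1
    rw [hae, H, H]
    linear_combination (-κ) * h1
  have hpdeg : p.natDegree ≤ Fintype.card Γ := by
    have := pencil_natDegree j a b (L := k) m
    simpa [hp] using this
  let Z : Finset p.SplittingField := Finset.univ.image fun σ => mob (j σ) θ
  have hZcard : Z.card = Fintype.card Γ := Finset.card_image_of_injective _ hg2
  have hZsub : Z ⊆ (p.aroots p.SplittingField).toFinset := by
    intro z hz
    obtain ⟨σ, -, rfl⟩ := Finset.mem_image.mp hz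
    rw [Multiset.mem_toFinset, mem_aroots]
    exact ⟨hp0, hroots σ⟩
  have hrc : (p.aroots p.SplittingField).toFinset.card ≤ p.natDegree :=
    (Multiset.toFinset_card_le _).trans ((card_roots' _).trans natDegree_map_le)
  have hZeq : Z = (p.aroots p.SplittingField).toFinset :=
    Finset.eq_of_subset_of_card_le hZsub (by omega)
  have hpn : p.natDegree = Fintype.card Γ := by
    have := Finset.card_le_card hZsub
    omega
  have hall : ∀ z : p.SplittingField, aeval z p = 0 → ∃ σ, z = mob (j σ) θ := by
    intro z hz
    have : z ∈ Z := by rw [hZeq, Multiset.mem_toFinset, mem_aroots]; exact ⟨hp0, hz⟩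
    obtain ⟨σ, -, h1⟩ := Finset.mem_image.mp this
    exact ⟨σ, h1.symm⟩
  have hsep : p.Separable := by
    rw [← card_rootSet_eq_natDegree_iff_of_splits hp0 (SplittingField.splits p)]
    rw [hpn, ← hZcard, hZeq]
    simp [rootSet]
    exact Nat.card_eq_fintype_card.symm.trans (Nat.card_eq_fintype_card.trans (Fintype.card_coe _))
  have hgal : IsGalois k p.SplittingField := IsGalois.of_separable_splitting_field hsep
  have hs : ∀ g : p.SplittingField ≃ₐ[k] p.SplittingField, ∃ σ, g θ = mob (j σ) θ := by
    intro g
    apply hall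
    have := aeval_algHom_apply g.toAlgHom θ p
    rw [hθ, map_zero] at this
    exact this
  choose s hs using hs
  have hsmob : ∀ (g : p.SplittingField ≃ₐ[k] p.SplittingField) (σ : Γ),
      g (mob (j σ) θ) = mob (j (σ * s g)) θ := by
    intro g σ
    have h1 : g (mob (j σ) θ) = mob (j σ) (g θ) := mob_map g.toAlgHom (j σ) θ
    have h2 : den (j σ * j (s g)) θ ≠ 0 := by rw [← map_mul]; exact hg1 _
    rw [h1, hs, (mob_mul (j σ) (j (s g)) θ (hg1 _) h2).2, ← map_mul]
  let ψ : (p.SplittingField ≃ₐ[k] p.SplittingField) →* Γ := MonoidHom.mk' (fun g => (s g)⁻¹) (by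
    intro g g'
    rw [← mul_inv_rev]
    congr 1
    apply hg2
    change mob (j (s (g * g'))) θ = mob (j (s g' * s g)) θ
    rw [← hs, AlgEquiv.mul_apply, hs, hsmob])
  have hinj : Function.Injective ψ := by
    intro g g' hgg
    have hgg' : s g = s g' := inv_injective hgg
    refine Polynomial.Gal.ext (p := p) fun z hz => ?_
    obtain ⟨σ, rfl⟩ := hall z (aeval_eq_zero_of_mem_rootSet hz)
    exact (hsmob g σ).trans (by rw [hgg']; exact (hsmob g' σ).symm)
  have hsurj : Function.Surjective ψ := by
    rw [← MonoidHom.range_eq_top]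
    by_contra hne
    apply hH _ hne θ hBθ hfθ
    rw [IsGalois.mem_range_algebraMap_iff_fixed]
    intro g
    have h1 := fn_map (j.comp ψ.range.subtype) a b g.toAlgHom θ
    have hmem : s g ∈ ψ.range := by
      rw [← inv_mem_iff]; exact ⟨g, rfl⟩
    have h2 := fn_inv (j.comp ψ.range.subtype) a b θ ⟨s g, hmem⟩ (hg1 _)
    refine h1.trans ?_
    rw [← h2]
    congr 1
    exact hs g
  refine ⟨?_, hgal, ⟨MulEquiv.ofBijective ψ ⟨hinj, hsurj⟩⟩⟩
  have hIntegral : IsIntegral k θ := Algebra.IsIntegral.isIntegral θ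
  have hdvd : minpoly k θ ∣ p := minpoly.dvd k θ hθ
  have hq : Fintype.card Γ ≤ (minpoly k θ).natDegree := by
    rw [← hZcard]
    have hsub : Z ⊆ ((minpoly k θ).aroots p.SplittingField).toFinset := by
      intro z hz
      obtain ⟨σ, -, rfl⟩ := Finset.mem_image.mp hz
      rw [Multiset.mem_toFinset, mem_aroots]
      refine ⟨minpoly.ne_zero hIntegral, ?_⟩
      obtain ⟨g, hg⟩ := hsurj σ⁻¹
      have hg' : s g = σ := inv_injective hg
      change aeval (mob (j σ) θ) _ = 0
      rw [← hg', ← hs]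
      have := aeval_algHom_apply g.toAlgHom θ (minpoly k θ)
      rw [minpoly.aeval, map_zero] at this
      exact this
    exact (Finset.card_le_card hsub).trans
      ((Multiset.toFinset_card_le _).trans ((card_roots' _).trans natDegree_map_le))
  have hass : Associated (minpoly k θ) p :=
    associated_of_dvd_of_natDegree_le hdvd hp0 (by omega)
  exact hass.irreducible (minpoly.irreducible hIntegral)

end core

end HS
/-- **Hilbert specialization of the covers.**
Let `k` be a number field, `G` a finite subgroup of `PGL₂(k)`, and `a, b ∈ ℙ¹(k)` two points
not lying in the same `G`-orbit.  Consider `R_t = ∏_{σ∈G}(x - σ(a)) - t·∏_{σ∈G}(x - σ(b))`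
(with the convention that a factor `x - c` is `1` when `c = ∞`).  Then there is a thin set
`T ⊆ k` such that for every `m ∉ T` the specialized polynomial `R_m ∈ k[x]` is irreducible
and its splitting field is a Galois extension of `k` with Galois group isomorphic to `G`. -/
theorem specialization_galois_group
    (k : Type*) [Field k] [NumberField k] (G : Subgroup (PGL2 k)) [Fintype G]
    (a b : OnePoint k) (hab : ¬ PGL2.SameOrbit G a b)
    (R : k → Polynomial k)
    (hR : ∀ m : k, R m = (∏ σ : G, OnePoint.polyFactor (PGL2.act (σ : PGL2 k) a)) -
      Polynomial.C m * ∏ σ : G, OnePoint.polyFactor (PGL2.act (σ : PGL2 k) b)) :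
    ∃ T : Set k, IsThin T ∧ ∀ m ∉ T, Irreducible (R m) ∧
      IsGalois k (R m).SplittingField ∧
      Nonempty (((R m).SplittingField ≃ₐ[k] (R m).SplittingField) ≃* G) := by
  classical
  letI : ∀ H : Subgroup G, Fintype H := fun H => Fintype.ofFinite _
  let j : G →* PGL2 k := G.subtype
  have hj : Function.Injective j := Subtype.val_injective
  have h : ∀ τ, PGL2.act (j τ) a ≠ b := fun τ hτ => hab ⟨τ, τ.2, hτ⟩
  have hR' : ∀ m, R m = HS.orb j a - C m * HS.orb j b := hR
  have hex : ∀ H : {H : Subgroup G // H ≠ ⊤}, ∃ P : k[X][X],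
      Irreducible (P.map (algebraMap k[X] (RatFunc k))) ∧ 2 ≤ P.natDegree ∧
      ∀ (m : k) (θ : (R m).SplittingField), aeval θ (HS.orb j b) ≠ 0 →
        eval₂ (eval₂RingHom (algebraMap k (R m).SplittingField) (HS.fn j a b θ))
          (HS.fn (j.comp H.1.subtype) a b θ) P = 0 := by
    intro H
    obtain ⟨P, h1, h2, h3⟩ := HS.exists_thin j hj H.1.subtype Subtype.val_injective (by
      refine lt_of_le_of_ne (Fintype.card_le_of_injective _ H.1.subtype_injective) fun h0 => H.2 ?_
      apply Subgroup.eq_top_of_card_eq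
      rw [Nat.card_eq_fintype_card, Nat.card_eq_fintype_card, h0]) h
    exact ⟨P, h1, h2, fun m θ hθ => h3 θ hθ⟩
  choose P hP1 hP2 hP3 using hex
  letI : Fintype {H : Subgroup G // H ≠ ⊤} := Fintype.ofFinite _
  let F : Set k := {m : k | (HS.orb j a - C m * HS.orb j b).natDegree = 0} ∪
    {m : k | ¬ IsCoprime (HS.bad j) (HS.orb j a - C m * HS.orb j b)}
  let s : Finset k[X][X] := Finset.univ.image P
  refine ⟨F ∪ ⋃ Q ∈ s, {m : k | ∃ x : k, ((Q.map (Polynomial.evalRingHom m)).eval x = 0)},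
    ⟨s, F, ?_, ?_, subset_rfl⟩, ?_⟩
  · exact (HS.finite_const (HS.orb_nonconst j h)).union
      (HS.finite_noncoprime (HS.orb_coprime j h) (HS.bad_ne j hj))
  · intro Q hQ
    obtain ⟨H, -, rfl⟩ := Finset.mem_image.mp hQ
    exact ⟨hP1 H, hP2 H⟩
  · intro m hm
    rw [Set.mem_union, not_or] at hm
    obtain ⟨hmF, hmP⟩ := hm
    have hmF1 : ¬ (HS.orb j a - C m * HS.orb j b).natDegree = 0 := fun h0 => hmF (Or.inl h0)
    have hmF2 : IsCoprime (HS.bad j) (HS.orb j a - C m * HS.orb j b) := by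
      by_contra h0; exact hmF (Or.inr h0)
    rw [← hR'] at hmF1 hmF2
    refine HS.core j h m (R m) (hR' m) hmF1 hmF2 ?_
    rintro H hH θ hBθ hfθ ⟨u, hu⟩
    apply hmP
    have h1 := hP3 ⟨H, hH⟩ m θ hBθ
    rw [hfθ] at h1
    change eval₂ _ (HS.fn (j.comp H.subtype) a b θ) _ = 0 at h1
    rw [← hu] at h1
    simp only [Set.mem_iUnion]
    refine ⟨P ⟨H, hH⟩, Finset.mem_image_of_mem _ (Finset.mem_univ _), u, ?_⟩
    have h2 : eval₂RingHom (algebraMap k (R m).SplittingField) (algebraMap k _ m) =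
        (algebraMap k (R m).SplittingField).comp (evalRingHom m) := by
      ext <;> simp
    rw [h2, ← hom_eval₂] at h1
    rw [eval_map]
    exact (map_eq_zero_iff _ (algebraMap k (R m).SplittingField).injective).mp h1
end

section
/- Let G be a finite subgroup of PGL_2(ℂ) and let b ∈ ℂ be a point lying in the same G-orbit as the point ∞ ∈ ℙ¹(ℂ). Then the rational function φ ∈ ℂ(z) defined by φ(z) = ∏_{σ∈G} (σ(z) − b) is constant. -/
open Polynomial OnePoint

noncomputable def PGL2aux.rep (g : PGL2 ℂ) : Matrix (Fin 2) (Fin 2) ℂ :=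
  ((Quotient.out g : Matrix.GeneralLinearGroup (Fin 2) ℂ) : Matrix (Fin 2) (Fin 2) ℂ)

noncomputable def PGL2aux.den (g : PGL2 ℂ) : RatFunc ℂ :=
  RatFunc.C (PGL2aux.rep g 1 0) * RatFunc.X + RatFunc.C (PGL2aux.rep g 1 1)

theorem PGL2aux.rep_mul (s t : PGL2 ℂ) :
    ∃ m : ℂ, PGL2aux.rep (s * t) = m • (PGL2aux.rep s * PGL2aux.rep t) := by
  have h : (QuotientGroup.mk (Quotient.out s * Quotient.out t) : PGL2 ℂ)
      = QuotientGroup.mk (Quotient.out (s * t)) := by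
    rw [QuotientGroup.mk_mul]
    have hq : ∀ q : PGL2 ℂ, (QuotientGroup.mk (Quotient.out q) : PGL2 ℂ) = q :=
      fun q => Quotient.out_eq q
    rw [hq, hq, hq]
  rw [QuotientGroup.eq] at h
  obtain ⟨u, hu⟩ := (le_of_eq Matrix.GeneralLinearGroup.center_eq_range_scalar) h
  refine ⟨u, ?_⟩
  have h2 : (Quotient.out (s * t)) = (Quotient.out s * Quotient.out t) *
      Matrix.GeneralLinearGroup.scalar (Fin 2) u := by
    rw [hu, mul_inv_cancel_left]
  unfold PGL2aux.rep
  rw [h2]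
  ext i j
  simp [mul_comm]

theorem PGL2aux.den_ne (g : PGL2 ℂ) : PGL2aux.den g ≠ 0 := by
  intro h
  have hdet : (PGL2aux.rep g).det ≠ 0 :=
    ((Matrix.isUnit_iff_isUnit_det _).1 (Quotient.out g).isUnit).ne_zero
  rw [Matrix.det_fin_two] at hdet
  have hp : (Polynomial.C (PGL2aux.rep g 1 0) * Polynomial.X
      + Polynomial.C (PGL2aux.rep g 1 1) : ℂ[X]) = 0 := by
    apply RatFunc.algebraMap_injective ℂ
    simpa [PGL2aux.den] using h
  have h0 := congrArg (fun p => Polynomial.coeff p 0) hp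
  have h1 := congrArg (fun p => Polynomial.coeff p 1) hp
  simp [Polynomial.coeff_C] at h0 h1
  apply hdet
  rw [h0, h1]; ring

theorem PGL2aux.key (t r : PGL2 ℂ) (b : ℂ)
    (ht : PGL2.act t (∞ : OnePoint ℂ) = ((b : ℂ) : OnePoint ℂ)) :
    ∃ c : ℂ, PGL2.toRatFunc (t * r) - RatFunc.C b
      = RatFunc.C c * PGL2aux.den r / PGL2aux.den (t * r) := by
  obtain ⟨m, hm⟩ := PGL2aux.rep_mul t r
  have hb : PGL2aux.rep t 0 0 = b * PGL2aux.rep t 1 0 := by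
    change (if PGL2aux.rep t 1 0 = 0 then (∞ : OnePoint ℂ)
      else ((PGL2aux.rep t 0 0 / PGL2aux.rep t 1 0 : ℂ) : OnePoint ℂ)) = _ at ht
    split_ifs at ht with h
    · exact absurd ht (OnePoint.infty_ne_coe b)
    · rw [← OnePoint.coe_eq_coe.1 ht, div_mul_cancel₀ _ h]
  refine ⟨m * (PGL2aux.rep t 0 1 - b * PGL2aux.rep t 1 1), ?_⟩
  have hd := PGL2aux.den_ne (t * r)
  change (RatFunc.C (PGL2aux.rep (t * r) 0 0) * RatFunc.X
    + RatFunc.C (PGL2aux.rep (t * r) 0 1)) / PGL2aux.den (t * r) - _ = _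
  rw [eq_div_iff hd, sub_mul, div_mul_cancel₀ _ hd]
  unfold PGL2aux.den
  rw [hm]
  simp only [Matrix.smul_apply, Matrix.mul_apply, Fin.sum_univ_two, smul_eq_mul, hb,
    map_mul, map_add, map_sub]
  ring

/-- Let `G` be a finite subgroup of `PGL₂(ℂ)` and let `b ∈ ℂ` be a point lying in the same
`G`-orbit as `∞ ∈ ℙ¹(ℂ)`.  Then the rational function `φ(z) = ∏_{σ ∈ G} (σ(z) - b)` is
constant. -/
theorem prod_orbit_infty_sub_const_is_constant
    (G : Subgroup (PGL2 ℂ)) [Fintype G] (b : ℂ)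
    (hb : PGL2.SameOrbit G (∞ : OnePoint ℂ) ((b : ℂ) : OnePoint ℂ)) :
    ∃ c : ℂ, (∏ σ : G, (PGL2.toRatFunc (σ : PGL2 ℂ) - RatFunc.C b)) = RatFunc.C c := by
  obtain ⟨t, htG, ht⟩ := hb
  choose c hc using fun r : PGL2 ℂ => PGL2aux.key t r b ht
  refine ⟨∏ r : G, c r, ?_⟩
  have e1 := Equiv.prod_comp (Equiv.mulLeft (⟨t, htG⟩ : G))
    (fun σ : G => PGL2.toRatFunc (σ : PGL2 ℂ) - RatFunc.C b)
  have e2 := Equiv.prod_comp (Equiv.mulLeft (⟨t, htG⟩ : G))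
    (fun σ : G => PGL2aux.den (σ : PGL2 ℂ))
  simp only [Equiv.coe_mulLeft, Subgroup.coe_mul] at e1 e2
  rw [← e1]
  simp only [hc]
  rw [Finset.prod_div_distrib, Finset.prod_mul_distrib, e2, map_prod,
    mul_div_cancel_right₀ _ (Finset.prod_ne_zero_iff.2 fun g _ => PGL2aux.den_ne _)]
end

section
/- Let r ≥ 3 be an integer, let ζ ∈ ℂ be a primitive r-th root of unity, and let f ∈ PGL_2(ℂ) be the homography z ↦ ((ζ+ζ⁻¹+1)z−1)/(z+1), which is an element of order r. Let G = ⟨f⟩ (cyclic of order r) or G = ⟨f, z↦1/z⟩ (dihedral of order 2r). Then the following identities hold in the rational function field ℂ(z): ∏_{σ∈G} σ(z) = 1 and ∏_{σ∈G} (σ(z)+1) = (ζ+1)^{#G}. -/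
open Polynomial OnePoint

theorem PGL2.mk_eq_of_smul {k : Type*} [Field k] (g h : Matrix.GeneralLinearGroup (Fin 2) k)
    (s : k) (H : h.val = s • g.val) : (QuotientGroup.mk g : PGL2 k) = QuotientGroup.mk h := by
  rw [QuotientGroup.eq, Matrix.GeneralLinearGroup.mem_center_iff_val_mem_range_scalar]
  refine ⟨s, ?_⟩
  rw [Units.val_mul, H, Matrix.mul_smul, ← Units.val_mul, inv_mul_cancel]
  simp [Matrix.smul_one_eq_diagonal]

theorem PGL2.toRatFunc_mk {k : Type*} [Field k] (g : Matrix.GeneralLinearGroup (Fin 2) k) :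
    PGL2.toRatFunc (QuotientGroup.mk g : PGL2 k) =
      (RatFunc.C (g.val 0 0) * RatFunc.X + RatFunc.C (g.val 0 1)) /
        (RatFunc.C (g.val 1 0) * RatFunc.X + RatFunc.C (g.val 1 1)) := by
  obtain ⟨⟨h, hc⟩, hh⟩ :=
    QuotientGroup.mk_out_eq_mul (Subgroup.center (Matrix.GeneralLinearGroup (Fin 2) k)) g
  obtain ⟨s, hs⟩ := Matrix.GeneralLinearGroup.mem_center_iff_val_mem_range_scalar.1 hc
  have hs0 : s ≠ 0 := by
    rintro rfl
    have := h.ne_zero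
    rw [← hs] at this
    simp at this
  have hval : (Quotient.out (QuotientGroup.mk g : PGL2 k)).val = s • g.val := by
    have : (Quotient.out (QuotientGroup.mk g : PGL2 k)) = g * h := hh
    rw [this, Units.val_mul, ← hs]
    ext i j
    simp [mul_comm]
  have hC : (RatFunc.C s : RatFunc k) ≠ 0 := by simpa using hs0
  unfold PGL2.toRatFunc
  simp only [hval, Matrix.smul_apply, smul_eq_mul, map_mul]
  rw [mul_assoc, mul_assoc, ← mul_add, ← mul_add, mul_div_mul_left _ _ hC]

theorem ratFunc_lin_ne_zero {k : Type*} [Field k] {a b : k} (h : a ≠ 0 ∨ b ≠ 0) :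
    (RatFunc.C a * RatFunc.X + RatFunc.C b : RatFunc k) ≠ 0 := by
  intro H
  have H2 : algebraMap k[X] (RatFunc k) (C a * X + C b) = 0 := by
    simpa [RatFunc.algebraMap_X, RatFunc.algebraMap_C] using H
  rw [FaithfulSMul.algebraMap_eq_zero_iff] at H2
  have h1 := congrArg (fun p => coeff p 1) H2
  have h0 := congrArg (fun p => coeff p 0) H2
  simp [coeff_C] at h1 h0
  tauto

theorem gl2_det_ne {k : Type*} [Field k] (g : Matrix.GeneralLinearGroup (Fin 2) k) :
    g.val 0 0 * g.val 1 1 - g.val 0 1 * g.val 1 0 ≠ 0 := by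
  rw [← Matrix.det_fin_two]
  exact g.det.ne_zero

theorem gl2_row_ne {k : Type*} [Field k] (g : Matrix.GeneralLinearGroup (Fin 2) k) :
    g.val 1 0 ≠ 0 ∨ g.val 1 1 ≠ 0 := by
  by_contra! h
  apply gl2_det_ne g
  rw [h.1, h.2]; ring

theorem PGL2.toRatFunc_inj {k : Type*} [Field k] (x y : PGL2 k)
    (h : PGL2.toRatFunc x = PGL2.toRatFunc y) : x = y := by
  obtain ⟨M, rfl⟩ := QuotientGroup.mk_surjective x
  obtain ⟨N, rfl⟩ := QuotientGroup.mk_surjective y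
  rw [PGL2.toRatFunc_mk, PGL2.toRatFunc_mk,
    div_eq_div_iff (ratFunc_lin_ne_zero (gl2_row_ne M)) (ratFunc_lin_ne_zero (gl2_row_ne N))] at h
  have hN := gl2_det_ne N
  set a := M.val 0 0 with ha
  set b := M.val 0 1 with hb
  set c := M.val 1 0 with hc
  set d := M.val 1 1 with hd
  set a' := N.val 0 0 with ha'
  set b' := N.val 0 1 with hb'
  set c' := N.val 1 0 with hc'
  set d' := N.val 1 1 with hd'
  have h2 : algebraMap k[X] (RatFunc k) ((C a * X + C b) * (C c' * X + C d')) =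
      algebraMap k[X] (RatFunc k) ((C a' * X + C b') * (C c * X + C d)) := by
    simpa [RatFunc.algebraMap_X, RatFunc.algebraMap_C] using h
  have h3 := FaithfulSMul.algebraMap_injective k[X] (RatFunc k) h2
  have h4 : C (a * c') * X ^ 2 + C (a * d' + b * c') * X + C (b * d') =
      C (a' * c) * X ^ 2 + C (a' * d + b' * c) * X + C (b' * d) := by
    simp only [map_mul, map_add]
    linear_combination h3
  have e0 := congrArg (fun p => coeff p 0) h4
  have e1 := congrArg (fun p => coeff p 1) h4
  have e2 := congrArg (fun p => coeff p 2) h4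
  simp [coeff_C, coeff_X, coeff_X_pow, mul_assoc] at e0 e1 e2
  symm
  apply PGL2.mk_eq_of_smul _ _ ((d' * a - b' * c) / (a' * d' - b' * c'))
  ext i j
  fin_cases i <;> fin_cases j <;>
    simp only [Fin.zero_eta, Fin.mk_one, Matrix.smul_apply, smul_eq_mul, ← ha, ← hb, ← hc, ← hd,
      ← ha', ← hb', ← hc', ← hd', Fin.isValue] <;> rw [div_mul_eq_mul_div, eq_div_iff hN]
  · linear_combination (-b') * e2
  · linear_combination b' * e1 * (-1) + a' * e0
  · linear_combination (-d') * e2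
  · linear_combination (-d') * e1 + c' * e0

theorem group_prod_eq_one {P K : Type*} [Group P] [CommMonoid K] (r : ℕ) (hr : 3 ≤ r)
    (f w : P) (hford : orderOf f = r) (hww : w * w = 1) (hfw : f * w * f * w = 1)
    (G : Subgroup P) [Fintype G]
    (hG : G = Subgroup.zpowers f ∨ G = Subgroup.closure {f, w}) (φ : P → K)
    (h1 : ∏ k ∈ Finset.range r, φ (f ^ k) = 1)
    (h2 : ∏ k ∈ Finset.range r, φ (f ^ k * w) = 1) :
    ∏ σ : G, φ σ = 1 := by
  classical
  have hfin : 0 < orderOf f := by omega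
  have hzp : ∀ x, x ∈ Subgroup.zpowers f ↔ x ∈ (Finset.range r).image (fun k => f ^ k) := by
    intro x
    rw [← hford]
    exact (orderOf_pos_iff.1 hfin).mem_zpowers_iff_mem_range_orderOf
  have hinj : Set.InjOn (fun k => f ^ k) (Finset.range r : Set ℕ) := by
    intro i hi j hj hij
    simp only [Finset.coe_range, Set.mem_Iio] at hi hj
    exact pow_injOn_Iio_orderOf (by simpa [hford] using hi) (by simpa [hford] using hj) hij
  have hwinv : w⁻¹ = w := inv_eq_of_mul_eq_one_right hww
  have hsum : ∀ S : Finset P, (∀ x, x ∈ S ↔ x ∈ G) → ∏ σ : G, φ σ = ∏ σ ∈ S, φ σ := by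
    intro S hS
    exact (Finset.prod_subtype S hS φ).symm
  rcases hG with hG | hG
  · rw [hsum ((Finset.range r).image (fun k => f ^ k)) (by intro x; rw [hG, hzp]),
      Finset.prod_image hinj, h1]
  · have hconj : w * f * w⁻¹ = f⁻¹ := by
      rw [hwinv, eq_inv_iff_mul_eq_one]
      have : w * f * w * f = f⁻¹ * (f * w * f * w) * f := by group
      rw [this, hfw]; group
    have hsc : ∀ n : ℤ, w * f ^ n = f ^ (-n) * w := by
      intro n
      have : w * f ^ n * w⁻¹ = f ^ (-n) := by
        rw [← conj_zpow, hconj, inv_zpow, zpow_neg]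
      rw [← this]; group
    have hmem : ∀ x, x ∈ G ↔ x ∈ Subgroup.zpowers f ∨ x * w ∈ Subgroup.zpowers f := by
      intro x
      rw [hG]
      have hfm : f ∈ Subgroup.closure {f, w} := Subgroup.subset_closure (by simp)
      have hwm : w ∈ Subgroup.closure {f, w} := Subgroup.subset_closure (by simp)
      have hle : Subgroup.zpowers f ≤ Subgroup.closure {f, w} := by
        rw [Subgroup.zpowers_le]; exact hfm
      constructor
      · intro hx
        suffices H : ∃ n : ℤ, x = f ^ n ∨ x = f ^ n * w by
          obtain ⟨n, rfl | rfl⟩ := H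
          · left; exact ⟨n, rfl⟩
          · right; refine ⟨n, ?_⟩
            simp [mul_assoc, hww]
        induction hx using Subgroup.closure_induction with
        | mem x hx =>
          rcases hx with rfl | rfl
          · exact ⟨1, Or.inl (by simp)⟩
          · exact ⟨0, Or.inr (by simp)⟩
        | one => exact ⟨0, Or.inl (by simp)⟩
        | mul x y _ _ hx hy =>
          obtain ⟨n, rfl | rfl⟩ := hx <;> obtain ⟨m, rfl | rfl⟩ := hy
          · exact ⟨n + m, Or.inl (zpow_add _ _ _).symm⟩
          · exact ⟨n + m, Or.inr (by rw [zpow_add, mul_assoc])⟩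
          · exact ⟨n + -m, Or.inr (by rw [zpow_add, mul_assoc, hsc, mul_assoc])⟩
          · refine ⟨n + -m, Or.inl ?_⟩
            rw [mul_assoc, ← mul_assoc w, hsc, mul_assoc _ w w, hww, mul_one, zpow_add]
        | inv x _ hx =>
          obtain ⟨n, rfl | rfl⟩ := hx
          · exact ⟨-n, Or.inl (by simp)⟩
          · refine ⟨n, Or.inr ?_⟩
            rw [mul_inv_rev, hwinv, ← zpow_neg, hsc, neg_neg]
      · rintro (h | h)
        · exact hle h
        · have := mul_mem (hle h) hwm
          rwa [mul_assoc, hww, mul_one] at this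
    have hwn : w ∉ Subgroup.zpowers f := by
      rintro ⟨n, hn⟩
      have hn : f ^ n = w := hn
      have hcomm : w * f = f * w := by
        rw [← hn]; exact (Commute.self_zpow f n).symm.eq
      have : f ^ 2 = 1 := by
        rw [mul_assoc f w f, hcomm, ← mul_assoc, mul_assoc, hww, mul_one] at hfw
        rw [pow_two, hfw]
      have := orderOf_dvd_of_pow_eq_one this
      have := Nat.le_of_dvd (by norm_num) this
      omega
    have hS : ∀ x, x ∈ (Finset.range r).image (fun k => f ^ k) ∪
        (Finset.range r).image (fun k => f ^ k * w) ↔ x ∈ G := by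
      intro x
      rw [Finset.mem_union, hmem, ← hzp, hzp (x * w)]
      refine or_congr Iff.rfl ?_
      simp only [Finset.mem_image]
      refine exists_congr fun k => and_congr_right fun _ => ?_
      constructor
      · rintro rfl; simp [mul_assoc, hww]
      · intro h; simp [h, mul_assoc, hww]
    rw [hsum _ hS, Finset.prod_union, Finset.prod_image hinj, Finset.prod_image, h1, h2, one_mul]
    · intro i hi j hj hij
      exact hinj hi hj (mul_right_cancel hij)
    · rw [Finset.disjoint_left]
      intro x hx hx2
      rw [← hzp] at hx
      obtain ⟨k, _, rfl⟩ := Finset.mem_image.1 hx2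
      exact hwn ((Subgroup.mul_mem_cancel_left _ (Subgroup.npow_mem_zpowers f k)).1 hx)

/-- Representative of the powers of `f` (with `q = ζ⁻¹ ^ k`). -/
noncomputable def powMat (ζ q : ℂ) (h1 : ζ ≠ 0) (h2 : ζ ^ 2 ≠ 1) (hq : q ≠ 0) :
    Matrix.GeneralLinearGroup (Fin 2) ℂ :=
  Matrix.GeneralLinearGroup.mkOfDetNeZero
    !![ζ - ζ⁻¹ * q, q - 1; 1 - q, ζ * q - ζ⁻¹] (by
      rw [Matrix.det_fin_two_of]
      have : (ζ - ζ⁻¹ * q) * (ζ * q - ζ⁻¹) - (q - 1) * (1 - q) = q * (ζ⁻¹ * (ζ ^ 2 - 1)) ^ 2 := by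
        field_simp; ring
      rw [this]
      exact mul_ne_zero hq (pow_ne_zero _ (mul_ne_zero (inv_ne_zero h1) (sub_ne_zero.2 h2))))

theorem powMat_val (ζ q : ℂ) (h1 : ζ ≠ 0) (h2 : ζ ^ 2 ≠ 1) (hq : q ≠ 0) :
    (powMat ζ q h1 h2 hq).val = !![ζ - ζ⁻¹ * q, q - 1; 1 - q, ζ * q - ζ⁻¹] := rfl

/-- Representative of `z ↦ 1/z`. -/
noncomputable def swapMat : Matrix.GeneralLinearGroup (Fin 2) ℂ :=
  Matrix.GeneralLinearGroup.mkOfDetNeZero !![0, 1; 1, 0] (by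
    rw [Matrix.det_fin_two_of]; norm_num)

theorem swapMat_val : swapMat.val = !![0, 1; 1, 0] := rfl

theorem pow_eq (ζ : ℂ) (h1 : ζ ≠ 0) (h2 : ζ ^ 2 ≠ 1) (k : ℕ) :
    (QuotientGroup.mk (powMat ζ ζ⁻¹ h1 h2 (inv_ne_zero h1)) : PGL2 ℂ) ^ k =
      QuotientGroup.mk (powMat ζ (ζ⁻¹ ^ k) h1 h2 (pow_ne_zero _ (inv_ne_zero h1))) := by
  induction k with
  | zero =>
    rw [pow_zero, ← QuotientGroup.mk_one]
    apply PGL2.mk_eq_of_smul _ _ (ζ - ζ⁻¹)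
    rw [powMat_val]
    ext i j
    fin_cases i <;> fin_cases j <;> simp
  | succ n ih =>
    rw [pow_succ, ih, ← QuotientGroup.mk_mul]
    symm
    apply PGL2.mk_eq_of_smul _ _ (ζ - ζ⁻¹)
    rw [Units.val_mul, powMat_val, powMat_val, powMat_val, pow_succ]
    generalize ζ⁻¹ ^ n = q
    ext i j
    fin_cases i <;> fin_cases j <;> simp <;> field_simp <;> ring

theorem tele (ζ : ℂ) (h1 : ζ ≠ 0) (r : ℕ) (hz : ζ ^ r = 1) (hz1 : ζ + 1 ≠ 0) (x : RatFunc ℂ)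
    (hx : ∀ k : ℕ, RatFunc.C (1 - ζ⁻¹ ^ k) * x + RatFunc.C (ζ * ζ⁻¹ ^ k - ζ⁻¹) ≠ 0) (φ : ℕ → RatFunc ℂ)
    (hφ : ∀ k, φ k = (RatFunc.C (ζ - ζ⁻¹ * ζ⁻¹ ^ k) * x + RatFunc.C (ζ⁻¹ ^ k - 1)) /
      (RatFunc.C (1 - ζ⁻¹ ^ k) * x + RatFunc.C (ζ * ζ⁻¹ ^ k - ζ⁻¹))) :
    ∏ k ∈ Finset.range r, φ k = 1 ∧
    ∏ k ∈ Finset.range r, ((φ k + 1) / RatFunc.C (ζ + 1)) = 1 := by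
  set D : ℕ → RatFunc ℂ :=
    fun k => RatFunc.C (1 - ζ⁻¹ ^ k) * x + RatFunc.C (ζ * ζ⁻¹ ^ k - ζ⁻¹) with hD
  have hD0 : ∀ k, D k ≠ 0 := hx
  have hper : ∀ k, D (k + r) = D k := by
    intro k
    simp only [hD, pow_add, inv_pow ζ r, hz, inv_one, mul_one]
  have htel : ∀ n, ∏ k ∈ Finset.range n, (D (k + 1) / D k) = D n / D 0 := by
    intro n
    induction n with
    | zero => simp [hD0]
    | succ n ih =>
      rw [Finset.prod_range_succ, ih]
      have := hD0 n
      have := hD0 0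
      field_simp
  have htel2 : ∀ n, ∏ k ∈ Finset.range n, (D (k + 1 + 1) / D (k + 1)) = D (n + 1) / D 1 := by
    intro n
    induction n with
    | zero => simp [hD0]
    | succ n ih =>
      rw [Finset.prod_range_succ, ih]
      have := hD0 (n + 1)
      have := hD0 1
      field_simp
  have t1 : ∏ k ∈ Finset.range r, (D (k + 1) / D k) = 1 := by
    have := hper 0
    rw [zero_add] at this
    rw [htel, this, div_self (hD0 0)]
  have t2 : ∏ k ∈ Finset.range r, (D (k + 1 + 1) / D (k + 1)) = 1 := by
    have := hper 1
    rw [add_comm] at this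
    rw [htel2, this, div_self (hD0 1)]
  have hC : (RatFunc.C (ζ + 1) : RatFunc ℂ) ≠ 0 := by simpa only [ne_eq, map_eq_zero] using hz1
  have hCz : (RatFunc.C ζ : RatFunc ℂ) ≠ 0 := by simpa only [ne_eq, map_eq_zero] using h1
  constructor
  · have : ∀ k, φ k = RatFunc.C ζ * ((D (k + 1) / D k) * (D (k + 1 + 1) / D (k + 1))) := by
      intro k
      have e1 := hD0 k
      have e2 := hD0 (k + 1)
      rw [hφ]
      change _ / D k = _
      have : RatFunc.C (ζ - ζ⁻¹ * ζ⁻¹ ^ k) * x + RatFunc.C (ζ⁻¹ ^ k - 1) =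
          RatFunc.C ζ * D (k + 1 + 1) := by
        simp only [hD, pow_succ, map_sub, map_mul, map_pow, map_one, map_inv₀]
        generalize (RatFunc.C ζ)⁻¹ ^ k = q
        field_simp
      rw [this]
      field_simp
    simp only [this, Finset.prod_mul_distrib, t1, t2, Finset.prod_const, Finset.card_range,
      ← map_pow, hz, map_one, mul_one]
  · refine Eq.trans ?_ t1
    refine Finset.prod_congr rfl fun k _ => ?_
    have e1 := hD0 k
    rw [hφ]
    change (_ / D k + 1) / _ = _
    have : RatFunc.C (ζ - ζ⁻¹ * ζ⁻¹ ^ k) * x + RatFunc.C (ζ⁻¹ ^ k - 1) + D k =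
        RatFunc.C (ζ + 1) * D (k + 1) := by
      simp only [hD, pow_succ, map_sub, map_add, map_mul, map_pow, map_one, map_inv₀]
      generalize (RatFunc.C ζ)⁻¹ ^ k = q
      field_simp
      ring
    rw [div_add_one e1, this]
    field_simp

/-- Let `r ≥ 3`, let `ζ` be a primitive `r`-th root of unity, and let `f ∈ PGL₂(ℂ)` be the
homography `z ↦ ((ζ + ζ⁻¹ + 1) z - 1)/(z + 1)`, an element of order `r`.  Let `G = ⟨f⟩`
(cyclic of order `r`) or `G = ⟨f, z ↦ 1/z⟩` (dihedral of order `2r`).  Then the identities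
`∏_{σ ∈ G} σ(z) = 1` and `∏_{σ ∈ G} (σ(z) + 1) = (ζ + 1)^#G` hold in `ℂ(z)`. -/
theorem prod_orbit_identities
    (r : ℕ) (hr : 3 ≤ r) (ζ : ℂ) (hζ : IsPrimitiveRoot ζ r)
    (f w : PGL2 ℂ)
    (hf : PGL2.toRatFunc f =
      (RatFunc.C (ζ + ζ⁻¹ + 1) * RatFunc.X - 1) / (RatFunc.X + 1))
    (hford : orderOf f = r)
    (hw : PGL2.toRatFunc w = 1 / RatFunc.X)
    (G : Subgroup (PGL2 ℂ)) [Fintype G]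
    (hG : G = Subgroup.zpowers f ∨ G = Subgroup.closure {f, w}) :
    (∏ σ : G, PGL2.toRatFunc (σ : PGL2 ℂ)) = 1 ∧
      (∏ σ : G, (PGL2.toRatFunc (σ : PGL2 ℂ) + 1)) =
        RatFunc.C ((ζ + 1) ^ (Nat.card G)) := by
  have h1 : ζ ≠ 0 := hζ.ne_zero (by omega)
  have h2 : ζ ^ 2 ≠ 1 := hζ.pow_ne_one_of_pos_of_lt (by norm_num) (by omega)
  have hz1 : ζ + 1 ≠ 0 := by
    intro h
    apply h2
    linear_combination (ζ - 1) * h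
  have h3 : 1 - ζ⁻¹ ≠ 0 := by
    intro h
    apply h2
    have : ζ⁻¹ = 1 := by linear_combination -h
    rw [inv_eq_one.1 this]; norm_num
  have hfe : f = QuotientGroup.mk (powMat ζ ζ⁻¹ h1 h2 (inv_ne_zero h1)) := by
    apply PGL2.toRatFunc_inj
    rw [hf, PGL2.toRatFunc_mk, powMat_val]
    have hC : (RatFunc.C (1 - ζ⁻¹) : RatFunc ℂ) ≠ 0 := by
      simpa only [ne_eq, map_eq_zero] using h3
    rw [← mul_div_mul_left _ _ hC]
    have hCz : (RatFunc.C ζ : RatFunc ℂ) ≠ 0 := by simpa only [ne_eq, map_eq_zero] using h1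
    congr 1
    · simp [-map_eq_zero]
      field_simp
      ring
    · simp [-map_eq_zero]
      field_simp
  have hwe : w = QuotientGroup.mk swapMat := by
    apply PGL2.toRatFunc_inj
    rw [hw, PGL2.toRatFunc_mk, swapMat_val]
    simp
  have hww : w * w = 1 := by
    rw [hwe, ← QuotientGroup.mk_mul, ← QuotientGroup.mk_one]
    apply congrArg
    apply Units.ext
    rw [Units.val_mul, swapMat_val]
    ext i j
    fin_cases i <;> fin_cases j <;> simp
  have hfw : f * w * f * w = 1 := by
    rw [hwe, hfe, ← QuotientGroup.mk_mul, ← QuotientGroup.mk_mul, ← QuotientGroup.mk_mul,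
      ← QuotientGroup.mk_one]
    symm
    apply PGL2.mk_eq_of_smul _ _ (ζ⁻¹ * (ζ - ζ⁻¹) ^ 2)
    rw [Units.val_mul, Units.val_mul, Units.val_mul, swapMat_val, powMat_val]
    ext i j
    fin_cases i <;> fin_cases j <;> simp <;> field_simp <;> ring
  have hrow : ∀ k : ℕ, 1 - ζ⁻¹ ^ k ≠ 0 ∨ ζ * ζ⁻¹ ^ k - ζ⁻¹ ≠ 0 := fun k =>
    gl2_row_ne (powMat ζ (ζ⁻¹ ^ k) h1 h2 (pow_ne_zero _ (inv_ne_zero h1)))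
  have hX : (RatFunc.X : RatFunc ℂ) ≠ 0 := RatFunc.X_ne_zero
  obtain ⟨a1, a2⟩ := tele ζ h1 r hζ.pow_eq_one hz1 RatFunc.X
    (fun k => ratFunc_lin_ne_zero (hrow k)) (fun k => PGL2.toRatFunc (f ^ k)) (by
      intro k
      rw [hfe, pow_eq, PGL2.toRatFunc_mk, powMat_val]
      rfl)
  obtain ⟨b1, b2⟩ := tele ζ h1 r hζ.pow_eq_one hz1 RatFunc.X⁻¹
    (by
      intro k hk
      apply ratFunc_lin_ne_zero (hrow k).symm
      rw [← zero_mul RatFunc.X, ← hk, add_mul, mul_assoc, inv_mul_cancel₀ hX]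
      ring) (fun k => PGL2.toRatFunc (f ^ k * w)) (by
      intro k
      have e : (powMat ζ (ζ⁻¹ ^ k) h1 h2 (pow_ne_zero _ (inv_ne_zero h1)) * swapMat).val =
          !![ζ⁻¹ ^ k - 1, ζ - ζ⁻¹ * ζ⁻¹ ^ k; ζ * ζ⁻¹ ^ k - ζ⁻¹, 1 - ζ⁻¹ ^ k] := by
        rw [Units.val_mul, swapMat_val, powMat_val]
        ext i j
        fin_cases i <;> fin_cases j <;> simp
      rw [hfe, pow_eq, hwe, ← QuotientGroup.mk_mul, PGL2.toRatFunc_mk, e]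
      rw [← mul_div_mul_right (_ + _) (RatFunc.C (1 - ζ⁻¹ ^ k) * _ + _) hX, add_mul, add_mul,
        mul_assoc, mul_assoc, inv_mul_cancel₀ hX, mul_one, mul_one, add_comm,
        add_comm (RatFunc.C (1 - ζ⁻¹ ^ k))]
      rw [add_comm (RatFunc.C (ζ - ζ⁻¹ * ζ⁻¹ ^ k))]
      rw [add_comm]
      rfl)
  refine ⟨group_prod_eq_one r hr f w hford hww hfw G hG _ a1 b1, ?_⟩
  have key := group_prod_eq_one r hr f w hford hww hfw G hG
    (fun σ => (PGL2.toRatFunc σ + 1) / RatFunc.C (ζ + 1)) a2 b2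
  have hC : (RatFunc.C (ζ + 1) : RatFunc ℂ) ≠ 0 := by simpa only [ne_eq, map_eq_zero] using hz1
  rw [Finset.prod_div_distrib, Finset.prod_const, div_eq_one_iff_eq (pow_ne_zero _ hC)] at key
  rw [key, map_pow, Nat.card_eq_fintype_card, Finset.card_univ]
end

section
/- Let (α,β) and (γ,δ) be two distinct pairs of integers with α ≥ 1, γ ≥ 1, gcd(α,β) = 1 and gcd(γ,δ) = 1. Let K be a number field and let x be an element of its ring of integers O_K. Then the integer (αδ−βγ)/gcd(α,γ) belongs to the ideal of O_K generated by αx−β and γx−δ; equivalently, the ideal (αx−β, γx−δ) of O_K divides the principal ideal generated by (αδ−βγ)/gcd(α,γ). -/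
open NumberField

/-- **Coprimality lemma (Lemma 3.9 of the paper).**
Let `(α, β)` and `(γ, δ)` be two distinct pairs of coprime integers with `α, γ ≥ 1`, let
`K` be a number field and let `x` be an algebraic integer in `K`.  Then the integer
`(αδ - βγ)/gcd(α, γ)` belongs to the ideal of `O_K` generated by `αx - β` and `γx - δ`;
equivalently, the ideal `(αx - β, γx - δ)` divides `(αδ - βγ)/gcd(α, γ)`. -/
theorem gcd_mem_span_pair
    (α β γ δ : ℤ) (hα : 1 ≤ α) (hγ : 1 ≤ γ)
    (hαβ : IsCoprime α β) (hγδ : IsCoprime γ δ) (hne : (α, β) ≠ (γ, δ))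
    (K : Type*) [Field K] [NumberField K] (x : 𝓞 K) :
    (((α * δ - β * γ) / (Int.gcd α γ : ℤ) : ℤ) : 𝓞 K) ∈
      Ideal.span {(α : 𝓞 K) * x - (β : 𝓞 K), (γ : 𝓞 K) * x - (δ : 𝓞 K)} := by
  have hg : (Int.gcd α γ : ℤ) ≠ 0 := by
    have : Int.gcd α γ ≠ 0 := by
      rw [Ne, Int.gcd_eq_zero_iff]
      omega
    exact_mod_cast this
  obtain ⟨a, ha⟩ := Int.gcd_dvd_left α γ
  obtain ⟨c, hc⟩ := Int.gcd_dvd_right α γ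
  generalize (Int.gcd α γ : ℤ) = g at *
  have key : (α * δ - β * γ) / g = a * δ - β * c := by
    apply Int.ediv_eq_of_eq_mul_right hg
    rw [ha, hc]
    ring
  rw [key, Ideal.mem_span_pair]
  refine ⟨(c : 𝓞 K), -(a : 𝓞 K), ?_⟩
  rw [ha, hc]
  push_cast
  ring
end

section
/- Let n > 1 be an integer. There exist infinitely many pairwise non-isomorphic number fields K with the following properties: there is a positive integer y with y odd and y not divisible by 3 such that the polynomial x² + ((yⁿ−5)/2)x + 1 is irreducible over ℚ and K is its splitting field; K is a real quadratic field (degree 2, totally real); and rank_n Cl(K) ≥ 1. -/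
open Polynomial NumberField

/-- `M` contains a subgroup isomorphic to `(ℤ/nℤ)^s`, i.e. `rank_n M ≥ s`. -/
def HasZModRankGE (M : Type*) [CommGroup M] (n s : ℕ) : Prop :=
  ∃ φ : (Multiplicative (Fin s → ZMod n)) →* M, Function.Injective φ

/-- A number field (here a subfield of `ℂ`) is totally real if all of its complex
embeddings take real values. -/
def TotallyReal (K : Type*) [Field K] : Prop :=
  ∀ (φ : K →+* ℂ) (x : K), (φ x).im = 0


theorem rq_vdw (N : ℕ) (J : Type) [Finite J] : ∃ H : ℕ, ∀ C : ℕ → J, ∃ b h : ℕ, 1 ≤ h ∧ h ≤ H ∧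
    ∃ j, ∀ a ≤ N, C (b + h * a) = j := by
  classical
  obtain ⟨ι, inst, hι⟩ := Combinatorics.Line.exists_mono_in_high_dimension (Fin (N+1)) J
  refine ⟨Fintype.card ι, fun C => ?_⟩
  obtain ⟨l, c, hl⟩ := hι (fun v => C (∑ i, (v i : ℕ)))
  let s : Finset ι := Finset.univ.filter (fun i => l.idxFun i = none)
  refine ⟨∑ i ∈ sᶜ, (l 0 i : ℕ), s.card, ?_, Finset.card_le_univ _, c, fun a ha => ?_⟩
  · exact Finset.card_pos.mpr ⟨l.proper.choose, by simpa [s] using l.proper.choose_spec⟩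
  · rw [← hl ⟨a, by omega⟩]
    congr 1
    rw [← Finset.sum_add_sum_compl s, add_comm]
    congr 1
    · rw [Finset.sum_congr rfl (g := fun _ => a)]
      · simp
      · intro i hi
        simp only [s, Finset.mem_filter, Finset.mem_univ, true_and] at hi
        rw [l.apply_none _ _ hi]
    · apply Finset.sum_congr rfl
      intro i hi
      simp only [s, Finset.mem_compl, Finset.mem_filter, Finset.mem_univ, true_and] at hi
      obtain ⟨v, hv⟩ := Option.ne_none_iff_exists'.mp hi
      simp [hv]

theorem rq_fd (m : ℕ) (b d : ℝ) (hd : d ≠ 0) :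
    ∑ k ∈ Finset.range (m+1), (((-1 : ℤ) ^ (m - k) * (m.choose k : ℤ) : ℤ) : ℝ) * (b + d * k) ^ m
      = (m.factorial : ℝ) * d ^ m := by
  have h1 := fwdDiff_iter_eq_sum_shift (1:ℝ) (fun r : ℝ => r ^ m) m (b / d)
  rw [fwdDiff_iter_eq_factorial] at h1
  have h2 : (m.factorial : ℝ) = ∑ k ∈ Finset.range (m+1), (((-1 : ℤ) ^ (m - k) * (m.choose k : ℤ) : ℤ) : ℝ) * (b / d + k) ^ m := by
    simpa using h1
  rw [h2, Finset.sum_mul]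
  apply Finset.sum_congr rfl
  intro k _
  rw [mul_assoc, ← mul_pow]
  congr 2
  field_simp

theorem rq_fd0 (m : ℕ) (hm : 1 ≤ m) :
    ∑ k ∈ Finset.range (m+1), (((-1 : ℤ) ^ (m - k) * (m.choose k : ℤ) : ℤ) : ℝ) = 0 := by
  have h1 := fwdDiff_iter_eq_sum_shift (1:ℝ) (fun r : ℝ => r ^ 0) m 0
  rw [fwdDiff_iter_pow_eq_zero_of_lt (by omega)] at h1
  simpa using h1.symm

theorem rq_avoid (J : Type) [Finite J] (c e : J → ℝ) (m : J → ℕ) (hc : ∀ j, Irrational (c j))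
    (hm : ∀ j, 1 ≤ m j) (E : ℝ) (hE : 0 < E) (Y0 : ℕ) :
    ∃ y : ℕ, Y0 ≤ y ∧ y % 6 = 1 ∧ ∀ j, ∀ T : ℤ, E / y < |(T : ℝ) - (c j * (y : ℝ) ^ (m j) + e j)| := by
  classical
  by_contra hcon
  push Not at hcon
  have := Fintype.ofFinite J
  let N := ∑ j, m j
  have hN : ∀ j, m j ≤ N := fun j => Finset.single_le_sum (fun _ _ => Nat.zero_le _) (Finset.mem_univ j)
  obtain ⟨H, hH⟩ := rq_vdw N J
  have hdist : ∃ δ : ℝ, 0 < δ ∧ ∀ j, ∀ h ∈ Finset.Icc 1 H, ∀ z : ℤ,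
      δ ≤ |(c j * ((m j).factorial * (6 * h : ℝ) ^ (m j))) - z| := by
    have key : ∀ q : J × ℕ, ∃ δ : ℝ, 0 < δ ∧ (1 ≤ q.2 → ∀ z : ℤ,
      δ ≤ |(c q.1 * ((m q.1).factorial * (6 * q.2 : ℝ) ^ (m q.1))) - z|) := by
      intro q
      by_cases h : 1 ≤ q.2
      · have hirr : Irrational (c q.1 * ((m q.1).factorial * (6 * q.2 : ℝ) ^ (m q.1))) := by
          have h2 : ((m q.1).factorial * (6 * q.2) ^ (m q.1) : ℕ) ≠ 0 := by positivity
          have := (hc q.1).mul_natCast h2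
          push_cast at this
          exact this
        set x := (c q.1 * ((m q.1).factorial * (6 * q.2 : ℝ) ^ (m q.1))) with hx
        refine ⟨|x - round x|, abs_pos.mpr (sub_ne_zero.mpr (hirr.ne_int _)), fun _ z => round_le x z⟩
      · exact ⟨1, one_pos, fun h' => absurd h' h⟩
    choose δ hδ hδ2 using key
    by_cases hne : ((Finset.univ : Finset J) ×ˢ Finset.Icc 1 H).Nonempty
    · obtain ⟨q, hq, hq2⟩ := Finset.exists_min_image _ δ hne
      refine ⟨δ q, hδ q, fun j h hh z => (hq2 (j, h) (by simpa using hh)).trans (hδ2 (j,h) (Finset.mem_Icc.mp hh).1 z)⟩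
    · refine ⟨1, one_pos, fun j h hh z => absurd ⟨(j,h), by simpa using hh⟩ hne⟩
  obtain ⟨δ, hδ, hδ2⟩ := hdist
  obtain ⟨R, hR⟩ := exists_nat_gt (2 ^ N * E / δ)
  let Y := 6 * (Y0 + R) + 1
  have hbad : ∀ t : ℕ, ∃ j, ∃ T : ℤ, |(T : ℝ) - (c j * ((Y + 6 * t : ℕ) : ℝ) ^ (m j) + e j)| ≤ E / (Y + 6 * t : ℕ) :=
    fun t => hcon (Y + 6 * t) (by omega) (by omega)
  choose C T hT using hbad
  obtain ⟨b, h, h1, h2, j, hj⟩ := hH C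
  have hm1 := hm j
  have hYpos : (0:ℝ) < Y := by positivity
  have hb : ∀ a ≤ m j, |(T (b + h * a) : ℝ) - (c j * (((Y + 6 * b : ℕ) : ℝ) + (6 * h : ℝ) * a) ^ (m j) + e j)| ≤ E / Y := by
    intro a ha
    have := hT (b + h * a)
    rw [hj a (ha.trans (hN j))] at this
    push_cast at this ⊢
    rw [show (Y:ℝ) + 6 * b + 6 * h * a = Y + 6 * (b + h * a) by ring]
    refine this.trans ?_
    apply div_le_div_of_nonneg_left hE.le hYpos
    have : (0:ℝ) ≤ 6 * (b + h * a) := by positivity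
    linarith
  let M := m j
  let co : ℕ → ℤ := fun k => (-1 : ℤ) ^ (M - k) * (M.choose k : ℤ)
  let Z : ℤ := ∑ k ∈ Finset.range (M+1), co k * T (b + h * k)
  have e1 : (Z : ℝ) - c j * (M.factorial * (6 * h : ℝ) ^ M) =
     ∑ k ∈ Finset.range (M+1), (co k : ℝ) * ((T (b + h * k) : ℝ) - (c j * (((Y + 6 * b : ℕ) : ℝ) + (6 * h : ℝ) * k) ^ M + e j)) := by
    have hh : (6 * h : ℝ) ≠ 0 := by positivity
    rw [← rq_fd M ((Y + 6 * b : ℕ) : ℝ) (6 * h) hh]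
    have e0 := rq_fd0 M hm1
    have : ∑ k ∈ Finset.range (M+1), (co k : ℝ) * e j = 0 := by
      rw [← Finset.sum_mul]
      have : ∑ k ∈ Finset.range (M+1), (co k : ℝ) = 0 := e0
      rw [this, zero_mul]
    simp only [mul_sub, mul_add, Finset.sum_sub_distrib, Finset.sum_add_distrib, this, add_zero]
    simp only [Z]
    push_cast
    congr 1
    rw [Finset.mul_sum]
    apply Finset.sum_congr rfl
    intro k _
    simp only [co]
    push_cast
    ring
  have e2 : |(Z : ℝ) - c j * (M.factorial * (6 * h : ℝ) ^ M)| ≤ 2 ^ M * (E / Y) := by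
    rw [e1]
    refine (Finset.abs_sum_le_sum_abs _ _).trans ?_
    have : ∀ k ∈ Finset.range (M+1), |(co k : ℝ) * ((T (b + h * k) : ℝ) - (c j * (((Y + 6 * b : ℕ) : ℝ) + (6 * h : ℝ) * k) ^ M + e j))| ≤ (M.choose k : ℝ) * (E / Y) := by
      intro k hk
      rw [abs_mul]
      have hco : |(co k : ℝ)| = M.choose k := by
        simp [co, abs_mul, abs_pow]
      rw [hco]
      exact mul_le_mul_of_nonneg_left (hb k (by have := Finset.mem_range.mp hk; omega)) (by positivity)
    refine (Finset.sum_le_sum this).trans ?_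
    rw [← Finset.sum_mul]
    have := Nat.sum_range_choose M
    have h3 : ∑ k ∈ Finset.range (M+1), (M.choose k : ℝ) = 2 ^ M := by exact_mod_cast this
    rw [h3]
  have e3 := hδ2 j h (Finset.mem_Icc.mpr ⟨h1, h2⟩) Z
  rw [abs_sub_comm] at e3
  have e4 : (2:ℝ) ^ M * (E / Y) ≤ 2 ^ N * (E / Y) :=
    mul_le_mul_of_nonneg_right (pow_le_pow_right₀ (by norm_num) (hN j)) (by positivity)
  have e5 : (2:ℝ) ^ N * (E / Y) < δ := by
    rw [← mul_div_assoc, div_lt_iff₀ hYpos]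
    rw [div_lt_iff₀ hδ] at hR
    have : (R:ℝ) ≤ Y := by
      have : R ≤ Y := by omega
      exact_mod_cast this
    nlinarith
  linarith [e3.trans (e2.trans e4)]

theorem rq_irr (p k : ℕ) (hp : p.Prime) (hk : 1 ≤ k) (hkp : k < p) (c : ℝ)
    (hcp : c ^ p * 2 ^ k = 1) : Irrational c := by
  rintro ⟨q, rfl⟩
  have h : q ^ p * 2 ^ k = 1 := by exact_mod_cast hcp
  have hq : q ≠ 0 := by
    rintro rfl
    simp [hp.ne_zero] at h
  have : Fact (Nat.Prime 2) := ⟨Nat.prime_two⟩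
  have h2 := congrArg (padicValRat 2) h
  rw [padicValRat.mul (pow_ne_zero _ hq) (by positivity), padicValRat.pow, padicValRat.pow] at h2
  have h3 : padicValRat 2 (2:ℚ) = 1 := by
    have := padicValRat.self (p := 2) (by norm_num)
    exact_mod_cast this
  rw [h3] at h2
  simp at h2
  have : (p : ℤ) ∣ k := ⟨-padicValRat 2 q, by linarith⟩
  have := Nat.le_of_dvd (by omega) (Int.natCast_dvd_natCast.mp this)
  omega

theorem rq_xb (s x : ℝ) (hs : 100 ≤ s) (hx : 1 < x) (h : x + x⁻¹ = (s - 5) / 2) :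
    s / 2 - 4 ≤ x ∧ 2 + x ≤ s / 2 ∧ s / 4 ≤ x ∧ 0 < x⁻¹ ∧ x⁻¹ ≤ 4 / s := by
  have h0 : 0 < x⁻¹ := by positivity
  have h1 : x⁻¹ < 1 := inv_lt_one_of_one_lt₀ hx
  have h4 : s / 4 ≤ x := by linarith
  refine ⟨by linarith, by linarith, h4, h0, ?_⟩
  rw [inv_le_comm₀ (by linarith) (by positivity), inv_div]
  exact h4

theorem rq_u (p k : ℕ) (hk : 1 ≤ k) (hkp : k < p) (c w u : ℝ) (hc : 0 < c)
    (hcp : c ^ p * 2 ^ k = 1) (hw : 100 ≤ w) (hu : 0 < u)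
    (h1 : (w ^ p / 2 - 4) ^ k ≤ u ^ p) (h2 : u ^ p ≤ (w ^ p / 2) ^ k) :
    |u - c * w ^ k| ≤ 8 / w := by
  have hp : p ≠ 0 := by omega
  have hws : w ≤ w ^ p := le_self_pow₀ (by linarith) hp
  have hs : 100 ≤ w ^ p := by linarith
  have hcw : (c * w ^ k) ^ p = (w ^ p / 2) ^ k := by
    have : c ^ p = 1 / 2 ^ k := by
      rw [eq_div_iff (by positivity)]; exact hcp
    rw [mul_pow, this, div_pow, ← pow_mul, ← pow_mul, mul_comm k p]
    ring
  have hcwpos : 0 < c * w ^ k := by positivity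
  have hup : u ≤ c * w ^ k := by
    rw [← pow_le_pow_iff_left₀ hu.le hcwpos.le hp, hcw]; exact h2
  have ha0 : 0 ≤ 1 - 8 / w ^ p := by
    rw [sub_nonneg, div_le_one (by positivity)]; linarith
  have ha1 : 1 - 8 / w ^ p ≤ 1 := by
    have : 0 ≤ 8 / w ^ p := by positivity
    linarith
  have hlo : c * w ^ k * (1 - 8 / w ^ p) ≤ u := by
    rw [← pow_le_pow_iff_left₀ (by positivity) hu.le hp, mul_pow, hcw]
    refine le_trans ?_ h1
    calc (w ^ p / 2) ^ k * (1 - 8 / w ^ p) ^ p ≤ (w ^ p / 2) ^ k * (1 - 8 / w ^ p) ^ k :=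
          mul_le_mul_of_nonneg_left (pow_le_pow_of_le_one ha0 ha1 hkp.le) (by positivity)
      _ = (w ^ p / 2 - 4) ^ k := by
          rw [← mul_pow]
          congr 1
          field_simp
          ring
  have hc1 : c ≤ 1 := by
    by_contra hc1
    push Not at hc1
    have : 1 ≤ c ^ p := one_le_pow₀ hc1.le
    have : (2:ℝ) ≤ 2 ^ k := le_self_pow₀ (by norm_num) (by omega)
    nlinarith
  have hwk : w ^ k * w ≤ w ^ p := by
    rw [← pow_succ]
    exact pow_le_pow_right₀ (by linarith) (by omega)
  have hfin : c * w ^ k * (8 / w ^ p) ≤ 8 / w := by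
    rw [mul_div_assoc', div_le_div_iff₀ (by positivity) (by linarith)]
    have : c * w ^ k ≤ w ^ k := by
      have : 0 ≤ w ^ k := by positivity
      nlinarith
    nlinarith
  rw [abs_le]
  constructor <;> nlinarith [show 0 ≤ 8 / w by positivity]

theorem rq_v (p : ℕ) (hp : p ≠ 0) (w v : ℝ) (hw : 100 ≤ w) (hv : 0 < v) 
    (h : v ^ p ≤ 12 / w ^ p) : v ≤ 12 / w := by
  rw [← pow_le_pow_iff_left₀ hv.le (by positivity) hp, div_pow]
  refine h.trans ?_
  exact div_le_div_of_nonneg_right (le_self_pow₀ (by norm_num) hp) (by positivity)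

theorem rq_C (p : ℕ) (hp : 2 ≤ p) (w : ℤ) (hw : 100 ≤ w) (x u v δ : ℝ) (T : ℤ) (hx : 1 < x)
    (h : x + x⁻¹ = ((w:ℝ) ^ p - 5) / 2) (hu : 0 < u) (hv : 0 < v) (hδ : δ = 1 ∨ δ = -1)
    (hT : u + δ * v = T) (h1 : u ^ p = 1 + 2 * x) (h2 : v ^ p = 1 + 2 * x⁻¹) : False := by
  have hp0 : p ≠ 0 := by omega
  have hw' : (100:ℝ) ≤ w := by exact_mod_cast hw
  have hws : (w:ℝ) ≤ (w:ℝ) ^ p := le_self_pow₀ (by linarith) hp0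
  obtain ⟨b1, b2, b3, b4, b5⟩ := rq_xb _ x (hw'.trans hws) hx h
  obtain ⟨r, rfl⟩ : ∃ r, p = r + 1 := ⟨p - 1, by omega⟩
  have hwr : (w:ℝ) ≤ (w:ℝ)^r := le_self_pow₀ (by linarith) (by omega)
  have hsr : (w:ℝ)^(r+1) = (w:ℝ)^r * w := pow_succ _ _
  have hulo : (w:ℝ) - 1/2 < u := by
    rw [← pow_lt_pow_iff_left₀ (by linarith) hu.le hp0, h1, pow_succ]
    have : ((w:ℝ) - 1/2) ^ r ≤ (w:ℝ)^r := pow_le_pow_left₀ (by linarith) (by linarith) r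
    have h3 : ((w:ℝ) - 1/2) ^ r * (w - 1/2) ≤ (w:ℝ)^r * (w - 1/2) := mul_le_mul_of_nonneg_right this (by linarith)
    nlinarith
  have hv1 : 1 < v := by
    rw [← pow_lt_pow_iff_left₀ (by norm_num) hv.le hp0, h2, one_pow]; linarith
  have hwpos : (0:ℝ) < (w:ℝ)^(r+1) := by positivity
  have hvup : v ≤ 1 + 8 / ((r+1) * (w:ℝ)^(r+1)) := by
    rw [← pow_le_pow_iff_left₀ hv.le (by positivity) hp0, h2]
    have := one_add_mul_le_pow (a := 8 / ((r+1) * (w:ℝ)^(r+1))) (by have : 0 ≤ 8 / ((r+1) * (w:ℝ)^(r+1)) := by positivity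
                                                                    linarith) (r+1)
    refine le_trans ?_ this
    push_cast
    have : ((r:ℝ)+1) * (8 / ((r+1) * (w:ℝ)^(r+1))) = 8 / (w:ℝ)^(r+1) := by field_simp
    rw [this]
    have : 2 * (4 / (w:ℝ)^(r+1)) = 8 / (w:ℝ)^(r+1) := by ring
    linarith
  have huup : u ≤ w - 4 / ((r+1) * (w:ℝ)^r) := by
    have hz : 4 / ((r+1) * (w:ℝ)^r) ≤ 1 := by
      rw [div_le_one (by positivity)]
      have : (0:ℝ) ≤ r := by positivity
      nlinarith
    rw [← pow_le_pow_iff_left₀ hu.le (by linarith) hp0, h1]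
    have hne : (w:ℝ) ≠ 0 := by positivity
    have := one_add_mul_le_pow (a := -(4 / ((r+1) * (w:ℝ)^(r+1)))) (by
        have : 4 / ((r+1) * (w:ℝ)^(r+1)) ≤ 1 := by
          rw [div_le_one (by positivity)]
          have : (0:ℝ) ≤ r := by positivity
          nlinarith
        linarith) (r+1)
    have h5 : (w:ℝ) - 4 / ((r+1) * (w:ℝ)^r) = w * (1 + -(4 / ((r+1) * (w:ℝ)^(r+1)))) := by
      rw [hsr]; field_simp; ring
    rw [h5, mul_pow]
    refine le_trans ?_ (mul_le_mul_of_nonneg_left this hwpos.le)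
    push_cast
    have : (w:ℝ)^(r+1) * (1 + ((r:ℝ)+1) * -(4 / ((r+1) * (w:ℝ)^(r+1)))) = (w:ℝ)^(r+1) - 4 := by
      field_simp; ring
    rw [this]
    linarith
  have hcmp : 8 / ((r+1) * (w:ℝ)^(r+1)) < 4 / ((r+1) * (w:ℝ)^r) := by
    rw [div_lt_div_iff₀ (by positivity) (by positivity), hsr]
    have : (0:ℝ) < (r+1) * (w:ℝ)^r := by positivity
    nlinarith
  have hsm : 8 / ((r+1) * (w:ℝ)^(r+1)) ≤ 1/2 := by
    rw [div_le_iff₀ (by positivity)]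
    have : (0:ℝ) ≤ r := by positivity
    nlinarith
  have h40 : 0 < 4 / ((r+1) * (w:ℝ)^r) := by positivity
  rcases hδ with rfl | rfl
  · have a1 : (w:ℝ) < T := by linarith
    have a2 : (T:ℝ) < w + 1 := by linarith
    have a3 : w < T := by exact_mod_cast a1
    have a4 : T < w + 1 := by exact_mod_cast a2
    omega
  · have a1 : (w:ℝ) - 2 < T := by linarith
    have a2 : (T:ℝ) < w - 1 := by linarith
    have a3 : w - 2 < T := by exact_mod_cast a1
    have a4 : T < w - 1 := by exact_mod_cast a2
    omega

theorem rq_root (p k : ℕ) (hp : p ≠ 0) : 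
    ((2:ℝ) ^ (-(k:ℝ) / p)) ^ p * 2 ^ k = 1 := by
  rw [← Real.rpow_natCast, ← Real.rpow_mul (by norm_num), ← Real.rpow_natCast, ← Real.rpow_add (by norm_num)]
  have : (p:ℝ) ≠ 0 := by exact_mod_cast hp
  rw [div_mul_cancel₀ _ this]
  simp

/-- The good choice of `y`. -/
theorem rq_good_y (n : ℕ) (hn : 1 < n) : ∃ y : ℕ, 100 ≤ y ∧ y % 6 = 1 ∧
    ∀ p : ℕ, p.Prime → p ∣ n → ∀ x : ℝ, 1 < x → x + x⁻¹ = ((y:ℝ) ^ n - 5) / 2 →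
    ∀ u v δ : ℝ, 0 < u → 0 < v → (δ = 1 ∨ δ = -1) → ∀ T : ℤ, u + δ * v = T →
      ¬ (u ^ p = x ∧ v ^ p = x⁻¹) ∧
      (∀ i, i + 1 < p → ¬ (u ^ p = x ^ i * (2 + x) ∧ v ^ p = x⁻¹ ^ i * (2 + x⁻¹))) ∧
      ¬ (u ^ p = 1 + 2 * x ∧ v ^ p = 1 + 2 * x⁻¹) := by
  let J := {q : Fin (n+1) × Fin (n+1) × Fin 3 // (q.1 : ℕ).Prime ∧ (q.1:ℕ) ∣ n ∧ 1 ≤ (q.2.1 : ℕ) ∧ (q.2.1 : ℕ) < q.1}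
  obtain ⟨y, hy1, hy2, hy⟩ := rq_avoid J
    (fun q => (2:ℝ) ^ (-((q.1.2.1 : ℕ):ℝ) / (q.1.1 : ℕ)))
    (fun q => (((q.1.2.2 : ℕ) : ℝ) - 1) * (2:ℝ) ^ (1 / ((q.1.1 : ℕ) : ℝ)))
    (fun q => (n / q.1.1) * q.1.2.1)
    (fun q => rq_irr _ _ q.2.1 q.2.2.2.1 q.2.2.2.2 _ (rq_root _ _ q.2.1.ne_zero))
    (fun q => Nat.mul_pos (Nat.div_pos (Nat.le_of_dvd (by omega) q.2.2.1) q.2.1.pos) q.2.2.2.1)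
    20 (by norm_num) 100
  refine ⟨y, hy1, hy2, ?_⟩
  intro p hp hpn x hx hxs u v δ hu hv hδ T hT
  have hp0 := hp.ne_zero
  have hp2 := hp.two_le
  have hpn' : p ≤ n := Nat.le_of_dvd (by omega) hpn
  have hpow : (y:ℝ) ^ n = ((y:ℝ) ^ (n / p)) ^ p := by
    rw [← pow_mul, Nat.div_mul_cancel hpn]
  have hnp : n / p ≠ 0 := (Nat.div_pos hpn' hp.pos).ne'
  have hy100 : (100:ℝ) ≤ y := by exact_mod_cast hy1
  set w : ℝ := (y:ℝ) ^ (n / p) with hw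
  have hyw : (y:ℝ) ≤ w := le_self_pow₀ (by linarith) hnp
  have hw100 : 100 ≤ w := hy100.trans hyw
  rw [hpow] at hxs
  have hws : w ≤ w ^ p := le_self_pow₀ (by linarith) hp0
  obtain ⟨b1, b2, b3, b4, b5⟩ := rq_xb _ x (hw100.trans hws) hx hxs
  have key : ∀ k, 1 ≤ k → k < p → ∀ t : Fin 3,
     20 / (y:ℝ) < |(T:ℝ) - ((2:ℝ) ^ (-(k:ℝ) / p) * w ^ k + (((t:ℕ):ℝ) - 1) * (2:ℝ) ^ (1 / (p:ℝ)))| := by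
    intro k hk hkp t
    have := hy ⟨(⟨p, by omega⟩, ⟨k, by omega⟩, t), hp, hpn, hk, hkp⟩ T
    simp only [pow_mul] at this
    exact this
  have hU : ∀ k, 1 ≤ k → k < p → (w ^ p / 2 - 4) ^ k ≤ u ^ p → u ^ p ≤ (w ^ p / 2) ^ k → |u - (2:ℝ) ^ (-(k:ℝ) / p) * w ^ k| ≤ 8 / w :=
    fun k hk hkp g1 g2 => rq_u p k hk hkp _ w u (by positivity) (rq_root p k hp0) hw100 hu g1 g2
  have hdiv : ∀ a : ℝ, 0 ≤ a → a / w ≤ a / y := fun a ha =>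
    div_le_div_of_nonneg_left ha (by linarith) hyw
  have hdd : ∀ a : ℝ, |δ * a| = |a| := by
    intro a
    rcases hδ with rfl | rfl <;> simp
  have small : ∀ k, 1 ≤ k → k < p → (w ^ p / 2 - 4) ^ k ≤ u ^ p → u ^ p ≤ (w ^ p / 2) ^ k →
      v ^ p ≤ 12 / w ^ p → False := by
    intro k hk hkp g1 g2 g3
    have a1 := hU k hk hkp g1 g2
    have a2 := rq_v p hp0 w v hw100 hv g3
    have a3 := key k hk hkp 1
    simp only [Fin.val_one, Nat.cast_one, sub_self, zero_mul, add_zero] at a3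
    rw [← hT, add_sub_right_comm] at a3
    have a4 := abs_add_le (u - (2:ℝ) ^ (-(k:ℝ) / p) * w ^ k) (δ * v)
    rw [hdd, abs_of_pos hv] at a4
    have a5 := hdiv 20 (by norm_num)
    have a6 : 20 / w = 8 / w + 12 / w := by ring
    linarith
  refine ⟨?_, ?_, ?_⟩
  · rintro ⟨h1, h2⟩
    refine small 1 le_rfl (by omega) (by simpa [h1] using b1) (by rw [h1, pow_one]; linarith) ?_
    rw [h2]
    refine b5.trans (div_le_div_of_nonneg_right (by norm_num) (by positivity))
  · rintro i hi ⟨h1, h2⟩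
    have hs4 : 0 ≤ w ^ p / 2 - 4 := by linarith
    have g1 : (w ^ p / 2 - 4) ^ (i+1) ≤ u ^ p := by
      rw [h1, pow_succ]
      exact mul_le_mul (pow_le_pow_left₀ hs4 b1 i) (by linarith) hs4 (by positivity)
    have g2 : u ^ p ≤ (w ^ p / 2) ^ (i+1) := by
      rw [h1, pow_succ]
      exact mul_le_mul (pow_le_pow_left₀ (by linarith) (by linarith) i) b2 (by positivity) (by positivity)
    have hx1 : x⁻¹ < 1 := inv_lt_one_of_one_lt₀ hx
    rcases Nat.eq_zero_or_pos i with rfl | hi0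
    · skip
      have a1 := hU 1 le_rfl (by omega) g1 g2
      set r : ℝ := (2:ℝ) ^ (1 / (p:ℝ)) with hr
      have hrp : r ^ p = 2 := by
        rw [hr, ← Real.rpow_natCast, ← Real.rpow_mul (by norm_num)]
        have : (p:ℝ) ≠ 0 := by exact_mod_cast hp0
        rw [div_mul_cancel₀ _ this]; simp
      have hr0 : 0 < r := by positivity
      have hr2 : r ≤ 2 := by
        by_contra hcon
        push Not at hcon
        have := pow_lt_pow_left₀ hcon (by norm_num) hp0
        rw [hrp] at this
        have : (2:ℝ) ≤ 2 ^ p := le_self_pow₀ (by norm_num) hp0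
        linarith
      rw [pow_zero, one_mul] at h2
      have v1 : r ≤ v := by
        rw [← pow_le_pow_iff_left₀ hr0.le hv.le hp0, hrp, h2]; linarith
      have v2 : v ≤ r * (1 + x⁻¹ / 2) := by
        rw [← pow_le_pow_iff_left₀ hv.le (by positivity) hp0, mul_pow, hrp, h2]
        have : 1 + x⁻¹ / 2 ≤ (1 + x⁻¹ / 2) ^ p := le_self_pow₀ (by linarith) hp0
        linarith
      have v3 : |v - r| ≤ 12 / w := by
        have q1 : v - r ≤ 12 / w := by
          have q2 : 4 / w ^ p ≤ 4 / w := div_le_div_of_nonneg_left (by norm_num) (by linarith) hws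
          have q3 : 4 / w ≤ 12 / w := div_le_div_of_nonneg_right (by norm_num) (by linarith)
          nlinarith
        rw [abs_of_nonneg (by linarith)]
        exact q1
      have fin : ∀ t : Fin 3, ((t:ℕ):ℝ) - 1 = δ → False := by
        intro t ht
        have a3 := key 1 le_rfl (by omega) t
        rw [ht, ← hT] at a3
        have a4 := abs_add_le (u - (2:ℝ) ^ (-((1:ℕ):ℝ) / p) * w ^ 1) (δ * (v - r))
        rw [hdd, show (u - (2:ℝ) ^ (-((1:ℕ):ℝ) / p) * w ^ 1) + δ * (v - r) = u + δ * v - ((2:ℝ) ^ (-((1:ℕ):ℝ) / p) * w ^ 1 + δ * r) by ring] at a4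
        have a5 := hdiv 20 (by norm_num)
        have a6 : 20 / w = 8 / w + 12 / w := by ring
        linarith
      rcases hδ with hδ | hδ
      · exact fin 2 (by rw [hδ]; norm_num)
      · exact fin 0 (by rw [hδ]; norm_num)
    · refine small (i+1) (by omega) hi g1 g2 ?_
      rw [h2]
      have q1 : x⁻¹ ^ i ≤ x⁻¹ := pow_le_of_le_one b4.le hx1.le (by omega)
      have q2 : 12 / w ^ p = 3 * (4 / w ^ p) := by ring
      rw [q2]
      have : x⁻¹ ^ i * (2 + x⁻¹) ≤ x⁻¹ * 3 := mul_le_mul q1 (by linarith) (by positivity) b4.le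
      linarith
  · rintro ⟨h1, h2⟩
    have hwi : w = (((y:ℤ) ^ (n/p) : ℤ) : ℝ) := by push_cast; rfl
    refine rq_C p hp2 ((y:ℤ) ^ (n/p)) ?_ x u v δ T hx (by rw [← hwi]; exact hxs) hu hv hδ hT h1 h2
    rw [hwi] at hw100
    exact_mod_cast hw100

theorem rq_int {K : Type*} [Field K] [NumberField K] (σ σ' : K →+* ℝ)
    (htr : ∀ β : K, ∃ r : ℚ, σ β + σ' β = r) (γ : 𝓞 K) :
    ∃ T : ℤ, ∃ δ : ℝ, (δ = 1 ∨ δ = -1) ∧ |σ γ| + δ * |σ' γ| = T := by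
  obtain ⟨r, hr⟩ := htr γ
  have h1 : IsIntegral ℤ (σ γ) := (γ.isIntegral_coe).map (σ.toIntAlgHom)
  have h2 : IsIntegral ℤ (σ' γ) := (γ.isIntegral_coe).map (σ'.toIntAlgHom)
  have h3 := h1.add h2
  rw [hr] at h3
  have h4 : IsIntegral ℤ r := by
    have : IsIntegral ℤ (algebraMap ℚ ℝ r) := h3
    exact (isIntegral_algebraMap_iff (algebraMap ℚ ℝ).injective).mp this
  obtain ⟨T, hT⟩ := IsIntegrallyClosed.isIntegral_iff.mp h4
  have hT' : σ γ + σ' γ = T := by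
    rw [hr, ← hT]; simp
  rcases abs_choice (σ γ) with a | a <;> rcases abs_choice (σ' γ) with b | b <;> rw [a, b]
  · exact ⟨T, 1, by simp, by linarith⟩
  · exact ⟨T, -1, by simp, by linarith⟩
  · exact ⟨-T, -1, by simp, by push_cast; linarith⟩
  · exact ⟨-T, 1, by simp, by push_cast; linarith⟩

theorem rq_units {K : Type*} [Field K] [NumberField K] (σ : K →+* ℝ)
    (hrank : NumberField.Units.rank K = 1) :
    ∃ ε : (𝓞 K)ˣ, ∀ v : (𝓞 K)ˣ, ∃ a : ℤ, v = ε ^ a ∨ v = - ε ^ a := by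
  have : Unique (Fin (NumberField.Units.rank K)) := by rw [hrank]; infer_instance
  refine ⟨NumberField.Units.fundSystem K default, fun v => ?_⟩
  obtain ⟨⟨ζ, f⟩, h, -⟩ := NumberField.Units.exist_unique_eq_mul_prod K v
  refine ⟨f default, ?_⟩
  simp only [Fintype.prod_unique] at h
  obtain ⟨k, hk, hζ⟩ := (isOfFinOrder_iff_pow_eq_one).mp ((CommGroup.mem_torsion _).mp ζ.2)
  have h1 : (σ ((ζ : (𝓞 K)ˣ) : 𝓞 K)) ^ k = 1 := by
    have := congrArg (fun z : (𝓞 K)ˣ => σ ((z : 𝓞 K) : K)) hζ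
    simpa using this
  have h2 : |σ ((ζ : (𝓞 K)ˣ) : 𝓞 K)| = 1 := by
    have : |σ ((ζ : (𝓞 K)ˣ) : 𝓞 K)| ^ k = 1 := by rw [← abs_pow, h1, abs_one]
    exact (pow_eq_one_iff_of_nonneg (abs_nonneg _) hk.ne').mp this
  have h3 : (ζ : (𝓞 K)ˣ) = 1 ∨ (ζ : (𝓞 K)ˣ) = -1 := by
    rcases (abs_eq (by norm_num)).mp h2 with g | g
    · left
      ext
      apply σ.injective
      simpa using g
    · right
      ext
      apply σ.injective
      simpa using g
  rcases h3 with g | g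
  · left; rw [h, g, one_mul]
  · right; rw [h, g, neg_one_mul]

theorem rq_ideal {K : Type*} [Field K] [NumberField K] (n : ℕ) (y : ℕ) (hy : ¬ 3 ∣ y)
    (a : ℤ) (ha : 2 * a + 5 = (y:ℤ) ^ n) (η η' : 𝓞 K) (h1 : η * η' = 1) (h2 : η + η' = a) :
    ∃ d : Ideal (𝓞 K), Ideal.span {2 + η} = d ^ n := by
  have hmul : (2 + η) * (2 + η') = (y : 𝓞 K) ^ n := by
    have : (2 * (a : 𝓞 K) + 5) = (y : 𝓞 K) ^ n := by exact_mod_cast congrArg (Int.cast : ℤ → 𝓞 K) ha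
    rw [← this, ← h2]
    linear_combination h1
  have hcop : IsCoprime (2 + η) (2 + η') := by
    have h3 : IsCoprime (3 : ℤ) ((y:ℤ) ^ n) := by
      apply IsCoprime.pow_right
      rw [show (3:ℤ) = ((3:ℕ):ℤ) by norm_num, Nat.isCoprime_iff_coprime]
      exact (Nat.Prime.coprime_iff_not_dvd Nat.prime_three).mpr hy
    obtain ⟨s, t, hst⟩ := h3
    have hst' : (s : 𝓞 K) * 3 + t * (y : 𝓞 K) ^ n = 1 := by exact_mod_cast congrArg (Int.cast : ℤ → 𝓞 K) hst
    rw [← hmul] at hst'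
    refine ⟨- s * η' + t * (2 + η'), s * 2, ?_⟩
    linear_combination hst' - s * h1
  let _ : GCDMonoid (Ideal (𝓞 K)) := UniqueFactorizationMonoid.toGCDMonoid _
  refine exists_eq_pow_of_mul_eq_pow_of_coprime (b := Ideal.span {2 + η'}) (c := Ideal.span {(y : 𝓞 K)}) ?_ ?_
  · rwa [Ideal.isCoprime_span_singleton_iff]
  · rw [Ideal.span_singleton_mul_span_singleton, Ideal.span_singleton_pow, hmul]

theorem rq_alg {K : Type*} [Field K] [NumberField K] (n : ℕ) (hn : 1 < n) (y : ℕ) (hy : ¬ 3 ∣ y)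
    (a : ℤ) (ha : 2 * a + 5 = (y:ℤ) ^ n) (η η' : 𝓞 K) (h1 : η * η' = 1) (h2 : η + η' = a)
    (σ σ' : 𝓞 K →+* ℝ) (hσ : 1 < σ η) (hσ' : σ' η = (σ η)⁻¹)
    (hhI : ∀ γ : 𝓞 K, ∃ T : ℤ, ∃ δ : ℝ, (δ = 1 ∨ δ = -1) ∧ |σ γ| + δ * |σ' γ| = T)
    (hhI' : ∀ γ : 𝓞 K, ∃ T : ℤ, ∃ δ : ℝ, (δ = 1 ∨ δ = -1) ∧ |σ' γ| + δ * |σ γ| = T)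
    (hunits : ∃ ε : (𝓞 K)ˣ, ∀ v : (𝓞 K)ˣ, ∃ a : ℤ, v = ε ^ a ∨ v = - ε ^ a)
    (hgood : ∀ p : ℕ, p.Prime → p ∣ n → ∀ x : ℝ, 1 < x → x + x⁻¹ = ((y:ℝ) ^ n - 5) / 2 →
    ∀ u v δ : ℝ, 0 < u → 0 < v → (δ = 1 ∨ δ = -1) → ∀ T : ℤ, u + δ * v = T →
      ¬ (u ^ p = x ∧ v ^ p = x⁻¹) ∧
      (∀ i, i + 1 < p → ¬ (u ^ p = x ^ i * (2 + x) ∧ v ^ p = x⁻¹ ^ i * (2 + x⁻¹))) ∧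
      ¬ (u ^ p = 1 + 2 * x ∧ v ^ p = 1 + 2 * x⁻¹)) :
    ∃ c : ClassGroup (𝓞 K), orderOf c = n := by
  obtain ⟨d, hd⟩ := rq_ideal n y hy a ha η η' h1 h2
  have hx0 : 0 < (σ η)⁻¹ := by positivity
  have hη' : σ η' = (σ η)⁻¹ := by
    rw [eq_comm, inv_eq_iff_eq_inv, eq_comm, inv_eq_iff_eq_inv]
    refine eq_inv_of_mul_eq_one_right ?_
    rw [← map_mul, h1, map_one]
  have hη'' : σ' η' = σ η := by
    have : σ' η * σ' η' = 1 := by rw [← map_mul, h1, map_one]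
    rw [hσ'] at this
    field_simp at this
    exact this
  have hα0 : (2 + η : 𝓞 K) ≠ 0 := by
    intro h
    have := congrArg σ h
    rw [map_add, map_ofNat, map_zero] at this
    linarith
  have hxs : σ η + (σ η)⁻¹ = ((y:ℝ) ^ n - 5) / 2 := by
    rw [← hη', ← map_add]
    rw [h2, map_intCast]
    have : 2 * (a:ℝ) + 5 = (y:ℝ) ^ n := by exact_mod_cast ha
    linarith
  have hd0 : d ≠ 0 := by
    rintro rfl
    rw [zero_pow (by omega)] at hd
    exact hα0 (by simpa using hd)
  have hdm : d ∈ nonZeroDivisors (Ideal (𝓞 K)) := mem_nonZeroDivisors_of_ne_zero hd0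
  refine ⟨ClassGroup.mk0 ⟨d, hdm⟩, ?_⟩
  apply orderOf_eq_of_pow_and_pow_div_prime (by omega)
  · rw [← map_pow]
    refine (ClassGroup.mk0_eq_one_iff (I := d ^ n) (pow_mem hdm n)).mpr ?_
    rw [← hd]
    exact ⟨⟨_, rfl⟩⟩
  intro p hp hpn hone
  have G := hgood p hp hpn (σ η) hσ hxs
  have hp0 := hp.ne_zero
  rw [← map_pow] at hone
  obtain ⟨β, hβ⟩ := ((ClassGroup.mk0_eq_one_iff (I := d ^ (n/p)) (pow_mem hdm _)).mp hone).principal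
  have hass : Ideal.span {β ^ p} = Ideal.span {2 + η} := by
    rw [hd, ← Ideal.span_singleton_pow]
    rw [Ideal.submodule_span_eq] at hβ
    rw [← hβ, ← pow_mul, Nat.div_mul_cancel hpn]
  obtain ⟨v, hv⟩ := Ideal.span_singleton_eq_span_singleton.mp hass
  obtain ⟨ε, hε⟩ := hunits
  let ηu : (𝓞 K)ˣ := ⟨η, η', h1, by rw [mul_comm]; exact h1⟩
  obtain ⟨b, hb⟩ := hε ηu
  obtain ⟨k, hk⟩ := hε v
  have habs : ∀ z z' : 𝓞 K, z = z' ∨ z = -z' → |σ z| = |σ z'| ∧ |σ' z| = |σ' z'| := by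
    rintro z z' (rfl | rfl) <;> simp
  by_cases hpb : (p : ℤ) ∣ b
  · obtain ⟨b', rfl⟩ := hpb
    let γ : 𝓞 K := ((ε ^ b' : (𝓞 K)ˣ) : 𝓞 K)
    have e1 : (η : 𝓞 K) = γ ^ p ∨ η = - γ ^ p := by
      have : ((ε ^ ((p:ℤ) * b') : (𝓞 K)ˣ) : 𝓞 K) = γ ^ p := by
        rw [mul_comm, zpow_mul, zpow_natCast]; simp [γ]
      rcases hb with hb | hb
      · left; rw [← this, ← hb]
      · right; rw [← this, ← Units.val_neg, ← hb]
    obtain ⟨s1, s2⟩ := habs _ _ e1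
    simp only [map_pow, abs_pow] at s1 s2
    rw [hσ', abs_of_pos hx0] at s2
    rw [abs_of_pos (by linarith)] at s1
    have u0 : 0 < |σ γ| := by
      rw [abs_pos]; rintro h; rw [h, abs_zero, zero_pow hp0] at s1; linarith
    have v0 : 0 < |σ' γ| := by
      rw [abs_pos]; rintro h; rw [h, abs_zero, zero_pow hp0] at s2; linarith
    obtain ⟨T, δ, hδ, hT⟩ := hhI γ
    exact (G _ _ δ u0 v0 hδ T hT).1 ⟨s1.symm, s2.symm⟩
  · skip
    have : ∃ i : ℕ, i < p ∧ (p : ℤ) ∣ i * b + k := by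
      have hcop : IsCoprime (p:ℤ) b := (Prime.coprime_iff_not_dvd (Nat.prime_iff_prime_int.mp hp)).mpr hpb
      obtain ⟨s, t, hst⟩ := hcop
      have hpp : (0:ℤ) < p := by exact_mod_cast hp.pos
      refine ⟨((-k * t) % p).toNat, ?_, ?_⟩
      · have := Int.emod_lt_of_pos (-k * t) hpp
        have := Int.emod_nonneg (-k * t) hpp.ne'
        omega
      · rw [Int.toNat_of_nonneg (Int.emod_nonneg _ hpp.ne')]
        rw [Int.emod_def]
        refine ⟨k * s - ((-k * t) / p) * b, ?_⟩
        linear_combination - k * hst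
    obtain ⟨i, hi, t, ht⟩ := this
    let γ : 𝓞 K := β * ((ε ^ t : (𝓞 K)ˣ) : 𝓞 K)
    have e1 : η ^ i * (2 + η) = γ ^ p ∨ η ^ i * (2 + η) = - γ ^ p := by
      have q1 : ηu ^ i * v = (ε ^ t) ^ p ∨ ηu ^ i * v = -(ε ^ t) ^ p := by
        have q2 : (ε ^ t) ^ p = (ε ^ b) ^ i * ε ^ k := by
          rw [← zpow_natCast, ← zpow_natCast, ← zpow_mul, ← zpow_mul, ← zpow_add, mul_comm t, ← ht, mul_comm b]
        rw [q2]
        rcases hb with hb | hb <;> rcases hk with hk | hk <;> rw [hb, hk]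
        · left; rfl
        · right; rw [mul_neg]
        · rcases Nat.even_or_odd i with g | g <;> rw [g.neg_pow]
          · left; rfl
          · right; rw [neg_mul]
        · rcases Nat.even_or_odd i with g | g <;> rw [g.neg_pow]
          · right; rw [mul_neg]
          · left; rw [neg_mul_neg]
      have q3 : η ^ i * (2 + η) = β ^ p * ((ηu ^ i * v : (𝓞 K)ˣ) : 𝓞 K) := by
        rw [← hv]; push_cast; ring
      rw [q3]
      rcases q1 with g | g <;> rw [g]
      · left; simp only [γ]; push_cast; ring
      · right; simp only [γ]; push_cast; ring
    by_cases hip : i + 1 < p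
    · obtain ⟨s1, s2⟩ := habs _ _ e1
      have c1 : σ ((η ^ i * (2 + η) : 𝓞 K)) = (σ η) ^ i * (2 + σ η) := by rw [map_mul, map_pow, map_add, map_ofNat]
      have c2 : σ' ((η ^ i * (2 + η) : 𝓞 K)) = (σ η)⁻¹ ^ i * (2 + (σ η)⁻¹) := by rw [map_mul, map_pow, map_add, map_ofNat, hσ']
      have c1' : 0 < (σ η) ^ i * (2 + σ η) := by positivity
      have c2' : 0 < (σ η)⁻¹ ^ i * (2 + (σ η)⁻¹) := by positivity
      rw [c1, abs_of_pos c1'] at s1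
      rw [c2, abs_of_pos c2'] at s2
      simp only [map_pow, abs_pow] at s1 s2
      have u0 : 0 < |σ γ| := by
        rw [abs_pos]; rintro h; rw [h, abs_zero, zero_pow hp0] at s1; linarith
      have v0 : 0 < |σ' γ| := by
        rw [abs_pos]; rintro h; rw [h, abs_zero, zero_pow hp0] at s2; linarith
      obtain ⟨T, δ, hδ, hT⟩ := hhI γ
      exact (G _ _ δ u0 v0 hδ T hT).2.1 i hip ⟨s1.symm, s2.symm⟩
    · have hip' : p = i + 1 := by omega
      have e2 : 1 + 2 * η' = (γ * η') ^ p ∨ 1 + 2 * η' = - (γ * η') ^ p := by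
        have q : 1 + 2 * η' = η' ^ p * (η ^ i * (2 + η)) := by
          rw [hip', pow_succ]
          have : η' ^ i * η ^ i = 1 := by rw [← mul_pow, mul_comm η', h1, one_pow]
          linear_combination (- 2 * η' - 1) * this + (1 - η' ^ i * η ^ i * 1 - 1) * h1
        rw [q, mul_pow]
        rcases e1 with g | g <;> rw [g]
        · left; ring
        · right; ring
      obtain ⟨s1, s2⟩ := habs _ _ e2
      have c1 : σ ((1 + 2 * η' : 𝓞 K)) = 1 + 2 * (σ η)⁻¹ := by rw [map_add, map_mul, map_ofNat, map_one, hη']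
      have c2 : σ' ((1 + 2 * η' : 𝓞 K)) = 1 + 2 * σ η := by rw [map_add, map_mul, map_ofNat, map_one, hη'']
      have c1' : 0 < 1 + 2 * (σ η)⁻¹ := by positivity
      have c2' : 0 < 1 + 2 * (σ η) := by positivity
      rw [c1, abs_of_pos c1', map_pow, abs_pow] at s1
      rw [c2, abs_of_pos c2', map_pow, abs_pow] at s2
      have u0 : 0 < |σ ((γ * η' : 𝓞 K))| := by
        rw [abs_pos]; rintro h; rw [h, abs_zero, zero_pow hp0] at s1; linarith
      have v0 : 0 < |σ' ((γ * η' : 𝓞 K))| := by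
        rw [abs_pos]; rintro h; rw [h, abs_zero, zero_pow hp0] at s2; linarith
      obtain ⟨T, δ, hδ, hT⟩ := hhI' (γ * η')
      exact (G _ _ δ v0 u0 hδ T hT).2.2 ⟨s2.symm, s1.symm⟩

theorem rq_Pirr (a : ℤ) (ha : 10 ≤ a) :
    Irreducible (X ^ 2 + C (a : ℚ) * X + 1 : ℚ[X]) := by
  have hd : (X ^ 2 + C (a : ℚ) * X + 1 : ℚ[X]).natDegree = 2 := by compute_degree!
  rw [Polynomial.irreducible_iff_roots_eq_zero_of_degree_le_three (by omega) (by omega)]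
  rw [Multiset.eq_zero_iff_forall_notMem]
  intro r hr
  have hr' := (Polynomial.mem_roots'.mp hr).2
  simp only [IsRoot.def, eval_add, eval_mul, eval_pow, eval_X, eval_C, eval_one] at hr'
  have hhI : IsIntegral ℤ r := by
    refine ⟨X ^ 2 + C a * X + 1, by monicity!, ?_⟩
    rw [eval₂_add, eval₂_add, eval₂_mul, eval₂_C, eval₂_X_pow, eval₂_X, eval₂_one]
    exact hr'
  obtain ⟨m, rfl⟩ := IsIntegrallyClosed.isIntegral_iff.mp hhI
  have hm : m ^ 2 + a * m + 1 = 0 := by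
    rw [eq_intCast] at hr'
    exact_mod_cast hr'
  have h1 : m * (- (m + a)) = 1 := by linear_combination - hm
  rcases Int.eq_one_or_neg_one_of_mul_eq_one h1 with h | h <;> subst h <;> omega

theorem rq_totreal {K : Type*} [Field K] [CharZero K] (a : ℤ) (ha : 10 ≤ a) (θ : K)
    (hθ : θ ^ 2 + a * θ + 1 = 0) (hspan : ∀ β : K, ∃ r s : ℚ, β = r + s * θ)
    (φ : K →+* ℂ) (x : K) : (φ x).im = 0 := by
  have h := congrArg φ hθ
  rw [map_add, map_add, map_pow, map_mul, map_one, map_zero, map_intCast] at h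
  have ha' : (10:ℝ) ≤ a := by exact_mod_cast ha
  have hz : (φ θ).im = 0 := by
    generalize φ θ = z at h
    have hre := congrArg Complex.re h
    have him := congrArg Complex.im h
    simp [pow_two] at hre him
    by_contra hne
    have : 2 * z.re + a = 0 := by
      apply mul_right_cancel₀ hne
      linear_combination him
    nlinarith [mul_self_nonneg z.im]
  obtain ⟨r, s, rfl⟩ := hspan x
  simp [hz]

theorem rq_absK {K : Type*} [Field K] [NumberField K] (n : ℕ) (hn : 1 < n) (y : ℕ) (hy : ¬ 3 ∣ y)
    (a : ℤ) (ha : 2 * a + 5 = (y:ℤ) ^ n) (ha10 : 10 ≤ a) (θ : K)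
    (hθ : θ ^ 2 + a * θ + 1 = 0) (hspan : ∀ β : K, ∃ r s : ℚ, β = r + s * θ)
    (hfr : Module.finrank ℚ K = 2)
    (x : ℝ) (hx1 : 1 < x) (hx : x + x⁻¹ = a)
    (σ σ' : K →+* ℝ) (hσ : σ θ = -x) (hσ' : σ' θ = - x⁻¹)
    (hgood : ∀ p : ℕ, p.Prime → p ∣ n → ∀ x : ℝ, 1 < x → x + x⁻¹ = ((y:ℝ) ^ n - 5) / 2 →
    ∀ u v δ : ℝ, 0 < u → 0 < v → (δ = 1 ∨ δ = -1) → ∀ T : ℤ, u + δ * v = T →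
      ¬ (u ^ p = x ∧ v ^ p = x⁻¹) ∧
      (∀ i, i + 1 < p → ¬ (u ^ p = x ^ i * (2 + x) ∧ v ^ p = x⁻¹ ^ i * (2 + x⁻¹))) ∧
      ¬ (u ^ p = 1 + 2 * x ∧ v ^ p = 1 + 2 * x⁻¹)) :
    ∃ c : ClassGroup (𝓞 K), orderOf c = n := by
  have hhI : IsIntegral ℤ θ := by
    refine ⟨X ^ 2 + C a * X + 1, by monicity!, ?_⟩
    rw [eval₂_add, eval₂_add, eval₂_mul, eval₂_C, eval₂_X_pow, eval₂_X, eval₂_one]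
    exact hθ
  let t : 𝓞 K := ⟨θ, hhI⟩
  have ht : t ^ 2 + a * t + 1 = 0 := by
    apply (FaithfulSMul.algebraMap_injective (𝓞 K) K)
    rw [map_add, map_add, map_mul, map_pow, map_intCast, map_one, map_zero]
    exact hθ
  have htK : algebraMap (𝓞 K) K t = θ := rfl
  have hreal : NumberField.IsTotallyReal K := by
    refine ⟨fun v => ?_⟩
    rw [NumberField.InfinitePlace.isReal_iff, NumberField.ComplexEmbedding.isReal_iff]
    ext z
    rw [NumberField.ComplexEmbedding.conjugate_coe_eq, Complex.conj_eq_iff_im]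
    exact rq_totreal a ha10 θ hθ hspan _ z
  have hrank : NumberField.Units.rank K = 1 := by
    have := NumberField.IsTotallyReal.finrank K
    have h0 := NumberField.IsTotallyReal.nrComplexPlaces_eq_zero K
    rw [NumberField.Units.rank, NumberField.InfinitePlace.card_eq_nrRealPlaces_add_nrComplexPlaces,
      h0, ← this, hfr]
  have htr : ∀ β : K, ∃ r : ℚ, σ β + σ' β = r := by
    intro β
    obtain ⟨r, s, rfl⟩ := hspan β
    refine ⟨2 * r - s * a, ?_⟩
    simp only [map_add, map_mul, map_ratCast, hσ, hσ']
    push_cast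
    rw [← hx]; ring
  refine rq_alg n hn y hy a ha (-t) (t + a) ?_ ?_ (σ.comp (algebraMap (𝓞 K) K)) (σ'.comp (algebraMap (𝓞 K) K)) ?_ ?_ ?_ ?_ (rq_units σ hrank) hgood
  · linear_combination - ht
  · ring
  · rw [map_neg, RingHom.comp_apply, htK, hσ]; linarith
  · rw [map_neg, RingHom.comp_apply, map_neg, RingHom.comp_apply, htK, hσ, hσ', neg_neg, neg_neg]
  · exact fun γ => rq_int σ σ' htr γ
  · exact fun γ => rq_int σ' σ (fun β => by
      obtain ⟨r, hr⟩ := htr β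
      exact ⟨r, by rw [add_comm]; exact hr⟩) γ

theorem rq_single (n : ℕ) (hn : 1 < n) : ∃ y : ℕ, 0 < y ∧ Odd y ∧ ¬ (3 ∣ y) ∧
    ∃ K : IntermediateField ℚ ℂ,
      (Irreducible (X ^ 2 + C (((y : ℚ) ^ n - 5) / 2) * X + 1 : ℚ[X]) ∧
        (X ^ 2 + C (((y : ℚ) ^ n - 5) / 2) * X + 1 : ℚ[X]).IsSplittingField ℚ K) ∧
        NumberField K ∧ Module.finrank ℚ K = 2 ∧ (∀ (φ : K →+* ℂ) (x : K), (φ x).im = 0) ∧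
        ∃ c : ClassGroup (𝓞 K), orderOf c = n := by
  obtain ⟨y, hy100, hy6, hgood⟩ := rq_good_y n hn
  have hy3 : ¬ 3 ∣ y := by omega
  have hyo : Odd y := by rw [Nat.odd_iff]; omega
  obtain ⟨m, hm⟩ : Odd (y ^ n) := hyo.pow
  have hbig : 100 ≤ y ^ n := hy100.trans (Nat.le_self_pow (by omega) y)
  obtain ⟨a, ha⟩ : ∃ a : ℤ, 2 * a + 5 = ((y ^ n : ℕ) : ℤ) := ⟨m - 2, by omega⟩
  have ha10 : 10 ≤ a := by omega
  rw [Nat.cast_pow] at ha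
  have haQ : ((y : ℚ) ^ n - 5) / 2 = (a : ℚ) := by
    have : 2 * (a : ℚ) + 5 = (y : ℚ) ^ n := by exact_mod_cast ha
    linarith
  refine ⟨y, by omega, hyo, hy3, ?_⟩
  rw [haQ]
  set P : ℚ[X] := X ^ 2 + C (a : ℚ) * X + 1 with hP
  have hirr : Irreducible P := rq_Pirr a ha10
  have hmon : P.Monic := by rw [hP]; monicity!
  have hdeg : P.natDegree = 2 := by rw [hP]; compute_degree!
  have haR : (10:ℝ) ≤ a := by exact_mod_cast ha10
  obtain ⟨x, hx1, hx⟩ : ∃ x : ℝ, 1 < x ∧ x ^ 2 - a * x + 1 = 0 := by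
    have hs := Real.sq_sqrt (show (0:ℝ) ≤ (a:ℝ) ^ 2 - 4 by nlinarith)
    have hs0 := Real.sqrt_nonneg ((a:ℝ) ^ 2 - 4)
    refine ⟨(a + √((a:ℝ) ^ 2 - 4)) / 2, by linarith, ?_⟩
    linear_combination hs / 4
  have hx0 : x ≠ 0 := by linarith
  have hxi : x + x⁻¹ = a := by field_simp; linarith
  have hroot : ∀ z : ℂ, aeval z P = z ^ 2 + a * z + 1 := by intro z; simp [hP]
  have hrootR : ∀ z : ℝ, aeval z P = z ^ 2 + a * z + 1 := by intro z; simp [hP]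
  have hxiR : (x:ℂ) + (x:ℂ)⁻¹ = a := by exact_mod_cast congrArg (Complex.ofReal) hxi
  have hxC : (x:ℂ) ≠ 0 := by exact_mod_cast hx0
  have hfac : ∀ z : ℂ, aeval z P = (z + x) * (z + (x:ℂ)⁻¹) := by
    intro z; rw [hroot, ← hxiR]; field_simp; ring
  set θ : ℂ := -(x:ℂ) with hθdef
  have hθ0 : aeval θ P = 0 := by rw [hfac]; simp [hθdef]
  have hmin : minpoly ℚ θ = P := (minpoly.eq_of_irreducible_of_monic hirr hθ0 hmon).symm
  have hθi : IsIntegral ℚ θ := ⟨P, hmon, by rwa [aeval_def] at hθ0⟩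
  have hfr : Module.finrank ℚ (IntermediateField.adjoin ℚ {θ}) = 2 := by
    rw [IntermediateField.adjoin.finrank hθi, hmin, hdeg]
  have hfd : FiniteDimensional ℚ (IntermediateField.adjoin ℚ {θ}) :=
    IntermediateField.adjoin.finiteDimensional hθi
  have hnf : NumberField (IntermediateField.adjoin ℚ {θ}) := ⟨⟩
  set g := IntermediateField.AdjoinSimple.gen ℚ θ with hg
  have hgC : (g : ℂ) = θ := IntermediateField.AdjoinSimple.coe_gen ℚ θ
  have hgeq : g ^ 2 + a * g + 1 = 0 := by
    apply Subtype.ext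
    have := hθ0
    rw [hroot] at this
    push_cast
    rw [hgC]; exact this
  have hspan : ∀ β : IntermediateField.adjoin ℚ {θ}, ∃ r s : ℚ, β = r + s * g := by
    intro β
    obtain ⟨f, hf, hβ⟩ := (IntermediateField.adjoin.powerBasis hθi).exists_eq_aeval β
    rw [IntermediateField.adjoin.powerBasis_dim, hmin, hdeg] at hf
    rw [IntermediateField.adjoin.powerBasis_gen, ← hg] at hβ
    rw [Polynomial.eq_X_add_C_of_natDegree_le_one (show f.natDegree ≤ 1 by omega)] at hβ
    refine ⟨f.coeff 0, f.coeff 1, ?_⟩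
    rw [hβ]
    simp [add_comm]
  have hemb : ∀ z : ℝ, z ^ 2 + a * z + 1 = 0 →
      ∃ σ : IntermediateField.adjoin ℚ {θ} →+* ℝ, σ g = z := by
    intro z hz
    have hz' : z ∈ (minpoly ℚ θ).aroots ℝ := by
      rw [mem_aroots, hmin, hrootR]
      exact ⟨hirr.ne_zero, hz⟩
    refine ⟨((IntermediateField.algHomAdjoinIntegralEquiv ℚ hθi).symm ⟨z, hz'⟩).toRingHom, ?_⟩
    exact IntermediateField.algHomAdjoinIntegralEquiv_symm_apply_gen ℚ hθi ⟨z, hz'⟩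
  obtain ⟨σ, hσ⟩ := hemb (-x) (by linear_combination hx)
  obtain ⟨σ', hσ'⟩ := hemb (-x⁻¹) (by rw [← hxi]; field_simp; ring)
  refine ⟨IntermediateField.adjoin ℚ {θ}, ⟨hirr, ?_⟩, hnf, hfr,
    rq_totreal a ha10 g hgeq hspan,
    rq_absK n hn y hy3 a ha ha10 g hgeq hspan hfr x hx1 hxi σ σ' hσ hσ' hgood⟩
  have hset : P.rootSet ℂ = {θ, -(x:ℂ)⁻¹} := by
    ext z
    rw [mem_rootSet, hfac]
    simp only [Set.mem_insert_iff, Set.mem_singleton_iff, mul_eq_zero, hθdef, eq_neg_iff_add_eq_zero]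
    exact ⟨fun h => h.2, fun h => ⟨hirr.ne_zero, h⟩⟩
  refine IntermediateField.isSplittingField_iff.mpr ⟨?_, ?_⟩
  · have : ∀ i : ℚ →+* IntermediateField.adjoin ℚ {θ}, P.map i = (X - C g) * (X - C (- g - a)) := by
      intro i
      have e : (C (g ^ 2 + a * g + 1) : (IntermediateField.adjoin ℚ {θ})[X]) = 0 := by rw [hgeq, C_0]
      simp only [C_add, C_mul, C_pow, C_1] at e
      simp only [hP, Polynomial.map_add, Polynomial.map_mul, Polynomial.map_pow, map_X, map_C, Polynomial.map_one, C_sub, C_neg]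
      simp only [map_intCast] at e ⊢
      linear_combination e
    rw [this]
    exact (Splits.X_sub_C _).mul (Splits.X_sub_C _)
  · apply le_antisymm
    · apply IntermediateField.adjoin.mono
      rw [hset]; simp
    · rw [IntermediateField.adjoin_le_iff, hset]
      have h1 : θ ∈ IntermediateField.adjoin ℚ {θ} := IntermediateField.mem_adjoin_simple_self ℚ θ
      rintro z (rfl | rfl)
      · exact h1
      · have : -(x:ℂ)⁻¹ = θ⁻¹ := by rw [hθdef, inv_neg]
        rw [this]
        exact inv_mem h1


theorem rq_rank {M : Type*} [CommGroup M] (n : ℕ) (c : M) (hc : orderOf c = n) :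
    ∃ φ : (Multiplicative (Fin 1 → ZMod n)) →* M, Function.Injective φ := by
  subst hc
  let e : (Fin 1 → ZMod (orderOf c)) →+ Additive M :=
    (ZMod.lift (orderOf c) ⟨zmultiplesHom (Additive M) (Additive.ofMul c), by
      simp only [zmultiplesHom_apply, natCast_zsmul]
      rw [← ofMul_pow, pow_orderOf_eq_one, ofMul_one]⟩).comp (Pi.evalAddMonoidHom _ 0)
  refine ⟨AddMonoidHom.toMultiplicativeLeft e, ?_⟩
  have he : Function.Injective e := by
    rw [AddMonoidHom.coe_comp]
    refine Function.Injective.comp ?_ ?_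
    · rw [ZMod.lift_injective]
      intro m hm
      simp only [zmultiplesHom_apply] at hm
      rw [← ofMul_zpow, ofMul_eq_zero] at hm
      rw [ZMod.intCast_zmod_eq_zero_iff_dvd] 
      exact orderOf_dvd_iff_zpow_eq_one.mpr hm
    · intro f g h
      ext i
      rw [Subsingleton.elim i 0]
      exact h
  exact he

theorem rq_noniso (P : ℚ[X]) (K K' : IntermediateField ℚ ℂ)
    (h : P.IsSplittingField ℚ K)
    (hf : Module.finrank ℚ K = 2) (hf' : Module.finrank ℚ K' = 2) (e : K ≃+* K') : K = K' := by
  have hn : @Normal ℚ K _ _ (IntermediateField.algebra' K) :=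
    @Normal.of_isSplittingField ℚ _ K _ (IntermediateField.algebra' K) P h
  have hle : K ≤ K' := by
    let f : @AlgHom ℚ K ℂ _ _ _ (IntermediateField.algebra' K) _ :=
      (K'.val.toRingHom.comp e.toRingHom).toRatAlgHom
    rw [← AlgHom.fieldRange_of_normal f]
    rintro _ ⟨z, rfl⟩
    exact (e z).2
  have : FiniteDimensional ℚ K' := Module.finite_of_finrank_pos (by omega)
  exact IntermediateField.eq_of_le_of_finrank_eq hle (by omega)

/-- **Real quadratic fields with large class group (`G = ℤ/2ℤ`).**
For every integer `n > 1` there are infinitely many pairwise non-isomorphic real quadratic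
fields `K`, each a splitting field of an irreducible polynomial
`x² + ((yⁿ - 5)/2)x + 1` with `y` a positive integer with `y` odd and `3 ∤ y`,
such that `rank_n Cl(K) ≥ 1`. -/
theorem real_quadratic_large_class_group (n : ℕ) (hn : 1 < n) :
    ∃ S : Set (IntermediateField ℚ ℂ), S.Infinite ∧
      (∀ K ∈ S, ∀ K' ∈ S, K ≠ K' → IsEmpty (K ≃+* K')) ∧
      ∀ K ∈ S, ∃ y : ℕ, 0 < y ∧ Odd y ∧ ¬ (3 ∣ y) ∧
        (let P : Polynomial ℚ := X ^ 2 + C (((y : ℚ) ^ n - 5) / 2) * X + 1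
         Irreducible P ∧ P.IsSplittingField ℚ K) ∧
        NumberField K ∧ Module.finrank ℚ K = 2 ∧ TotallyReal K ∧
        HasZModRankGE (ClassGroup (𝓞 K)) n 1 := by
  refine ⟨{K | ∃ y : ℕ, 0 < y ∧ Odd y ∧ ¬ (3 ∣ y) ∧
        (let P : Polynomial ℚ := X ^ 2 + C (((y : ℚ) ^ n - 5) / 2) * X + 1
         Irreducible P ∧ P.IsSplittingField ℚ K) ∧
        NumberField K ∧ Module.finrank ℚ K = 2 ∧ TotallyReal K ∧
        HasZModRankGE (ClassGroup (𝓞 K)) n 1}, ?_, ?_, fun K hK => hK⟩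
  · intro hfin
    obtain ⟨B, hB⟩ := (hfin.image (fun K : IntermediateField ℚ ℂ =>
      Nat.card (ClassGroup (𝓞 K)))).bddAbove
    have hn' : 1 < (B + 1) * n := lt_of_lt_of_le hn (Nat.le_mul_of_pos_left n (Nat.succ_pos B))
    obtain ⟨y, hy0, hyo, hy3, K, hP, hnf, hfr, htr, c, hc⟩ := rq_single ((B + 1) * n) hn'
    have hcard : orderOf c ≤ Nat.card (ClassGroup (𝓞 K)) := orderOf_le_card
    have hle : Nat.card (ClassGroup (𝓞 K)) ≤ B := by
      apply hB
      refine ⟨K, ⟨y ^ (B + 1), pow_pos hy0 _, hyo.pow, ?_, ?_, hnf, hfr, htr, ?_⟩, rfl⟩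
      · exact fun h => hy3 (Nat.prime_three.dvd_of_dvd_pow h)
      · rw [Nat.cast_pow, ← pow_mul]
        exact hP
      · refine rq_rank n (c ^ (B + 1)) ?_
        rw [orderOf_pow' c (Nat.succ_ne_zero B), hc, Nat.gcd_eq_right (Dvd.intro _ rfl),
          Nat.mul_div_cancel_left n (Nat.succ_pos B)]
    rw [hc] at hcard
    nlinarith
  · rintro K ⟨y, -, -, -, hP, -, hf, -⟩ K' ⟨y', -, -, -, -, -, hf', -⟩ hne
    exact ⟨fun e => hne (rq_noniso _ K K' hP.2 hf hf' e)⟩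
end
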